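/- arXiv:2208.05752 — 2 statements merged into one kernel-verified Lean document; each statement's English description precedes it below -/
import Mathlib

section
/- Suppose n > n₁ ≥ 1 and m > m₁ ≥ 1 are integers with n ≥ 300 and L_n − L_{n₁} = 𝒫_m − 𝒫_{m₁}. Then min{(n−n₁)·log δ, (m−m₁)·log α} < 7.33·10^{13}·(1 + log(2n)) and max{(n−n₁)·log δ, (m−m₁)·log α} < 2.57·10^{27}·(1 + log(2n))², where δ = (1+√5)/2 and α is the unique real root of x³ − x − 1. -/
/-- The Padovan sequence: 𝒫₀ = 𝒫₁ = 𝒫₂ = 1, 𝒫_{k+3} = 𝒫_{k+1} + 𝒫_k. -/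
def padovan : ℕ → ℕ
  | 0 => 1
  | 1 => 1
  | 2 => 1
  | k + 3 => padovan (k + 1) + padovan k

/-- The Lucas sequence: L₀ = 2, L₁ = 1, L_{k+2} = L_{k+1} + L_k. -/
def lucasSeq : ℕ → ℕ
  | 0 => 2
  | 1 => 1
  | k + 2 => lucasSeq (k + 1) + lucasSeq k

/-! By the Binet formulas, `φ ^ n - φ ^ n₁` and `(α ^ (m + 5) - α ^ (m₁ + 5)) / (2 * α + 3)` differ
by at most `4` in absolute value. Depending on whether the terms of index `n₁` and `m₁` are kept or
moved into the error, a linear form `log u - log v + x * log φ - y * log α` is exponentially small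
in terms of the minimum, of the maximum, or of `n` itself.

Such a form is at least `exp (-C * h * ℓ ^ 3)`, where `h` is the height of the pair `(u, v)` and
`x, y ≤ exp ℓ`, as long as `log α / log φ` is not too well approximable. The proof is Gel'fond's:
modulo the very small form, the monomials in `φ`, `α` and `u / v` are values of one exponential
polynomial at the points of the lattice spanned by `(1, 0)`, `(0, 1)` and `(-x, y)`. The pigeonhole
principle yields a nonzero integer polynomial that is small at many of them, Liouville's inequality
makes it vanish there, and this contradicts a zero estimate, in which translates of the polynomial
are eliminated against each other. The approximability assumption is itself proved by strong
induction on the denominator, since `q * log α - p * log φ` is a form with `u = v = 1`.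

Three applications, each with the height given by the previous bound, show that `n ≤ 10 ^ 95`. A
Baker–Davenport reduction then brings the minimum below `230`, and with this height one more
application bounds the maximum by `2 * 10 ^ 29`. -/

section Eliminants

open Polynomial

variable {A ι : Type*} [CommRing A]

theorem map_C_resultant_eq_zero {B : Type*} [CommRing B] (φ : A[X] →+* B) {f g : A[X]} {m n : ℕ}
    (hf : f.natDegree ≤ m) (hg : g.natDegree ≤ n) (hmn : m ≠ 0 ∨ n ≠ 0)
    (hφf : φ f = 0) (hφg : φ g = 0) : φ (C (resultant f g m n)) = 0 := by
  obtain ⟨p, q, -, -, hpq⟩ := exists_mul_add_mul_eq_C_resultant f g hf hg hmn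
  rw [← hpq, map_add, map_mul, map_mul, hφf, hφg, zero_mul, zero_mul, add_zero]

section Graded

variable {σ : Type*} [SetLike σ A] [AddSubgroupClass σ A] (D : ℕ → σ) [SetLike.GradedMonoid D]

theorem det_mem_graded {k d : ℕ} (M : Matrix (Fin k) (Fin k) A) (hM : ∀ i j, M i j ∈ D d) :
    M.det ∈ D (k * d) := by
  rw [Matrix.det_apply]
  refine sum_mem fun τ _ => ?_
  have hprod : ∏ i, M (τ i) i ∈ D (k * d) := by
    simpa using SetLike.prod_mem_graded D (fun _ => d) (fun i => M (τ i) i)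
      (F := Finset.univ) fun i _ => hM _ _
  rcases Int.units_eq_one_or (Equiv.Perm.sign τ) with h | h
  · rwa [h, one_smul]
  · rw [h, Units.neg_smul, one_smul]
    exact neg_mem hprod

theorem resultant_mem_graded {m n d : ℕ} {f g : A[X]} (hf : ∀ i, f.coeff i ∈ D d)
    (hg : ∀ i, g.coeff i ∈ D d) : resultant f g m n ∈ D ((m + n) * d) := by
  refine det_mem_graded D _ fun i j => ?_
  induction j using Fin.addCases with
  | left j =>
    simp only [sylvester, Matrix.of_apply, Fin.addCases_left]
    split_ifs
    exacts [hg _, zero_mem _]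
  | right j =>
    simp only [sylvester, Matrix.of_apply, Fin.addCases_right]
    split_ifs
    exacts [hf _, zero_mem _]

end Graded

variable {k : Type*} [Field k] [Infinite k] [Algebra k A]

theorem exists_mem_forall_not_dvd (V : Submodule k A[X]) (s : Finset A[X])
    (h : ∀ q ∈ s, ∃ g ∈ V, ¬ q ∣ g) : ∃ g ∈ V, ∀ q ∈ s, ¬ q ∣ g := by
  classical
  let W (q : A[X]) : Subspace k V := ((Ideal.span {q}).restrictScalars k).comap V.subtype
  have mem_W {q : A[X]} {g : V} : g ∈ W q ↔ q ∣ g := by simp [W, Ideal.mem_span_singleton]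
  have htop : ⊤ ∉ s.image W := by
    simp only [Finset.mem_image, not_exists, not_and]
    intro q hq hW
    obtain ⟨g, hg, hqg⟩ := h q hq
    exact hqg (mem_W.1 (hW ▸ Submodule.mem_top : (⟨g, hg⟩ : V) ∈ W q))
  obtain ⟨g, hg⟩ := (Set.ne_univ_iff_exists_notMem _).1
    (Subspace.biUnion_ne_univ_of_top_notMem htop)
  refine ⟨g, g.2, fun q hq hqg => hg (Set.mem_iUnion₂.2 ⟨W q, Finset.mem_image_of_mem W hq, ?_⟩)⟩
  exact mem_W.2 hqg

variable [IsDomain A] [UniqueFactorizationMonoid A]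

theorem exists_prime_associated_map {K : Type*} [Field K] [Algebra A K] [IsFractionRing A K]
    {p : K[X]} (hp : Irreducible p) :
    ∃ q : A[X], Prime q ∧ q.IsPrimitive ∧ Associated (q.map (algebraMap A K)) p := by
  let _ : NormalizedGCDMonoid A := Classical.choice inferInstance
  obtain ⟨b, hb, hbp⟩ := IsLocalization.integerNormalization_spec (nonZeroDivisors A) p
  set r := IsLocalization.integerNormalization (nonZeroDivisors A) p
  have hb0 : algebraMap A K b ≠ 0 := by simpa using nonZeroDivisors.ne_zero hb
  have hr0 : r ≠ 0 := by
    rintro h0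
    rw [h0, Polynomial.map_zero, algebra_compatible_smul K b p, eq_comm, smul_eq_zero] at hbp
    exact hbp.elim hb0 hp.ne_zero
  have hrp : C (algebraMap A K b) * p =
      C (algebraMap A K r.content) * r.primPart.map (algebraMap A K) := by
    rw [← smul_eq_C_mul, ← algebra_compatible_smul, ← hbp, ← map_C, ← Polynomial.map_mul,
      ← r.eq_C_content_mul_primPart]
  have isUnit_C_of_ne {c : K} (hc : c ≠ 0) : IsUnit (C c) := isUnit_C.2 hc.isUnit
  have hass : Associated (r.primPart.map (algebraMap A K)) p :=
    ((associated_unit_mul_left _ _ (isUnit_C_of_ne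
        (by simpa [content_eq_zero_iff] using hr0))).symm.trans
      (.of_eq hrp.symm)).trans (associated_unit_mul_left _ _ (isUnit_C_of_ne hb0))
  exact ⟨r.primPart, ((r.isPrimitive_primPart.irreducible_iff_irreducible_map_fraction_map
    (K := K)).2 (hass.irreducible_iff.2 hp)).prime, r.isPrimitive_primPart, hass⟩

theorem exists_prime_dvd_of_resultant_eq_zero {f g : A[X]} {n : ℕ} (hf : f ≠ 0)
    (hg : g.natDegree ≤ n) (h : resultant f g f.natDegree n = 0) :
    ∃ q : A[X], Prime q ∧ 0 < q.natDegree ∧ q ∣ f ∧ q ∣ g := by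
  let φ := algebraMap A (FractionRing A)
  have hφ : Function.Injective φ := IsFractionRing.injective A (FractionRing A)
  have hres : resultant (f.map φ) (g.map φ) = 0 := by
    obtain ⟨k, rfl⟩ := Nat.exists_eq_add_of_le hg
    rw [resultant_add_right_deg _ _ _ _ _ le_rfl] at h
    have h0 := (mul_eq_zero.1 h).resolve_left
      fun h => absurd (eq_zero_of_pow_eq_zero h) (by simpa using hf)
    rw [natDegree_map_eq_of_injective hφ, natDegree_map_eq_of_injective hφ, resultant_map_map, h0,
      map_zero]
  have hfφ : f.map φ ≠ 0 := by rwa [Ne, Polynomial.map_eq_zero_iff hφ]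
  obtain ⟨p, hp, hpf, hpg⟩ : ∃ p, Irreducible p ∧ p ∣ f.map φ ∧ p ∣ g.map φ := by
    by_contra! hcon
    exact (resultant_eq_zero_iff.1 hres).2
      (isCoprime_of_irreducible_dvd (fun h0 => hfφ h0.1) hcon)
  obtain ⟨q, hq, hqprim, hqp⟩ := exists_prime_associated_map (A := A) hp
  refine ⟨q, hq, ?_, hqprim.dvd_of_fraction_map_dvd_fraction_map (hqp.dvd.trans hpf),
    hqprim.dvd_of_fraction_map_dvd_fraction_map (hqp.dvd.trans hpg)⟩
  rw [← natDegree_map_eq_of_injective hφ]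
  exact (hqp.irreducible_iff.2 hp).natDegree_pos

theorem card_le_natDegree_of_prime_dvd {f : A[X]} (hf : f ≠ 0) (I : Finset ι) (q : ι → A[X])
    (hq : ∀ i ∈ I, Prime (q i)) (hdeg : ∀ i ∈ I, 0 < (q i).natDegree) (hdvd : ∀ i ∈ I, q i ∣ f)
    (hne : (I : Set ι).Pairwise fun i j => ¬ Associated (q i) (q j)) : I.card ≤ f.natDegree := by
  have hprod : ∏ i ∈ I, q i ∣ f := by
    refine Finset.prod_dvd_of_isRelPrime (fun i hi j hj hij => ?_) hdvd
    exact (hq i hi).irreducible.isRelPrime_iff_not_dvd.2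
      fun h => hne hi hj hij ((hq i hi).associated_of_dvd (hq j hj) h)
  calc I.card = ∑ i ∈ I, 1 := by simp
    _ ≤ ∑ i ∈ I, (q i).natDegree := Finset.sum_le_sum hdeg
    _ = (∏ i ∈ I, q i).natDegree := (natDegree_prod _ _ fun i hi => (hq i hi).ne_zero).symm
    _ ≤ f.natDegree := natDegree_le_of_dvd hprod hf

theorem exists_mem_resultant_ne_zero {f : A[X]} (hf : f ≠ 0) (V : Submodule k A[X]) {n : ℕ}
    (hV : ∀ g ∈ V, g.natDegree ≤ n)
    (h : ∀ q, Prime q → 0 < q.natDegree → q ∣ f → ∃ g ∈ V, ¬ q ∣ g) :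
    ∃ g ∈ V, resultant f g f.natDegree n ≠ 0 := by
  classical
  let s := (UniqueFactorizationMonoid.factors f).toFinset.filter fun q => 0 < q.natDegree
  obtain ⟨g, hgV, hg⟩ := exists_mem_forall_not_dvd V s fun q hq => by
    simp only [s, Finset.mem_filter, Multiset.mem_toFinset] at hq
    exact h q (UniqueFactorizationMonoid.prime_of_factor q hq.1) hq.2
      (UniqueFactorizationMonoid.dvd_of_mem_factors hq.1)
  refine ⟨g, hgV, fun h0 => ?_⟩
  obtain ⟨q, hq, hqd, hqf, hqg⟩ := exists_prime_dvd_of_resultant_eq_zero hf (hV g hgV) h0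
  obtain ⟨p, hp, hass⟩ := UniqueFactorizationMonoid.exists_mem_factors_of_dvd hf hq.irreducible hqf
  refine hg p ?_ (hass.symm.dvd.trans hqg)
  simp only [s, Finset.mem_filter, Multiset.mem_toFinset]
  exact ⟨hp, by rwa [← natDegree_eq_of_degree_eq (degree_eq_degree_of_associated hass)]⟩

-- A prime factor `q` of all the `τ j f` gives the pairwise coprime factors `(τ i)⁻¹ q` of `f`.
theorem exists_mem_span_resultant_ne_zero {f : A[X]} (hf : f ≠ 0) (J : Finset ι)
    (τ : ι → A[X] ≃+* A[X]) (hτ : ∀ j p, (τ j p).natDegree = p.natDegree) {n : ℕ}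
    (hn : f.natDegree ≤ n)
    (h : ∀ q, Prime q → 0 < q.natDegree → q ∣ f → ∃ I ⊆ J, f.natDegree < I.card ∧
      (I : Set ι).Pairwise fun i j => ¬ Associated (τ j ((τ i).symm q)) q) :
    ∃ g ∈ Submodule.span k ((fun j => τ j f) '' J), g.natDegree ≤ n ∧
      resultant f g f.natDegree n ≠ 0 := by
  have hV : ∀ g ∈ Submodule.span k ((fun j => τ j f) '' J), g.natDegree ≤ n := by
    intro g hg
    induction hg using Submodule.span_induction with
    | mem g hg => obtain ⟨j, -, rfl⟩ := hg; exact (hτ j f).trans_le hn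
    | zero => simp
    | add g g' _ _ hg hg' => exact (natDegree_add_le _ _).trans (max_le hg hg')
    | smul c g _ hg => exact (natDegree_smul_le _ _).trans hg
  suffices ∃ g ∈ Submodule.span k ((fun j => τ j f) '' J), resultant f g f.natDegree n ≠ 0 by
    obtain ⟨g, hg, hres⟩ := this
    exact ⟨g, hg, hV g hg, hres⟩
  refine exists_mem_resultant_ne_zero hf _ hV fun q hq hqd hqf => ?_
  obtain ⟨I, hIJ, hcard, hI⟩ := h q hq hqd hqf
  by_contra! hcon
  refine hcard.not_ge (card_le_natDegree_of_prime_dvd hf I (fun i => (τ i).symm q)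
    (fun i _ => (MulEquiv.prime_iff (τ i).symm).2 hq)
    (fun i _ => by rwa [← hτ i, RingEquiv.apply_symm_apply])
    (fun i hi => ?_) (fun i hi j hj hij hass => ?_))
  · have := map_dvd (τ i).symm
      (hcon _ (Submodule.subset_span (Set.mem_image_of_mem _ (hIJ hi))))
    rwa [RingEquiv.symm_apply_apply] at this
  · have := hass.map (τ j)
    rw [RingEquiv.apply_symm_apply] at this
    exact hI hi hj hij this

end Eliminants

section Translations

open Polynomial
open scoped Polynomial.Bivariate

variable {K : Type*} [Field K]

/-- The bivariate polynomials of degree at most `d` in each variable. -/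
def bidegreeLE (K : Type*) [Field K] (d : ℕ) : Submodule K K[X][Y] where
  carrier := {p | p.natDegree ≤ d ∧ ∀ i, (p.coeff i).natDegree ≤ d}
  add_mem' hp hq := ⟨(natDegree_add_le _ _).trans (max_le hp.1 hq.1),
    fun i => (natDegree_add_le _ _).trans (max_le (hp.2 i) (hq.2 i))⟩
  zero_mem' := by simp
  smul_mem' c p hp := ⟨(natDegree_smul_le _ _).trans hp.1,
    fun i => (natDegree_smul_le _ _).trans (hp.2 i)⟩

instance : SetLike.GradedMonoid (bidegreeLE K) where
  one_mem := ⟨by simp, fun i => by rw [coeff_one]; split_ifs <;> simp⟩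
  mul_mem := fun a b p q hp hq => ⟨natDegree_mul_le.trans (add_le_add hp.1 hq.1), fun i => by
    rw [coeff_mul]
    exact natDegree_sum_le_of_forall_le _ _ fun j _ =>
      natDegree_mul_le.trans (add_le_add (hp.2 _) (hq.2 _))⟩

instance : SetLike.GradedMonoid fun d : ℕ => degreeLE K d where
  one_mem := mem_degreeLE.2 degree_one_le
  mul_mem := fun a b p q hp hq => mem_degreeLE.2 <| (degree_mul_le p q).trans <| by
    rw [Nat.cast_add]
    exact add_le_add (mem_degreeLE.1 hp) (mem_degreeLE.1 hq)

theorem eq_of_forall_evalEval_eq [Infinite K] {p q : K[X][Y]}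
    (h : ∀ U V, evalEval U V p = evalEval U V q) : p = q :=
  eq_of_infinite_eval_eq p q <| Set.infinite_of_injective_forall_mem C_injective
    fun V => Polynomial.funext fun U => h U V

/-- The substitution `p(U, V) ↦ p(U + u, V + v)`. -/
noncomputable def shift₂ (u v : K) : K[X][Y] ≃+* K[X][Y] :=
  (mapEquiv (taylorEquiv u).toRingEquiv).trans (taylorEquiv (C v : K[X])).toRingEquiv

theorem shift₂_apply (u v : K) (p : K[X][Y]) :
    shift₂ u v p = taylor (C v) (p.map (taylorAlgHom u : K[X] →+* K[X])) := rfl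

theorem shift₂_C (u v : K) (p : K[X]) : shift₂ u v (C p) = C (taylor u p) := by
  simp [shift₂_apply]

theorem evalEval_shift₂ (u v U V : K) (p : K[X][Y]) :
    evalEval U V (shift₂ u v p) = evalEval (U + u) (V + v) p := by
  have : (evalEvalRingHom U V).comp (shift₂ u v : K[X][Y] →+* K[X][Y]) =
      evalEvalRingHom (U + u) (V + v) := by
    ext <;> simp [shift₂_apply]
  exact congrArg (fun φ : K[X][Y] →+* K => φ p) this

theorem shift₂_shift₂ [Infinite K] (u v u' v' : K) (p : K[X][Y]) :
    shift₂ u v (shift₂ u' v' p) = shift₂ (u + u') (v + v') p :=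
  eq_of_forall_evalEval_eq fun U V => by simp only [evalEval_shift₂, add_assoc]

theorem shift₂_symm [Infinite K] (u v : K) : (shift₂ u v).symm = shift₂ (-u) (-v) := by
  ext1 p
  rw [RingEquiv.symm_apply_eq, shift₂_shift₂]
  exact eq_of_forall_evalEval_eq fun U V => by simp [evalEval_shift₂]

theorem natDegree_shift₂ (u v : K) (p : K[X][Y]) :
    (shift₂ u v p).natDegree = p.natDegree := by
  rw [shift₂_apply, natDegree_taylor, natDegree_map_eq_of_injective (taylor_injective u)]

theorem leadingCoeff_leadingCoeff_shift₂ (u v : K) (p : K[X][Y]) :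
    (shift₂ u v p).leadingCoeff.leadingCoeff = p.leadingCoeff.leadingCoeff := by
  rw [shift₂_apply, leadingCoeff_taylor, leadingCoeff_map_of_injective (taylor_injective u)]
  exact leadingCoeff_taylor ..

theorem shift₂_mem_bidegreeLE (u v : K) {d : ℕ} {p : K[X][Y]} (hp : p ∈ bidegreeLE K d) :
    shift₂ u v p ∈ bidegreeLE K d := by
  refine ⟨(natDegree_shift₂ u v p).trans_le hp.1, fun i => ?_⟩
  rw [shift₂_apply, taylor_coeff, eval_eq_sum_range]
  refine natDegree_sum_le_of_forall_le _ _ fun j _ => ?_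
  rw [hasseDeriv_coeff, coeff_map, ← C_pow, ← nsmul_eq_mul, mul_comm]
  exact (natDegree_C_mul_le _ _).trans ((natDegree_smul_le _ _).trans
    ((natDegree_taylor _ _).trans_le (hp.2 _)))

theorem exists_eq_C_mul_of_associated {A : Type*} [CommRing A] [IsDomain A] {p q : A[X]}
    (h : Associated p q) : ∃ a : A, IsUnit a ∧ p = C a * q := by
  obtain ⟨w, hw⟩ := h.symm
  obtain ⟨a, ha, haw⟩ := isUnit_iff.1 w.isUnit
  exact ⟨a, ha, by rw [← hw, ← haw, mul_comm]⟩

theorem shift₂_eq_of_associated {u v : K} {q : K[X][Y]} (h : Associated (shift₂ u v q) q) :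
    shift₂ u v q = q := by
  obtain ⟨a, ha, hq⟩ := exists_eq_C_mul_of_associated h
  obtain ⟨c, -, rfl⟩ := isUnit_iff.1 ha
  rcases eq_or_ne q 0 with rfl | hq0
  · rw [hq, mul_zero]
  have hlc := congrArg (fun p => p.leadingCoeff.leadingCoeff) hq
  simp only [leadingCoeff_leadingCoeff_shift₂, leadingCoeff_mul, leadingCoeff_C] at hlc
  obtain rfl : c = 1 := (mul_eq_right₀ (by simpa using hq0)).1 hlc.symm
  rw [hq, map_one, map_one, one_mul]

variable [CharZero K]

theorem evalEval_add_mul_of_shift₂_eq {u v : K} {q : K[X][Y]} (h : shift₂ u v q = q)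
    (U V t : K) : evalEval (U + u * t) (V + v * t) q = evalEval U V q := by
  let φ : K[X][Y] →+* K[X] :=
    eval₂RingHom (eval₂RingHom C (C U + C u * X)) (C V + C v * X)
  set F := φ q
  have hF (t : K) : F.eval t = evalEval (U + u * t) (V + v * t) q := by
    have : (evalRingHom t).comp φ = evalEvalRingHom (U + u * t) (V + v * t) := by
      ext <;> simp [φ]
    exact congrArg (fun ψ : K[X][Y] →+* K => ψ q) this
  have hnat (n : ℕ) : F.eval (n : K) = evalEval U V q := by
    induction n with
    | zero => simp [hF]
    | succ n ih =>
      rw [← ih, hF, hF]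
      conv_rhs => rw [← h, evalEval_shift₂]
      push_cast
      ring_nf
  have hconst : F = C (evalEval U V q) :=
    eq_of_infinite_eval_eq _ _ <| Set.infinite_of_injective_forall_mem Nat.cast_injective
      fun n => by simp [hnat]
  rw [← hF, hconst, eval_C]

theorem natDegree_eq_zero_of_forall_evalEval_eq {q : K[X][Y]} {c : K}
    (h : ∀ U V, evalEval U V q = c) : q.natDegree = 0 := by
  have : q = C (C c) := eq_of_forall_evalEval_eq fun U V => by simp [h]
  rw [this, natDegree_C]

theorem exists_linear_form_of_associated_shift₂ {q : K[X][Y]} (hq : 0 < q.natDegree) :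
    ∃ a b : K, (a ≠ 0 ∨ b ≠ 0) ∧
      ∀ u v, Associated (shift₂ u v q) q → a * u + b * v = 0 := by
  by_cases htriv : ∀ u v, Associated (shift₂ u v q) q → u = 0
  · exact ⟨1, 0, Or.inl one_ne_zero, fun u v h => by simp [htriv u v h]⟩
  push Not at htriv
  obtain ⟨u₀, v₀, h₀, hu₀⟩ := htriv
  refine ⟨v₀, -u₀, Or.inr (neg_ne_zero.2 hu₀), fun u v h => ?_⟩
  by_contra hdet
  -- Two independent periods: `q` is constant.
  refine hq.ne' (natDegree_eq_zero_of_forall_evalEval_eq (c := evalEval 0 0 q) fun U V => ?_)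
  set D := v₀ * u + -u₀ * v with hD
  have hU : U = (0 + u₀ * ((u * V - v * U) / D)) + u * ((v₀ * U - u₀ * V) / D) := by
    field_simp
    rw [hD]; ring
  have hV : V = (0 + v₀ * ((u * V - v * U) / D)) + v * ((v₀ * U - u₀ * V) / D) := by
    field_simp
    rw [hD]; ring
  calc evalEval U V q = evalEval (0 + u₀ * ((u * V - v * U) / D) + u * ((v₀ * U - u₀ * V) / D))
        (0 + v₀ * ((u * V - v * U) / D) + v * ((v₀ * U - u₀ * V) / D)) q := by rw [← hU, ← hV]
    _ = evalEval 0 0 q := by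
      rw [evalEval_add_mul_of_shift₂_eq (shift₂_eq_of_associated h),
        evalEval_add_mul_of_shift₂_eq (shift₂_eq_of_associated h₀)]

theorem exists_eliminant_of_shift₂ {ι : Type*} {R : K[X][Y]} (hR : R ≠ 0) {d : ℕ} (hd : 0 < d)
    (hRd : R ∈ bidegreeLE K d) (J : Finset ι) (u v : ι → K)
    (H : ∀ a b : K, a ≠ 0 ∨ b ≠ 0 →
      ∃ I ⊆ J, d < I.card ∧ Set.InjOn (fun i => a * u i + b * v i) I) :
    ∃ N : K[X], N ≠ 0 ∧ N.natDegree ≤ 2 * d * d ∧ ∀ U V, evalEval U V R = 0 →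
      (∀ j ∈ J, evalEval (U + u j) (V + v j) R = 0) → N.eval U = 0 := by
  obtain ⟨g, hg, hgd, hres⟩ := exists_mem_span_resultant_ne_zero (k := K) hR J
    (fun j => shift₂ (u j) (v j)) (fun j => natDegree_shift₂ _ _) hRd.1 fun q _ hqd _ => by
      obtain ⟨a, b, hab, hq⟩ := exists_linear_form_of_associated_shift₂ hqd
      obtain ⟨I, hIJ, hcard, hinj⟩ := H a b hab
      refine ⟨I, hIJ, hRd.1.trans_lt hcard, fun i hi j hj hij hass => hij (hinj hi hj ?_)⟩
      rw [shift₂_symm, shift₂_shift₂] at hass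
      linear_combination -hq _ _ hass
  have hgspan : g ∈ bidegreeLE K d := by
    refine Submodule.span_le.2 ?_ hg
    rintro - ⟨j, -, rfl⟩
    exact shift₂_mem_bidegreeLE _ _ hRd
  refine ⟨_, hres, ?_, fun U V h0 hJ => ?_⟩
  · have := resultant_mem_graded (fun d : ℕ => degreeLE K d) (m := R.natDegree) (n := d)
      (fun i => mem_degreeLE.2 (natDegree_le_iff_degree_le.1 (hRd.2 i)))
      (fun i => mem_degreeLE.2 (natDegree_le_iff_degree_le.1 (hgspan.2 i)))
    have hRdeg := hRd.1
    exact (natDegree_le_iff_degree_le.2 (mem_degreeLE.1 this)).trans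
      (Nat.mul_le_mul_right _ (by omega))
  · have hg0 : evalEvalRingHom U V g = 0 := by
      suffices Submodule.span K ((fun j => shift₂ (u j) (v j) R) '' J) ≤
          (RingHom.ker (evalEvalRingHom U V)).restrictScalars K from this hg
      rw [Submodule.span_le]
      rintro - ⟨j, hj, rfl⟩
      exact (evalEval_shift₂ ..).trans (hJ j hj)
    simpa using map_C_resultant_eq_zero (evalEvalRingHom U V) le_rfl hgd (Or.inr hd.ne') h0 hg0

end Translations

section ZeroEstimate

open Polynomial
open scoped Polynomial.Bivariate

variable {K : Type*} [Field K]

/-- The value at `(U, V, W)` of a trivariate polynomial. -/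
noncomputable def eval₃ (U V W : K) : K[X][Y][X] →+* K :=
  eval₂RingHom (evalEvalRingHom U V) W

theorem eval₃_C (U V W : K) (p : K[X][Y]) : eval₃ U V W (C p) = evalEval U V p := by
  simp [eval₃]

theorem eval₃_X (U V W : K) : eval₃ U V W X = W := by
  simp [eval₃]

/-- The substitution `p(U, V, W) ↦ p(U + u, V, wW)`. -/
noncomputable def twist (u : K) (w : Kˣ) : K[X][Y][X] ≃+* K[X][Y][X] :=
  (mapEquiv (shift₂ u 0)).trans
    (algEquivOfCompEqX (C (CC (w : K)) * X) (C (CC ((w⁻¹ : Kˣ) : K)) * X)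
      (by simp [← mul_assoc, ← C_mul]) (by simp [← mul_assoc, ← C_mul])).toRingEquiv

theorem coeff_twist (u : K) (w : Kˣ) (p : K[X][Y][X]) (i : ℕ) :
    (twist u w p).coeff i = shift₂ u 0 (p.coeff i) * CC ((w : K) ^ i) := by
  change ((p.map (shift₂ u 0 : K[X][Y] →+* K[X][Y])).comp (C (CC (w : K)) * X)).coeff i = _
  rw [comp_C_mul_X_coeff, coeff_map, ← map_pow, ← map_pow]
  rfl

theorem natDegree_twist (u : K) (w : Kˣ) (p : K[X][Y][X]) :
    (twist u w p).natDegree = p.natDegree := by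
  have hcoeff (i : ℕ) : (twist u w p).coeff i = 0 ↔ p.coeff i = 0 := by
    simp [coeff_twist]
  refine le_antisymm ?_ ?_ <;> refine natDegree_le_iff_coeff_eq_zero.2 fun i hi => ?_
  · exact (hcoeff i).2 (coeff_eq_zero_of_natDegree_lt hi)
  · exact (hcoeff i).1 (coeff_eq_zero_of_natDegree_lt hi)

theorem eval₃_twist (u : K) (w : Kˣ) (U V W : K) (p : K[X][Y][X]) :
    eval₃ U V W (twist u w p) = eval₃ (U + u) V (w * W) p := by
  simp only [eval₃, coe_eval₂RingHom, eval₂_eq_sum_range, natDegree_twist, coeff_twist, map_mul,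
    coe_evalEvalRingHom, evalEval_shift₂, evalEval_CC, add_zero, mul_pow, mul_assoc]

theorem twist_twist [Infinite K] (u u' : K) (w w' : Kˣ) (p : K[X][Y][X]) :
    twist u w (twist u' w' p) = twist (u + u') (w * w') p := by
  ext1 i
  simp only [coeff_twist, map_mul, shift₂_shift₂, shift₂_C, taylor_C, add_zero,
    Units.val_mul, mul_pow, mul_assoc, CC, mul_comm]

theorem twist_apply_twist_symm [Infinite K] (u u' : K) (w w' : Kˣ) (p : K[X][Y][X]) :
    twist u w ((twist u' w').symm p) = twist (u - u') (w * w'⁻¹) p := by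
  obtain ⟨r, rfl⟩ := (twist u' w').surjective p
  rw [RingEquiv.symm_apply_apply, twist_twist, sub_add_cancel, inv_mul_cancel_right]

theorem coeff_mem_bidegreeLE_of_mem_span_twist {ι : Type*} {s : Set ι} {u : ι → K} {w : ι → Kˣ}
    {p q : K[X][Y][X]} {d : ℕ} (hp : ∀ i, p.coeff i ∈ bidegreeLE K d)
    (hq : q ∈ Submodule.span K ((fun j => twist (u j) (w j) p) '' s)) (i : ℕ) :
    q.coeff i ∈ bidegreeLE K d := by
  induction hq using Submodule.span_induction with
  | mem q hq =>
    obtain ⟨j, -, rfl⟩ := hq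
    have hsmul : (twist (u j) (w j) p).coeff i =
        (w j : K) ^ i • shift₂ (u j) 0 (p.coeff i) := by
      rw [coeff_twist, mul_comm, Algebra.smul_def]
      rfl
    rw [hsmul]
    exact Submodule.smul_mem _ _ (shift₂_mem_bidegreeLE _ _ (hp i))
  | zero => exact zero_mem _
  | add q q' _ _ hq hq' => rw [coeff_add]; exact add_mem hq hq'
  | smul c q _ hq => rw [coeff_smul]; exact Submodule.smul_mem _ c hq

theorem pow_natDegree_eq_one_of_associated_twist {q : K[X][Y][X]} (hq : q.coeff 0 ≠ 0) {u : K}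
    {w : Kˣ} (h : Associated (twist u w q) q) : w ^ q.natDegree = 1 := by
  obtain ⟨a, ha, hqa⟩ := exists_eq_C_mul_of_associated h
  obtain ⟨b, hb, rfl⟩ := isUnit_iff.1 ha
  obtain ⟨c, -, rfl⟩ := isUnit_iff.1 hb
  have hq0 : q ≠ 0 := by rintro rfl; simp at hq
  have hcoeff {i : ℕ} (hi : q.coeff i ≠ 0) : (w : K) ^ i = c := by
    have := congrArg (fun p => (p.coeff i).leadingCoeff.leadingCoeff) hqa
    simp only [coeff_twist, leadingCoeff_mul, leadingCoeff_leadingCoeff_shift₂, coeff_C_mul,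
      leadingCoeff_C] at this
    rw [mul_comm c] at this
    exact mul_left_cancel₀ (by simpa using hi) this
  ext
  rw [Units.val_pow_eq_pow_val, hcoeff (by simpa using hq0), ← hcoeff hq, pow_zero, Units.val_one]

variable [CharZero K]

theorem exists_eliminant_of_twist {P : K[X][Y][X]} (hP : P.coeff 0 ≠ 0) {S T : ℕ} (hS : 0 < S)
    (hPS : P.natDegree ≤ S) (hPT : ∀ i, P.coeff i ∈ bidegreeLE K T) (u : K) {δ : Kˣ}
    (hδ : ¬ IsOfFinOrder δ) :
    ∃ R : K[X][Y], R ≠ 0 ∧ R ∈ bidegreeLE K (2 * S * T) ∧ ∀ U V W,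
      (∀ s ≤ S, eval₃ (U + s * u) V (δ ^ s * W) P = 0) → evalEval U V R = 0 := by
  have hP0 : P ≠ 0 := by rintro rfl; simp at hP
  obtain ⟨g, hg, hgS, hres⟩ := exists_mem_span_resultant_ne_zero (k := K) hP0
    (Finset.range (S + 1)) (fun s : ℕ => twist (s * u) (δ ^ s)) (fun s => natDegree_twist _ _) hPS
    fun q _ hqd hqP => by
      refine ⟨_, subset_rfl, by rw [Finset.card_range]; omega, fun s _ t _ hst hass => hst ?_⟩
      rw [twist_apply_twist_symm] at hass
      have hq : q.coeff 0 ≠ 0 := by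
        obtain ⟨r, rfl⟩ := hqP
        rw [mul_coeff_zero] at hP
        exact left_ne_zero_of_mul hP
      have hpow := pow_natDegree_eq_one_of_associated_twist hq hass
      rw [mul_pow, inv_pow, mul_inv_eq_one, ← pow_mul, ← pow_mul] at hpow
      exact (Nat.eq_of_mul_eq_mul_right hqd (injective_pow_iff_not_isOfFinOrder.2 hδ hpow)).symm
  have hgT := coeff_mem_bidegreeLE_of_mem_span_twist hPT hg
  refine ⟨_, hres, ?_, fun U V W h => ?_⟩
  · have := resultant_mem_graded (bidegreeLE K) (m := P.natDegree) (n := S) hPT hgT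
    have hle : (P.natDegree + S) * T ≤ 2 * S * T := Nat.mul_le_mul_right _ (by omega)
    exact ⟨this.1.trans hle, fun i => (this.2 i).trans hle⟩
  · have hP0 : eval₃ U V W P = 0 := by simpa using h 0 (Nat.zero_le S)
    have hg0 : eval₃ U V W g = 0 := by
      suffices Submodule.span K ((fun s : ℕ => twist (s * u) (δ ^ s) P) '' Finset.range (S + 1)) ≤
          (RingHom.ker (eval₃ U V W)).restrictScalars K from this hg
      rw [Submodule.span_le]
      rintro - ⟨s, hs, rfl⟩
      refine (eval₃_twist ..).trans ?_
      rw [Units.val_pow_eq_pow_val]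
      exact h s (Nat.lt_succ_iff.1 (Finset.mem_range.1 hs))
    rw [← eval₃_C U V W]
    exact map_C_resultant_eq_zero (eval₃ U V W) le_rfl hgS (Or.inr hS.ne') hP0 hg0

theorem eq_zero_of_eval₃_eq_zero {M : Type*} [AddCommMonoid M] (u v : M →+ K)
    (w : Multiplicative M →* Kˣ) {e : M} (hve : v e = 0) (hwe : ¬ IsOfFinOrder (w (.ofAdd e)))
    {P : K[X][Y][X]} {S T : ℕ} (hS : 0 < S) (hT : 0 < T) (hPS : P.natDegree ≤ S)
    (hPT : ∀ i, P.coeff i ∈ bidegreeLE K T) {I J : Finset M} (hJ0 : 0 ∈ J)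
    (hJ : ∀ a b : K, a ≠ 0 ∨ b ≠ 0 →
      ∃ J' ⊆ J, 2 * S * T < J'.card ∧ Set.InjOn (fun j => a * u j + b * v j) J')
    (hI : Set.InjOn u I) (hIcard : 2 * (2 * S * T) * (2 * S * T) < I.card)
    (hP : ∀ s ≤ S, ∀ j ∈ J, ∀ i ∈ I, eval₃ (u (i + j + s • e)) (v (i + j + s • e))
      (w (.ofAdd (i + j + s • e))) P = 0) : P = 0 := by
  classical
  by_contra hP0
  obtain ⟨Q, hPQ, hQ⟩ := exists_eq_pow_rootMultiplicity_mul_and_not_dvd P hP0 0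
  rw [C_0, sub_zero] at hPQ hQ
  set n := P.rootMultiplicity 0
  have hcoeff (i : ℕ) : Q.coeff i = P.coeff (i + n) := by rw [hPQ, coeff_X_pow_mul]
  have hQP : Q.natDegree ≤ S := natDegree_le_iff_coeff_eq_zero.2 fun i hi => by
    rw [hcoeff]
    exact coeff_eq_zero_of_natDegree_lt (by omega)
  obtain ⟨R, hR, hRd, hRroot⟩ := exists_eliminant_of_twist (fun h => hQ (X_dvd_iff.2 h)) hS hQP
    (fun i => hcoeff i ▸ hPT _) (u e) hwe
  have hRIJ (j) (hj : j ∈ J) (i) (hi : i ∈ I) : evalEval (u (i + j)) (v (i + j)) R = 0 := by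
    refine hRroot _ _ (w (.ofAdd (i + j)) : Kˣ) fun s hs => ?_
    have := hP s hs j hj i hi
    rw [hPQ, map_mul, map_pow, eval₃_X] at this
    convert (mul_eq_zero.1 this).resolve_left (pow_ne_zero _ (Units.ne_zero _)) using 3
    · simp
    · simp [hve]
    · simp [ofAdd_add, ofAdd_nsmul, mul_comm]
  obtain ⟨N, hN, hNd, hNroot⟩ := exists_eliminant_of_shift₂ hR (by positivity) hRd J u v hJ
  refine (Nat.lt_of_lt_of_le hIcard ?_).not_ge hNd
  rw [← Finset.card_image_of_injOn hI]
  refine (Finset.card_le_card fun x hx => ?_).trans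
    ((Multiset.toFinset_card_le _).trans (card_roots' N))
  obtain ⟨i, hi, rfl⟩ := Finset.mem_image.1 hx
  rw [Multiset.mem_toFinset, mem_roots hN]
  refine hNroot (u i) (v i) (by simpa using hRIJ 0 hJ0 i hi) fun j hj => ?_
  simpa using hRIJ j hj i hi

end ZeroEstimate

section BoxSums

variable {R : Type*} [CommRing R] {S T : ℕ}

/-- The sum of the `p (r, t, s) * U ^ r * V ^ t * f s`. With `f s = W ^ s` it is the value at
`(U, V, W)` of the polynomial with coefficients `p`; the other choices of `f` serve to truncate the
powers of an exponential and to clear denominators. -/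
def boxSum (p : Fin T × Fin T × Fin S → ℤ) (U V : R) (f : Fin S → R) : R :=
  ∑ i, (p i : R) * (U ^ (i.1 : ℕ) * V ^ (i.2.1 : ℕ) * f i.2.2)

variable (p : Fin T × Fin T × Fin S → ℤ)

theorem map_boxSum {R' : Type*} [CommRing R'] (φ : R →+* R') (U V : R) (f : Fin S → R) :
    φ (boxSum p U V f) = boxSum p (φ U) (φ V) (φ ∘ f) := by
  simp [boxSum]

theorem boxSum_mul_left (c U V : R) (f : Fin S → R) :
    boxSum p U V (fun s => c * f s) = c * boxSum p U V f := by
  simp only [boxSum, Finset.mul_sum]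
  exact Finset.sum_congr rfl fun i _ => by ring

theorem boxSum_sub (U V : R) (f g : Fin S → R) :
    boxSum p U V (fun s => f s - g s) = boxSum p U V f - boxSum p U V g := by
  simp only [boxSum, mul_sub, Finset.sum_sub_distrib]

theorem isIntegral_boxSum {U V : R} {f : Fin S → R} (hU : IsIntegral ℤ U) (hV : IsIntegral ℤ V)
    (hf : ∀ s, IsIntegral ℤ (f s)) : IsIntegral ℤ (boxSum p U V f) :=
  IsIntegral.sum _ fun i _ => (map_intCast (algebraMap ℤ R) (p i) ▸ isIntegral_algebraMap).mul
    (((hU.pow _).mul (hV.pow _)).mul (hf _))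

variable {p}

theorem norm_boxSum_le {𝕜 : Type*} [RCLike 𝕜] {H A B E : ℝ} (hp : ∀ i, |(p i : ℝ)| ≤ H) {U V : 𝕜}
    (hA : 1 ≤ A) (hU : ‖U‖ ≤ A) (hB : 1 ≤ B) (hV : ‖V‖ ≤ B) {f : Fin S → 𝕜}
    (hf : ∀ s, ‖f s‖ ≤ E) : ‖boxSum p U V f‖ ≤ T * T * S * (A ^ T * B ^ T * E) * H := by
  have hterm (i : Fin T × Fin T × Fin S) :
      ‖(p i : 𝕜) * (U ^ (i.1 : ℕ) * V ^ (i.2.1 : ℕ) * f i.2.2)‖ ≤ H * (A ^ T * B ^ T * E) := by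
    have hUT : ‖U‖ ^ (i.1 : ℕ) ≤ A ^ T :=
      (pow_le_pow_left₀ (norm_nonneg _) hU _).trans (pow_le_pow_right₀ hA i.1.2.le)
    have hVT : ‖V‖ ^ (i.2.1 : ℕ) ≤ B ^ T :=
      (pow_le_pow_left₀ (norm_nonneg _) hV _).trans (pow_le_pow_right₀ hB i.2.1.2.le)
    have hpi : ‖(p i : 𝕜)‖ ≤ H := by
      rw [← RCLike.ofReal_intCast, RCLike.norm_ofReal]
      exact hp i
    have hH : 0 ≤ H := (norm_nonneg _).trans hpi
    rw [norm_mul, norm_mul, norm_mul, norm_pow, norm_pow]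
    gcongr
    exact hf _
  calc ‖boxSum p U V f‖ ≤ ∑ _i : Fin T × Fin T × Fin S, H * (A ^ T * B ^ T * E) :=
        norm_sum_le_of_le _ fun i _ => hterm i
    _ = T * T * S * (A ^ T * B ^ T * E) * H := by
        simp only [Finset.sum_const, Finset.card_univ, Fintype.card_prod, Fintype.card_fin,
          nsmul_eq_mul, Nat.cast_mul]
        ring

open Polynomial
open scoped Polynomial.Bivariate

variable {K : Type*} [Field K]

/-- The polynomial whose values are the `boxSum p U V (W ^ ·)`. -/
noncomputable def coeffPoly (K : Type*) [Field K] (p : Fin T × Fin T × Fin S → ℤ) : K[X][Y][X] :=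
  ∑ i, monomial i.2.2 (monomial i.2.1 (monomial i.1 (p i : K)))

theorem eval₃_coeffPoly (U V W : K) :
    eval₃ U V W (coeffPoly K p) = boxSum p U V fun s => W ^ (s : ℕ) := by
  simp [coeffPoly, boxSum, eval₃, eval_monomial, mul_assoc]

theorem natDegree_coeffPoly_le : (coeffPoly K p).natDegree ≤ S :=
  natDegree_sum_le_of_forall_le _ _ fun i _ => (natDegree_monomial_le _).trans i.2.2.2.le

theorem coeff_coeffPoly_mem_bidegreeLE (j : ℕ) : (coeffPoly K p).coeff j ∈ bidegreeLE K T := by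
  rw [coeffPoly, finsetSum_coeff]
  refine sum_mem fun i _ => ?_
  rw [coeff_monomial]
  split_ifs
  · refine ⟨(natDegree_monomial_le _).trans i.2.1.2.le, fun j => ?_⟩
    rw [coeff_monomial]
    split_ifs
    · exact (natDegree_monomial_le _).trans i.1.2.le
    · simp
  · exact zero_mem _

theorem coeffPoly_eq_zero [CharZero K] (h : coeffPoly K p = 0) : p = 0 := by
  funext i
  have := congrArg (fun P => ((P.coeff i.2.2).coeff i.2.1).coeff i.1) h
  simp only [coeffPoly, finsetSum_coeff, coeff_zero] at this
  rw [Finset.sum_eq_single i] at this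
  · simpa using this
  · intro j _ hj
    simp only [coeff_monomial]
    split_ifs with h
    · rw [coeff_monomial]
      split_ifs with h'
      · rw [coeff_monomial, if_neg fun h'' => hj ?_]
        ext <;> assumption
      · exact coeff_zero _
    · simp only [coeff_zero]
  · simp

theorem eq_zero_of_boxSum_eq_zero [CharZero K] {M : Type*} [AddCommMonoid M] (u v : M →+ K)
    (w : Multiplicative M →* Kˣ) {e : M} (hve : v e = 0) (hwe : ¬ IsOfFinOrder (w (.ofAdd e)))
    (hS : 0 < S) (hT : 0 < T) {I J : Finset M} (hJ0 : 0 ∈ J)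
    (hJ : ∀ a b : K, a ≠ 0 ∨ b ≠ 0 →
      ∃ J' ⊆ J, 2 * S * T < J'.card ∧ Set.InjOn (fun j => a * u j + b * v j) J')
    (hI : Set.InjOn u I) (hIcard : 2 * (2 * S * T) * (2 * S * T) < I.card)
    (hp : ∀ s ≤ S, ∀ j ∈ J, ∀ i ∈ I, boxSum p (u (i + j + s • e)) (v (i + j + s • e))
      (fun r => (w (.ofAdd (i + j + s • e)) : K) ^ (r : ℕ)) = 0) : p = 0 :=
  coeffPoly_eq_zero <| eq_zero_of_eval₃_eq_zero u v w hve hwe hS hT natDegree_coeffPoly_le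
    coeff_coeffPoly_mem_bidegreeLE hJ0 hJ hI hIcard fun s hs j hj i hi => by
      rw [eval₃_coeffPoly]
      exact hp s hs j hj i hi

end BoxSums

section Lattice

/-- First coordinate of the points of the lattice spanned by `(1, 0)`, `(0, 1)` and `(-x, y)`. -/
def latticeX (x : ℕ) : ℕ × ℕ × ℕ →+ ℤ where
  toFun i := i.1 - i.2.2 * x
  map_zero' := by simp
  map_add' i j := by push_cast [Prod.fst_add, Prod.snd_add]; ring

/-- Second coordinate of the points of the lattice spanned by `(1, 0)`, `(0, 1)` and `(-x, y)`. -/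
def latticeY (y : ℕ) : ℕ × ℕ × ℕ →+ ℤ where
  toFun i := i.2.1 + i.2.2 * y
  map_zero' := by simp
  map_add' i j := by push_cast [Prod.fst_add, Prod.snd_add]; ring

theorem latticeX_apply (x i j k : ℕ) : latticeX x (i, j, k) = i - k * x := rfl

theorem latticeY_apply (y i j k : ℕ) : latticeY y (i, j, k) = j + k * y := rfl

variable {K : Type*} [Field K] [CharZero K] {x y L a q₀ c d : ℕ} {A B : K}

theorem eq_and_eq_of_add_mul_eq_add_mul {j k j' k' : ℕ} (hj : j < y) (hj' : j' < y)
    (h : j + k * y = j' + k' * y) : j = j' ∧ k = k' := by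
  have hk : k = k' := by
    have := congrArg (· / y) h
    simpa [Nat.add_mul_div_right _ _ (j.zero_le.trans_lt hj), Nat.div_eq_of_lt, hj, hj'] using this
  subst hk
  exact ⟨Nat.add_right_cancel h, rfl⟩

theorem injOn_latticeY (hay : a ≤ y) : Set.InjOn (latticeY y)
    (({0} : Finset ℕ) ×ˢ Finset.range a ×ˢ Finset.range c : Finset (ℕ × ℕ × ℕ)) := by
  rintro ⟨i, j, k⟩ hi ⟨i', j', k'⟩ hi' h
  simp only [Finset.mem_coe, Finset.mem_product, Finset.mem_singleton, Finset.mem_range] at hi hi'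
  have h' : j + k * y = j' + k' * y := by
    rw [latticeY_apply, latticeY_apply] at h
    exact_mod_cast h
  obtain ⟨rfl, rfl⟩ :=
    eq_and_eq_of_add_mul_eq_add_mul (hi.2.1.trans_le hay) (hi'.2.1.trans_le hay) h'
  rw [hi.1, hi'.1]

theorem injOn_linear_form_of_coprime (hA : A ≠ 0) {ρ : ℚ} (hB : B = A * ρ) : Set.InjOn
    (fun i => A * latticeX x i + B * latticeY y i)
    (Finset.range L ×ˢ Finset.range (min ρ.den L) ×ˢ {0} : Finset (ℕ × ℕ × ℕ)) := by
  rintro ⟨i, j, k⟩ hi ⟨i', j', k'⟩ hi' h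
  simp only [Finset.mem_coe, Finset.mem_product, Finset.mem_singleton, Finset.mem_range] at hi hi'
  obtain ⟨-, hj, rfl⟩ := hi
  obtain ⟨-, hj', rfl⟩ := hi'
  have hden : (ρ.den : ℤ) * (i - i') + ρ.num * (j - j') = 0 := by
    have hρ : (ρ : K) * ρ.den = ρ.num := by exact_mod_cast Rat.mul_den_eq_num ρ
    simp only [latticeX_apply, latticeY_apply, hB] at h
    push_cast at h
    have : A * ((ρ.den : K) * (i - i') + ρ.num * (j - j')) = 0 := by
      linear_combination (ρ.den : K) * h - A * ((j : K) - j') * hρ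
    exact_mod_cast (mul_eq_zero.1 this).resolve_left hA
  have hdvd : (ρ.den : ℤ) ∣ j - j' :=
    (Rat.isCoprime_num_den ρ).symm.dvd_of_dvd_mul_left ⟨-(i - i'), by linear_combination hden⟩
  have hjj' : (j : ℤ) - j' = 0 :=
    Int.eq_zero_of_abs_lt_dvd hdvd (by rw [abs_lt]; constructor <;> omega)
  rw [hjj', mul_zero, add_zero] at hden
  have hii' := (mul_eq_zero.1 hden).resolve_left (by exact_mod_cast ρ.den_ne_zero)
  rw [show i = i' by omega, show j = j' by omega]

theorem mul_den_mul_sub_num_mul {ρ : ℚ} {x y d r : ℤ} (h : ρ * (d * y) = x * d - r) :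
    d * (ρ.den * x - ρ.num * y) = ρ.den * r := by
  have hnum : (ρ.num : ℚ) * (d * y) = ρ.den * (x * d - r) := by
    rw [← Rat.mul_den_eq_num ρ, ← h]
    ring
  have hnum' : ρ.num * (d * y) = ρ.den * (x * d - r) := by exact_mod_cast hnum
  linear_combination -hnum'

theorem exists_rat_of_not_injOn (hA : A ≠ 0) (hy : 0 < y) (h : ¬ Set.InjOn
      (fun i => A * latticeX x i + B * latticeY y i)
      (Finset.range a ×ˢ {0} ×ˢ Finset.range c : Finset (ℕ × ℕ × ℕ))) :
    ∃ ρ : ℚ, B = A * ρ ∧ |(ρ.den : ℤ) * x - ρ.num * y| < ρ.den * a := by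
  simp only [Set.InjOn] at h
  push Not at h
  obtain ⟨⟨i, j, k⟩, hi, ⟨i', j', k'⟩, hi', heq, hne⟩ := h
  simp only [Finset.mem_coe, Finset.mem_product, Finset.mem_singleton, Finset.mem_range] at hi hi'
  obtain ⟨hi, rfl, -⟩ := hi
  obtain ⟨hi', rfl, -⟩ := hi'
  simp only [latticeX_apply, latticeY_apply] at heq
  push_cast at heq
  have hk : (k : ℤ) - k' ≠ 0 := by
    intro hk
    obtain rfl : k = k' := by omega
    have : A * ((i : K) - i') = 0 := by linear_combination heq
    have := (mul_eq_zero.1 this).resolve_left hA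
    exact hne (by rw [Nat.cast_injective (sub_eq_zero.1 this)])
  have hky : (((k : ℤ) - k' : ℤ) : ℚ) * y ≠ 0 :=
    mul_ne_zero (by exact_mod_cast hk) (by exact_mod_cast hy.ne')
  obtain ⟨ρ, hρ⟩ : ∃ ρ : ℚ, ρ * (((k : ℤ) - k' : ℤ) * y) = x * ((k : ℤ) - k' : ℤ) - (i - i') :=
    ⟨_, div_mul_cancel₀ _ hky⟩
  refine ⟨ρ, ?_, ?_⟩
  · have hky' : ((((k : ℤ) - k' : ℤ) : K)) * y ≠ 0 := by exact_mod_cast hky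
    have hρ' : (ρ : K) * (((k : ℤ) - k' : ℤ) * y) = x * ((k : ℤ) - k' : ℤ) - (i - i') := by
      exact_mod_cast congrArg (Rat.cast : ℚ → K) hρ
    refine mul_right_cancel₀ hky' ?_
    push_cast at hρ' ⊢
    linear_combination heq - A * hρ'
  · have hmul : ((k : ℤ) - k') * (ρ.den * x - ρ.num * y) = ρ.den * (i - i') :=
      mul_den_mul_sub_num_mul (by exact_mod_cast hρ)
    calc |(ρ.den : ℤ) * x - ρ.num * y| ≤ |(k : ℤ) - k'| * |(ρ.den : ℤ) * x - ρ.num * y| :=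
          le_mul_of_one_le_left (abs_nonneg _) (Int.one_le_abs hk)
      _ = ρ.den * |(i : ℤ) - i'| := by rw [← abs_mul, hmul, abs_mul, Nat.abs_cast]
      _ < ρ.den * a := by
          gcongr
          rw [abs_lt]
          constructor <;> omega

theorem exists_subset_injOn_linear_form (haL : a ≤ L) (hdac : d < a * c) (hdL : d < L * L)
    (hdq : d < L * (q₀ + 1)) (hay : a ≤ y)
    (hxy : ∀ q : ℕ, 1 ≤ q → q ≤ q₀ → ∀ p : ℤ, (q * a : ℤ) ≤ |q * x - p * y|)
    (hAB : A ≠ 0 ∨ B ≠ 0) :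
    ∃ J ⊆ Finset.range L ×ˢ Finset.range L ×ˢ Finset.range c, d < J.card ∧
      Set.InjOn (fun i => A * latticeX x i + B * latticeY y i) J := by
  have ha : 0 < a := Nat.pos_of_mul_pos_right (d.zero_le.trans_lt hdac)
  have hc : 0 < c := Nat.pos_of_mul_pos_left (d.zero_le.trans_lt hdac)
  have h0L : {0} ⊆ Finset.range L := by simpa using ha.trans_le haL
  have h0c : {0} ⊆ Finset.range c := by simpa using hc
  by_cases hA : A = 0
  · refine ⟨{0} ×ˢ Finset.range a ×ˢ Finset.range c, by gcongr, by simpa using hdac, ?_⟩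
    have hB : B ≠ 0 := hAB.resolve_left (not_not.2 hA)
    intro i hi j hj hij
    simp only [hA, zero_mul, zero_add] at hij
    exact injOn_latticeY hay hi hj (by exact_mod_cast mul_left_cancel₀ hB hij)
  by_cases hinj : Set.InjOn (fun i => A * (latticeX x i : K) + B * latticeY y i)
      (Finset.range a ×ˢ {0} ×ˢ Finset.range c : Finset (ℕ × ℕ × ℕ))
  · exact ⟨_, by gcongr, by simpa using hdac, hinj⟩
  obtain ⟨ρ, hB, hρ⟩ := exists_rat_of_not_injOn hA (ha.trans_le hay) hinj
  have hden : q₀ + 1 ≤ ρ.den := not_lt.1 fun hlt =>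
    (hxy ρ.den ρ.den_pos (Nat.lt_succ_iff.1 hlt) ρ.num).not_gt hρ
  refine ⟨_, ?_, ?_, injOn_linear_form_of_coprime (L := L) hA hB⟩
  · gcongr
    exact min_le_right _ _
  · simp only [Finset.card_product, Finset.card_range, Finset.card_singleton, mul_one]
    rcases min_cases ρ.den L with ⟨h, -⟩ | ⟨h, -⟩ <;> rw [h]
    · exact hdq.trans_le (Nat.mul_le_mul_left _ hden)
    · exact hdL

end Lattice

section Pigeonhole

variable {I E : Type*} [Fintype I] [Fintype E] {C : ℝ} {H N : ℕ}

theorem exists_int_vec_abs_sum_le {c : E → I → ℝ} (hC : 0 < C) (hc : ∀ e i, |c e i| ≤ C)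
    (hN : 0 < N) (hcard : (N + 1) ^ Fintype.card E < (H + 1) ^ Fintype.card I) :
    ∃ p : I → ℤ, p ≠ 0 ∧ (∀ i, |p i| ≤ H) ∧
      ∀ e, |∑ i, c e i * p i| ≤ 2 * (Fintype.card I * C * H) / N := by
  classical
  set B : ℝ := Fintype.card I * C * H with hB
  have hB0 : 0 < B := by
    have hI : Fintype.card I ≠ 0 := fun h => by simp [h] at hcard
    have hH : H ≠ 0 := fun h => by simp [h] at hcard
    positivity
  have hsum (p : I → Fin (H + 1)) (e : E) : |∑ i, c e i * (p i : ℕ)| ≤ B := by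
    calc |∑ i, c e i * (p i : ℕ)| ≤ ∑ _i : I, C * H := by
          refine (Finset.abs_sum_le_sum_abs _ _).trans (Finset.sum_le_sum fun i _ => ?_)
          rw [abs_mul, Nat.abs_cast]
          exact mul_le_mul (hc e i) (by exact_mod_cast (p i).is_le) (by positivity) hC.le
      _ = B := by simp [hB, mul_assoc]
  let cell (p : I → Fin (H + 1)) (e : E) : ℤ := ⌊(∑ i, c e i * (p i : ℕ) + B) * (N / (2 * B))⌋
  have hcell (p : I → Fin (H + 1)) (e : E) : cell p e ∈ Finset.Icc (0 : ℤ) N := by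
    obtain ⟨h₁, h₂⟩ := abs_le.1 (hsum p e)
    refine Finset.mem_Icc.2 ⟨Int.floor_nonneg.2 ?_, Int.floor_le_iff.2 ?_⟩
    · exact mul_nonneg (by linarith) (by positivity)
    · calc (∑ i, c e i * (p i : ℕ) + B) * (N / (2 * B)) ≤ 2 * B * (N / (2 * B)) := by
            gcongr
            linarith
        _ = N := by field_simp
        _ < (N : ℤ) + 1 := by simp
  obtain ⟨p, -, q, -, hpq, heq⟩ := Finset.exists_ne_map_eq_of_card_lt_of_maps_to
    (s := Finset.univ) (t := Fintype.piFinset fun _ : E => Finset.Icc (0 : ℤ) N) (f := cell)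
    (by simpa using hcard) fun p _ => Fintype.mem_piFinset.2 (hcell p)
  refine ⟨fun i => (p i : ℕ) - (q i : ℕ), fun h => hpq ?_, fun i => ?_, fun e => ?_⟩
  · funext i
    have := congrFun h i
    simp only [Pi.zero_apply] at this
    omega
  · have hp := (p i).is_le
    have hq := (q i).is_le
    exact abs_le.2 ⟨by lia, by lia⟩
  · have := (Int.abs_sub_lt_one_of_floor_eq_floor (congrFun heq e)).le
    rw [← sub_mul, abs_mul, abs_of_pos (by positivity : 0 < (N : ℝ) / (2 * B)), ← mul_div_assoc,
      div_le_one (by positivity), ← le_div_iff₀ (by positivity), add_sub_add_right_eq_sub] at this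
    simpa [mul_sub] using this

/-- The idea of Siegel's lemma for functions: if the sup norms of the terms of a generalised
polynomial `∑ₖ c i k * χ (e i k)` add up to at most `C`, uniformly in `i`, then some combination of
these polynomials is uniformly small. -/
theorem exists_int_combination_abs_le {κ : Type*} [Fintype κ] {c : I → κ → ℝ} (e : I → κ → E)
    {B : E → ℝ} (hB : ∀ ε, 0 < B ε) (hc : ∀ i k, 0 ≤ c i k)
    (hC : 0 < C) (hcC : ∀ i, ∑ k, c i k * B (e i k) ≤ C)
    (hN : 0 < N) (hcard : (N + 1) ^ Fintype.card E < (H + 1) ^ Fintype.card I) :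
    ∃ p : I → ℤ, p ≠ 0 ∧ (∀ i, |p i| ≤ H) ∧ ∀ χ : E → ℝ, (∀ ε, |χ ε| ≤ B ε) →
      |∑ i, p i * ∑ k, c i k * χ (e i k)| ≤
        Fintype.card E * (2 * (Fintype.card I * C * H) / N) := by
  classical
  let d (ε : E) (i : I) : ℝ := ∑ k with e i k = ε, c i k * B (e i k)
  have hterm (i : I) (k : κ) : 0 ≤ c i k * B (e i k) := mul_nonneg (hc i k) (hB _).le
  obtain ⟨p, hp0, hpH, hp⟩ := exists_int_vec_abs_sum_le (c := d) hC (fun ε i => by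
    rw [abs_of_nonneg (Finset.sum_nonneg fun k _ => hterm i k)]
    exact (Finset.sum_le_sum_of_subset_of_nonneg (Finset.filter_subset _ _)
      fun k _ _ => hterm i k).trans (hcC i)) hN hcard
  refine ⟨p, hp0, hpH, fun χ hχ => ?_⟩
  have hexpand (i : I) : ∑ k, c i k * χ (e i k) = ∑ ε, χ ε / B ε * d ε i := by
    rw [← Finset.sum_fiberwise _ (e i)]
    refine Finset.sum_congr rfl fun ε _ => ?_
    rw [Finset.mul_sum]
    refine Finset.sum_congr rfl fun k hk => ?_
    rw [(Finset.mem_filter.1 hk).2]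
    have := (hB ε).ne'
    field_simp
  calc |∑ i, p i * ∑ k, c i k * χ (e i k)| = |∑ ε, χ ε / B ε * ∑ i, d ε i * p i| := by
        simp only [hexpand, Finset.mul_sum]
        rw [Finset.sum_comm]
        congr! 3 with ε _ i _
        ring
    _ ≤ ∑ _ε : E, 2 * (Fintype.card I * C * H) / N := by
        refine (Finset.abs_sum_le_sum_abs _ _).trans (Finset.sum_le_sum fun ε _ => ?_)
        rw [abs_mul, abs_div, abs_of_pos (hB ε)]
        exact (mul_le_of_le_one_left (abs_nonneg _)
          (div_le_one_of_le₀ (hχ ε) (hB ε).le)).trans (hp ε)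
    _ = _ := by simp

end Pigeonhole

section ExpTail

theorem exp_sub_sum_le_exp_mul_div {r ρ : ℝ} (M : ℕ) (hr : 0 ≤ r) (hρ : 1 ≤ ρ) :
    Real.exp r - ∑ m ∈ Finset.range M, r ^ m / m.factorial ≤ Real.exp (ρ * r) / ρ ^ M := by
  have hexp (x : ℝ) : HasSum (fun m : ℕ => x ^ m / m.factorial) (Real.exp x) := by
    rw [Real.exp_eq_exp_ℝ]
    exact NormedSpace.expSeries_div_hasSum_exp x
  have htail : HasSum (fun m : ℕ => r ^ (m + M) / (m + M).factorial)
      (Real.exp r - ∑ m ∈ Finset.range M, r ^ m / m.factorial) :=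
    (hasSum_nat_add_iff' M).2 (hexp r)
  have hscaled : HasSum (fun m : ℕ => (ρ * r) ^ (m + M) / (m + M).factorial / ρ ^ M)
      ((Real.exp (ρ * r) - ∑ m ∈ Finset.range M, (ρ * r) ^ m / m.factorial) / ρ ^ M) :=
    ((hasSum_nat_add_iff' M).2 (hexp (ρ * r))).div_const _
  have : 0 < ρ := zero_lt_one.trans_le hρ
  refine (hasSum_le (fun m => ?_) htail hscaled).trans ?_
  · rw [le_div_iff₀ (by positivity), mul_pow, mul_comm, ← mul_div_assoc]
    gcongr
    exact M.le_add_left m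
  · gcongr
    exact sub_le_self _ (Finset.sum_nonneg fun m _ => by positivity)

theorem abs_exp_sub_sum_le_exp_mul_div {x B ρ : ℝ} (M : ℕ) (hx : |x| ≤ B) (hρ : 1 ≤ ρ) :
    |Real.exp x - ∑ m ∈ Finset.range M, x ^ m / m.factorial| ≤ Real.exp (ρ * B) / ρ ^ M := by
  have h := Complex.norm_exp_sub_sum_le_exp_norm_sub_sum (x : ℂ) M
  rw [Complex.norm_real, Real.norm_eq_abs] at h
  calc |Real.exp x - ∑ m ∈ Finset.range M, x ^ m / m.factorial|
      = ‖Complex.exp x - ∑ m ∈ Finset.range M, (x : ℂ) ^ m / m.factorial‖ := by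
        rw [← Real.norm_eq_abs, ← Complex.norm_real]
        push_cast
        rfl
    _ ≤ Real.exp (ρ * |x|) / ρ ^ M :=
        h.trans (exp_sub_sum_le_exp_mul_div M (abs_nonneg x) hρ)
    _ ≤ Real.exp (ρ * B) / ρ ^ M := by gcongr

end ExpTail

section AuxiliaryFunction

variable {S T M D : ℕ} {l G W B V ρ : ℝ}

theorem sum_fin_choose_mul {t : ℕ} (ht : t < T) (a b : ℝ) :
    ∑ k : Fin T, (t.choose k : ℝ) * (a ^ (k : ℕ) * b ^ (t - k)) = (a + b) ^ t := by
  rw [Fin.sum_univ_eq_sum_range fun k => (t.choose k : ℝ) * (a ^ k * b ^ (t - k)), add_pow]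
  refine (Finset.sum_subset_zero_on_sdiff (Finset.range_subset_range.2 ht) ?_ ?_).symm
  · intro k hk
    rw [Finset.mem_sdiff, Finset.mem_range, Finset.mem_range] at hk
    rw [Nat.choose_eq_zero_of_lt (by omega), Nat.cast_zero, zero_mul]
  · exact fun k _ => mul_comm _ _

/-- The exponents of `(w, y)` in the expansion of
`((w + G * y) / l) ^ r * y ^ t * ∑ m < M, (s * w) ^ m / m !`. -/
def expansionExponent (i : Fin T × Fin T × Fin S) (k : Fin T × Fin M) : Fin (T + M) × Fin (2 * T) :=
  (⟨k.1 + k.2, by omega⟩, ⟨i.1 - k.1 + i.2.1, by omega⟩)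

/-- The coefficients of the expansion of
`((w + G * y) / l) ^ r * y ^ t * ∑ m < M, (s * w) ^ m / m !`. -/
noncomputable def expansionCoeff (G l : ℝ) (i : Fin T × Fin T × Fin S) (k : Fin T × Fin M) : ℝ :=
  (i.1 : ℕ).choose k.1 * (G ^ (i.1 - k.1 : ℕ) / l ^ (i.1 : ℕ)) *
    ((i.2.2 : ℕ) ^ (k.2 : ℕ) / (k.2 : ℕ).factorial)

theorem expansionCoeff_nonneg (hG : 0 ≤ G) (hl : 0 ≤ l) (i : Fin T × Fin T × Fin S)
    (k : Fin T × Fin M) : 0 ≤ expansionCoeff G l i k := by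
  unfold expansionCoeff
  positivity

theorem sum_expansionCoeff_mul (G l w y : ℝ) (i : Fin T × Fin T × Fin S) :
    ∑ k : Fin T × Fin M, expansionCoeff G l i k *
      (w ^ ((expansionExponent i k).1 : ℕ) * y ^ ((expansionExponent i k).2 : ℕ)) =
    ((w + G * y) / l) ^ (i.1 : ℕ) * y ^ (i.2.1 : ℕ) *
      ∑ m ∈ Finset.range M, ((i.2.2 : ℕ) * w) ^ m / m.factorial := by
  rw [div_pow, ← sum_fin_choose_mul i.1.2 w (G * y), Finset.sum_div, Finset.sum_mul,
    Fintype.sum_prod_type, Finset.sum_mul, Finset.sum_range]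
  simp only [Finset.mul_sum]
  refine Finset.sum_congr rfl fun k _ => Finset.sum_congr rfl fun m _ => ?_
  simp only [expansionCoeff, expansionExponent, pow_add, mul_pow]
  ring

theorem pow_mul_pow_mul_exp_le {A B c : ℝ} {r t s : ℕ} (hA : 0 ≤ A) (hAV : A ≤ V) (hV : 1 ≤ V)
    (hB : 1 ≤ B) (hW : 0 ≤ W) (hr : r ≤ T) (ht : t ≤ T) (hs : s ≤ S) (hc0 : 0 ≤ c)
    (hc : c ≤ Real.exp (s * W)) :
    A ^ r * B ^ t * c ≤ V ^ T * B ^ T * Real.exp (S * W) := by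
  have hA' : A ^ r ≤ V ^ T := (pow_le_pow_left₀ hA hAV r).trans (pow_le_pow_right₀ hV hr)
  have hB' : B ^ t ≤ B ^ T := pow_le_pow_right₀ hB ht
  have hc' : c ≤ Real.exp (S * W) := hc.trans (by gcongr)
  gcongr

theorem pow_twelve_add_one_lt {H : ℕ} (hH : 1 ≤ H) : H ^ 12 + 1 < (H + 1) ^ 12 := by
  calc H ^ 12 + 1 ≤ H ^ 11 * H + H ^ 11 * 1 := by
        rw [← pow_succ, mul_one]
        gcongr
        exact Nat.one_le_pow _ _ hH
    _ = H ^ 11 * (H + 1) := by ring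
    _ < (H + 1) ^ 11 * (H + 1) := by gcongr; exact Nat.lt_succ_self H
    _ = (H + 1) ^ 12 := by ring

theorem pow_twelve_add_one_pow_lt {H a b : ℕ} (hH : 1 ≤ H) (ha : a ≠ 0) (hab : 12 * a ≤ b) :
    (H ^ 12 + 1) ^ a < (H + 1) ^ b := by
  calc (H ^ 12 + 1) ^ a < ((H + 1) ^ 12) ^ a := Nat.pow_lt_pow_left (pow_twelve_add_one_lt hH) ha
    _ ≤ (H + 1) ^ b := by rw [← pow_mul]; exact Nat.pow_le_pow_right H.succ_pos hab

theorem twelve_mul_card_exponents_le (hcard : 12 * (2 * (T + M)) ≤ T * S) :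
    12 * Fintype.card (Fin (T + M) × Fin (2 * T)) ≤ Fintype.card (Fin T × Fin T × Fin S) := by
  simp only [Fintype.card_prod, Fintype.card_fin]
  calc 12 * ((T + M) * (2 * T)) = T * (12 * (2 * (T + M))) := by ring
    _ ≤ T * (T * S) := by gcongr

theorem exists_boxSum_truncated_exp_le (hT : 0 < T) (hl : 0 < l) (hW : 0 < W) (hB : 1 ≤ B)
    (hG : 0 ≤ G) (hWV : (W + G * B) / l ≤ V) (hV : 1 ≤ V)
    (hD : T * T * S * (V ^ T * B ^ T * Real.exp (S * W)) ≤ D)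
    (hcard : 12 * (2 * (T + M)) ≤ T * S) :
    ∃ p : Fin T × Fin T × Fin S → ℤ, p ≠ 0 ∧ (∀ i, |p i| ≤ D ^ 2) ∧
      ∀ w y : ℝ, |w| ≤ W → |y| ≤ B →
        |boxSum p ((w + G * y) / l) y
          (fun s => ∑ m ∈ Finset.range M, ((s : ℕ) * w) ^ m / m.factorial)| ≤ 1 / D ^ 20 := by
  have hS : 0 < S := Nat.pos_of_mul_pos_left (show 0 < T * S by omega)
  have hTTS : (1 : ℝ) ≤ T * T * S := by exact_mod_cast Nat.mul_pos (Nat.mul_pos hT hT) hS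
  set C := V ^ T * B ^ T * Real.exp (S * W)
  have hC : 1 ≤ C := one_le_mul_of_one_le_of_one_le
    (one_le_mul_of_one_le_of_one_le (one_le_pow₀ hV) (one_le_pow₀ hB))
    (Real.one_le_exp (by positivity))
  have hTTSD : (T * T * S : ℝ) ≤ D := (le_mul_of_one_le_right (by positivity) hC).trans hD
  have hD1 : 1 ≤ D := by exact_mod_cast hTTS.trans hTTSD
  have : 0 < B := zero_lt_one.trans_le hB
  have hcE := twelve_mul_card_exponents_le hcard
  obtain ⟨p, hp0, hpD, hp⟩ := exists_int_combination_abs_le (H := D ^ 2) (N := (D ^ 2) ^ 12)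
    (C := C) (c := expansionCoeff G l) (expansionExponent (T := T) (S := S) (M := M))
    (B := fun ε => W ^ (ε.1 : ℕ) * B ^ (ε.2 : ℕ)) (fun ε => by positivity)
    (expansionCoeff_nonneg hG hl.le) (by positivity)
    (fun i => by
      rw [sum_expansionCoeff_mul]
      exact pow_mul_pow_mul_exp_le (by positivity) hWV hV hB hW.le i.1.2.le i.2.1.2.le i.2.2.2.le
        (Finset.sum_nonneg fun m _ => by positivity) (Real.sum_le_exp_of_nonneg (by positivity) M))
    (by positivity)
    (pow_twelve_add_one_pow_lt (Nat.one_le_pow _ _ hD1) (Fintype.card_pos_iff.2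
      ⟨⟨0, by omega⟩, ⟨0, by omega⟩⟩).ne' hcE)
  refine ⟨p, hp0, fun i => by exact_mod_cast hpD i, fun w y hw hy => ?_⟩
  have hsum := hp (fun ε => w ^ (ε.1 : ℕ) * y ^ (ε.2 : ℕ)) fun ε => by
    rw [abs_mul, abs_pow, abs_pow]
    gcongr
  simp only [sum_expansionCoeff_mul] at hsum
  have hcE' : 12 * (Fintype.card (Fin (T + M) × Fin (2 * T)) : ℝ) ≤ T * T * S := by
    rw [mul_assoc]
    exact_mod_cast hcE.trans_eq (by simp)
  refine hsum.trans ?_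
  generalize (Fintype.card (Fin (T + M) × Fin (2 * T)) : ℝ) = n at *
  simp only [Fintype.card_prod, Fintype.card_fin]
  have : (0 : ℝ) < D := by exact_mod_cast hD1
  push_cast
  calc n * (2 * (T * (T * S) * C * D ^ 2) / ((D : ℝ) ^ 2) ^ 12)
      = 2 * n * (T * T * S * C) / (D : ℝ) ^ 22 := by field_simp
    _ ≤ D * D / (D : ℝ) ^ 22 := by
        gcongr
        linarith
    _ = 1 / (D : ℝ) ^ 20 := by field_simp

theorem exists_boxSum_exp_le (hT : 0 < T) (hl : 0 < l) (hW : 0 < W) (hB : 1 ≤ B)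
    (hG : 0 ≤ G) (hWV : (W + G * B) / l ≤ V) (hV : 1 ≤ V) (hρ : 1 ≤ ρ)
    (hD : T * T * S * (V ^ T * B ^ T * Real.exp (S * W)) ≤ D)
    (hcard : 12 * (2 * (T + M)) ≤ T * S) :
    ∃ p : Fin T × Fin T × Fin S → ℤ, p ≠ 0 ∧ (∀ i, |p i| ≤ D ^ 2) ∧
      ∀ w y : ℝ, |w| ≤ W → |y| ≤ B →
        |boxSum p ((w + G * y) / l) y fun s => Real.exp ((s : ℕ) * w)| ≤
          1 / D ^ 20 + D ^ 3 * (Real.exp (ρ * (S * W)) / ρ ^ M) := by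
  obtain ⟨p, hp0, hpD, hp⟩ := exists_boxSum_truncated_exp_le hT hl hW hB hG hWV hV hD hcard
  refine ⟨p, hp0, hpD, fun w y hw hy => ?_⟩
  have hU : |(w + G * y) / l| ≤ V := by
    rw [abs_div, abs_of_pos hl]
    refine le_trans ?_ hWV
    gcongr
    exact (abs_add_le _ _).trans (by rw [abs_mul, abs_of_nonneg hG]; gcongr)
  have htail (s : Fin S) : ‖Real.exp ((s : ℕ) * w) -
      ∑ m ∈ Finset.range M, ((s : ℕ) * w) ^ m / m.factorial‖ ≤ Real.exp (ρ * (S * W)) / ρ ^ M := by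
    refine abs_exp_sub_sum_le_exp_mul_div M ?_ hρ
    rw [abs_mul, Nat.abs_cast]
    gcongr
    exact s.2.le
  have herr := norm_boxSum_le (p := p) (H := D ^ 2) (fun i => by exact_mod_cast hpD i) hV hU hB hy
    htail
  rw [boxSum_sub, Real.norm_eq_abs] at herr
  set tail := Real.exp (ρ * (S * W)) / ρ ^ M
  have hD' : T * T * S * (V ^ T * B ^ T) ≤ (D : ℝ) :=
    (mul_le_mul_of_nonneg_left (le_mul_of_one_le_right (by positivity)
      (Real.one_le_exp (by positivity))) (by positivity)).trans hD
  have : 0 ≤ tail := by positivity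
  calc _ ≤ _ := sub_le_iff_le_add'.1 ((abs_sub_abs_le_abs_sub _ _).trans herr)
    _ ≤ 1 / (D : ℝ) ^ 20 + T * T * S * (V ^ T * B ^ T) * (D ^ 2 * tail) := by
        rw [← sub_nonneg]
        have := hp w y hw hy
        linarith
    _ ≤ 1 / (D : ℝ) ^ 20 + D * (D ^ 2 * tail) := by gcongr
    _ = _ := by ring

end AuxiliaryFunction

section House

variable {K : IntermediateField ℚ ℝ} {B C z w : ℝ}

/-- `z` is an algebraic integer of `K` whose conjugates all have absolute value at most `B`. -/
def HouseLE (K : IntermediateField ℚ ℝ) (B z : ℝ) : Prop :=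
  ∃ u : K, (u : ℝ) = z ∧ IsIntegral ℤ u ∧ ∀ σ : K →ₐ[ℚ] ℂ, ‖σ u‖ ≤ B

theorem exists_algHom_norm_eq_abs (K : IntermediateField ℚ ℝ) :
    ∃ σ : K →ₐ[ℚ] ℂ, ∀ u : K, ‖σ u‖ = |(u : ℝ)| :=
  ⟨(Complex.ofRealAm.restrictScalars ℚ).comp K.val, fun u => Complex.norm_real u⟩

namespace HouseLE

theorem mono (hz : HouseLE K B z) (hBC : B ≤ C) : HouseLE K C z :=
  let ⟨u, hu, hint, hσ⟩ := hz
  ⟨u, hu, hint, fun σ => (hσ σ).trans hBC⟩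

theorem add (hz : HouseLE K B z) (hw : HouseLE K C w) : HouseLE K (B + C) (z + w) := by
  obtain ⟨u, rfl, hu, hσu⟩ := hz
  obtain ⟨v, rfl, hv, hσv⟩ := hw
  refine ⟨u + v, rfl, hu.add hv, fun σ => ?_⟩
  rw [map_add]
  exact norm_add_le_of_le (hσu σ) (hσv σ)

theorem mul (hz : HouseLE K B z) (hw : HouseLE K C w) : HouseLE K (B * C) (z * w) := by
  obtain ⟨u, rfl, hu, hσu⟩ := hz
  obtain ⟨v, rfl, hv, hσv⟩ := hw
  refine ⟨u * v, rfl, hu.mul hv, fun σ => ?_⟩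
  rw [map_mul]
  exact norm_mul_le_of_le (hσu σ) (hσv σ)

theorem intCast (K : IntermediateField ℚ ℝ) (n : ℤ) : HouseLE K |(n : ℝ)| n :=
  ⟨n, by simp, isIntegral_algebraMap (R := ℤ) (x := n), fun σ => by simp⟩

theorem one : HouseLE K 1 1 := by
  simpa using intCast K 1

theorem pow (hz : HouseLE K B z) (n : ℕ) : HouseLE K (B ^ n) (z ^ n) := by
  induction n with
  | zero => simpa using intCast K 1
  | succ n ih => simpa only [pow_succ] using ih.mul hz

theorem abs_le (hz : HouseLE K B z) : |z| ≤ B := by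
  obtain ⟨u, rfl, -, hσ⟩ := hz
  obtain ⟨σ₀, hσ₀⟩ := exists_algHom_norm_eq_abs K
  exact (hσ₀ u).symm.trans_le (hσ σ₀)

theorem boxSum {S T : ℕ} {p : Fin T × Fin T × Fin S → ℤ} {H A E : ℝ} {U V : ℤ} {f : Fin S → ℝ}
    (hp : ∀ i, |(p i : ℝ)| ≤ H) (hA : 1 ≤ A) (hU : |(U : ℝ)| ≤ A) (hB : 1 ≤ B)
    (hV : |(V : ℝ)| ≤ B) (hf : ∀ s, HouseLE K E (f s)) :
    HouseLE K (T * T * S * (A ^ T * B ^ T * E) * H) (boxSum p (U : ℝ) V f) := by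
  choose F hF hint hσ using hf
  refine ⟨_root_.boxSum p (U : K) V F, ?_, ?_, fun σ => ?_⟩
  · have h := map_boxSum p (algebraMap K ℝ) U V F
    simp only [map_intCast] at h
    exact h.trans (congrArg _ (funext hF))
  · exact isIntegral_boxSum p (isIntegral_algebraMap (R := ℤ) (x := U))
      (isIntegral_algebraMap (R := ℤ) (x := V)) hint
  · have h := map_boxSum p (σ : K →+* ℂ) U V F
    simp only [map_intCast, RingHom.coe_coe] at h
    rw [h]
    exact norm_boxSum_le hp hA (by simpa using hU) hB (by simpa using hV) fun s => hσ s σ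

/-- Liouville's inequality: the norm of a nonzero algebraic integer is a nonzero integer. -/
theorem one_le_abs_mul_pow [FiniteDimensional ℚ K] {d : ℕ} (hK : Module.finrank ℚ K ≤ d + 1)
    (hz : HouseLE K B z) (hz0 : z ≠ 0) (hB : 1 ≤ B) : 1 ≤ |z| * B ^ d := by
  classical
  obtain ⟨u, rfl, hint, hσ⟩ := hz
  obtain ⟨N, hN⟩ := IsIntegrallyClosed.isIntegral_iff.1 (Algebra.isIntegral_norm ℚ hint)
  have hN0 : N ≠ 0 := by
    rintro rfl
    rw [map_zero] at hN
    exact hz0 (by simp [Algebra.norm_eq_zero_iff.1 hN.symm])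
  obtain ⟨σ₀, hσ₀⟩ := exists_algHom_norm_eq_abs K
  have hnorm : (1 : ℝ) ≤ ‖∏ σ : K →ₐ[ℚ] ℂ, σ u‖ := by
    rw [← Algebra.norm_eq_prod_embeddings ℚ ℂ u, ← hN]
    simp only [algebraMap_int_eq, eq_intCast, map_intCast, Complex.norm_intCast]
    exact_mod_cast Int.one_le_abs hN0
  rw [norm_prod, ← Finset.mul_prod_erase _ _ (Finset.mem_univ σ₀), hσ₀] at hnorm
  have hcard : (Finset.univ.erase σ₀).card ≤ d := by
    rw [Finset.card_erase_of_mem (Finset.mem_univ _), Finset.card_univ, AlgHom.card]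
    omega
  refine hnorm.trans (mul_le_mul_of_nonneg_left ?_ (abs_nonneg _))
  calc ∏ σ ∈ Finset.univ.erase σ₀, ‖σ u‖ ≤ ∏ _σ ∈ Finset.univ.erase σ₀, B :=
        Finset.prod_le_prod (fun _ _ => norm_nonneg _) fun _ _ => hσ _
    _ = B ^ (Finset.univ.erase σ₀).card := Finset.prod_const _
    _ ≤ B ^ d := pow_le_pow_right₀ hB hcard

end HouseLE

end House

section LogForm

/-- Numbers `u` and `v` that can serve as the constant term `log u - log v` of a logarithmic form
over `K`: `exp h` bounds their houses and the quotients `u / v` and `v / u`. -/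
structure AdmissiblePair (K : IntermediateField ℚ ℝ) (h : ℕ) (u v : ℝ) : Prop where
  u_pos : 0 < u
  v_pos : 0 < v
  house_u : HouseLE K (Real.exp h) u
  house_v : HouseLE K (Real.exp h) v
  abs_log_sub_le : |Real.log u - Real.log v| ≤ h

/-- The data of the linear form `log u - log v + x * log a - y * log b` in logarithms of algebraic
integers of `K`, in which `x` and `y` are left free. The house of `a` and of `b` is the number
itself. -/
structure LogForm (K : IntermediateField ℚ ℝ) where
  (a b u v : ℝ)
  h : ℕ
  one_lt_a : 1 < a
  one_lt_b : 1 < b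
  house_a : HouseLE K a a
  house_b : HouseLE K b b
  admissible : AdmissiblePair K h u v

namespace LogForm

variable {K : IntermediateField ℚ ℝ} (P : LogForm K)

/-- The value of the linear form at `(x, y)`. -/
noncomputable def value (x y : ℕ) : ℝ :=
  Real.log P.u - Real.log P.v + x * Real.log P.a - y * Real.log P.b

/-- The logarithm of the monomial `a ^ i * b ^ j * (u / v) ^ k`, as a homomorphism in
`(i, j, k)`. -/
noncomputable def logMonomial : ℕ × ℕ × ℕ →+ ℝ where
  toFun i := i.1 * Real.log P.a + i.2.1 * Real.log P.b + i.2.2 * (Real.log P.u - Real.log P.v)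
  map_zero' := by simp
  map_add' i j := by
    simp only [Prod.fst_add, Prod.snd_add, Nat.cast_add]
    ring

/-- The monomial `a ^ i * b ^ j * (u / v) ^ k`, as a character of the monoid of the
`(i, j, k)`. -/
noncomputable def monomial : Multiplicative (ℕ × ℕ × ℕ) →* ℝˣ :=
  Real.expMonoidHom.toHomUnits.comp P.logMonomial.toMultiplicative

/-- An upper bound for `P.logMonomial` and for the logarithm of the house of the monomial once its
denominator is cleared. -/
noncomputable def height (i : ℕ × ℕ × ℕ) : ℝ :=
  i.1 * Real.log P.a + i.2.1 * Real.log P.b + i.2.2 * P.h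

theorem coe_monomial_ofAdd (i : ℕ × ℕ × ℕ) :
    (P.monomial (.ofAdd i) : ℝ) = Real.exp (P.logMonomial i) := rfl

theorem logMonomial_eq_add_mul_value (x y : ℕ) (i : ℕ × ℕ × ℕ) :
    P.logMonomial i =
      Real.log P.a * latticeX x i + Real.log P.b * latticeY y i + i.2.2 * P.value x y := by
  obtain ⟨i, j, k⟩ := i
  simp only [logMonomial, value, latticeX_apply, latticeY_apply, AddMonoidHom.coe_mk,
    ZeroHom.coe_mk]
  push_cast
  ring

theorem not_isOfFinOrder_monomial : ¬ IsOfFinOrder (P.monomial (.ofAdd (1, 0, 0))) := by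
  rw [isOfFinOrder_iff_pow_eq_one]
  rintro ⟨n, hn, h⟩
  have h' := congrArg Units.val h
  rw [Units.val_pow_eq_pow_val, coe_monomial_ofAdd, Units.val_one] at h'
  have : 0 < P.logMonomial (1, 0, 0) := by
    simpa [logMonomial] using Real.log_pos P.one_lt_a
  exact (one_lt_pow₀ (Real.one_lt_exp_iff.2 this) hn.ne').ne' h'

theorem log_a_pos : 0 < Real.log P.a := Real.log_pos P.one_lt_a

theorem log_b_pos : 0 < Real.log P.b := Real.log_pos P.one_lt_b

theorem abs_logMonomial_le (i : ℕ × ℕ × ℕ) : |P.logMonomial i| ≤ P.height i := by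
  have ha := P.log_a_pos.le
  have hb := P.log_b_pos.le
  calc |P.logMonomial i| ≤ |i.1 * Real.log P.a + i.2.1 * Real.log P.b| +
          |i.2.2 * (Real.log P.u - Real.log P.v)| := abs_add_le _ _
    _ ≤ P.height i := by
      rw [abs_of_nonneg (by positivity), abs_mul, Nat.abs_cast]
      unfold height
      gcongr
      exact P.admissible.abs_log_sub_le

theorem height_mono : Monotone P.height := by
  rintro ⟨i, j, k⟩ ⟨i', j', k'⟩ ⟨hi, hj, hk⟩
  have ha := P.log_a_pos.le
  have hb := P.log_b_pos.le
  unfold height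
  gcongr

theorem exp_logMonomial (i : ℕ × ℕ × ℕ) :
    Real.exp (P.logMonomial i) = P.a ^ i.1 * P.b ^ i.2.1 * (P.u / P.v) ^ i.2.2 := by
  simp only [logMonomial, AddMonoidHom.coe_mk, ZeroHom.coe_mk, Real.exp_add, Real.exp_nat_mul,
    Real.exp_sub, Real.exp_log P.admissible.u_pos, Real.exp_log P.admissible.v_pos,
    Real.exp_log (zero_lt_one.trans P.one_lt_a), Real.exp_log (zero_lt_one.trans P.one_lt_b)]

theorem houseLE_monomial_pow {s S : ℕ} (hs : s < S) (i : ℕ × ℕ × ℕ) :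
    HouseLE K (Real.exp (S * P.height i))
      (P.v ^ (i.2.2 * (S - 1)) * Real.exp (P.logMonomial i) ^ s) := by
  obtain ⟨i, j, k⟩ := i
  have hv := P.admissible.v_pos.ne'
  have ha : HouseLE K (Real.exp (Real.log P.a)) P.a := by
    rw [Real.exp_log (zero_lt_one.trans P.one_lt_a)]
    exact P.house_a
  have hb : HouseLE K (Real.exp (Real.log P.b)) P.b := by
    rw [Real.exp_log (zero_lt_one.trans P.one_lt_b)]
    exact P.house_b
  have hsplit : S - 1 = s + (S - 1 - s) := by omega
  have hclear : P.v ^ (k * (S - 1)) * Real.exp (P.logMonomial (i, j, k)) ^ s =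
      P.a ^ (i * s) * P.b ^ (j * s) * (P.u ^ (k * s) * P.v ^ (k * (S - 1 - s))) := by
    rw [exp_logMonomial, hsplit, mul_add, pow_add, mul_pow, mul_pow, ← pow_mul, ← pow_mul,
      ← pow_mul, div_pow, ← hsplit]
    field_simp
  rw [hclear]
  have huv := (P.admissible.house_u.pow (k * s)).mul (P.admissible.house_v.pow (k * (S - 1 - s)))
  refine (((ha.pow _).mul (hb.pow _)).mul huv).mono ?_
  simp only [← Real.exp_nat_mul, ← Real.exp_add, height]
  have hsS : (s : ℝ) ≤ S := by exact_mod_cast hs.le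
  have hsS' : (s : ℝ) + (S - 1 - s : ℕ) ≤ S := by exact_mod_cast (by omega : s + (S - 1 - s) ≤ S)
  have ha0 := P.log_a_pos.le
  have hb0 := P.log_b_pos.le
  gcongr
  push_cast
  calc _ = s * (i * Real.log P.a + j * Real.log P.b) + (s + (S - 1 - s : ℕ)) * (k * P.h) := by ring
    _ ≤ S * (i * Real.log P.a + j * Real.log P.b) + S * (k * P.h) := by gcongr
    _ = _ := by ring

variable {S T D : ℕ} {p : Fin T × Fin T × Fin S → ℤ} {x y : ℕ} {U Y : ℤ} {A B W : ℝ}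
  {i : ℕ × ℕ × ℕ}

theorem boxSum_monomial_eq_zero_or_le [FiniteDimensional ℚ K] (hK : Module.finrank ℚ K ≤ 6)
    (hT : 0 < T) (hS : 0 < S) (hp : ∀ i, |p i| ≤ D ^ 2) (hA : 1 ≤ A) (hU : |(U : ℝ)| ≤ A)
    (hB : 1 ≤ B) (hY : |(Y : ℝ)| ≤ B)
    (hD : T * T * S * (A ^ T * B ^ T * Real.exp (S * P.height i)) ≤ D) :
    boxSum p (U : ℝ) Y (fun s => Real.exp (P.logMonomial i) ^ (s : ℕ)) = 0 ∨
      1 ≤ D ^ 16 * |boxSum p (U : ℝ) Y fun s => Real.exp (P.logMonomial i) ^ (s : ℕ)| := by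
  set z := boxSum p (U : ℝ) Y fun s => Real.exp (P.logMonomial i) ^ (s : ℕ)
  set N := i.2.2 * (S - 1)
  have hTTS : (1 : ℝ) ≤ T * T * S := by exact_mod_cast Nat.mul_pos (Nat.mul_pos hT hT) hS
  have hexpD : Real.exp (S * P.height i) ≤ D :=
    calc Real.exp (S * P.height i) ≤ A ^ T * B ^ T * Real.exp (S * P.height i) :=
          le_mul_of_one_le_left (Real.exp_pos _).le
            (one_le_mul_of_one_le_of_one_le (one_le_pow₀ hA) (one_le_pow₀ hB))
      _ ≤ T * T * S * (A ^ T * B ^ T * Real.exp (S * P.height i)) :=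
          le_mul_of_one_le_left (by positivity) hTTS
      _ ≤ D := hD
  have hvD : P.v ^ N ≤ D := by
    have h := (P.houseLE_monomial_pow hS i).abs_le
    rw [pow_zero, mul_one, abs_of_pos (pow_pos P.admissible.v_pos _)] at h
    exact h.trans hexpD
  have hD1 : (1 : ℝ) ≤ D := (Real.one_le_exp (mul_nonneg S.cast_nonneg
    ((abs_nonneg _).trans (P.abs_logMonomial_le i)))).trans hexpD
  have hhouse : HouseLE K (D ^ 3) (P.v ^ N * z) := by
    rw [← boxSum_mul_left]
    refine (HouseLE.boxSum (H := D ^ 2) (fun i => by exact_mod_cast hp i) hA hU hB hY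
      fun s => P.houseLE_monomial_pow s.2 i).mono ?_
    rw [pow_succ' _ 2]
    gcongr
  refine or_iff_not_imp_left.2 fun hz => ?_
  calc 1 ≤ |P.v ^ N * z| * ((D : ℝ) ^ 3) ^ 5 := hhouse.one_le_abs_mul_pow hK
        (mul_ne_zero (pow_pos P.admissible.v_pos _).ne' hz) (one_le_pow₀ hD1)
    _ = P.v ^ N * |z| * ((D : ℝ) ^ 3) ^ 5 := by
        rw [abs_mul, abs_of_pos (pow_pos P.admissible.v_pos _)]
    _ ≤ D * |z| * ((D : ℝ) ^ 3) ^ 5 := by gcongr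
    _ = D ^ 16 * |z| := by ring

theorem abs_linear_form_le (hW : P.height i + i.2.2 * |P.value x y| ≤ W) :
    |Real.log P.a * latticeX x i + Real.log P.b * latticeY y i| ≤ W := by
  rw [← sub_eq_iff_eq_add.2 (P.logMonomial_eq_add_mul_value x y i)]
  refine (abs_sub _ _).trans (le_trans ?_ hW)
  rw [abs_mul, Nat.abs_cast]
  gcongr
  exact P.abs_logMonomial_le i

theorem abs_exp_logMonomial_pow_sub_le {s : ℕ} (hs : s ≤ S)
    (hW : P.height i + i.2.2 * |P.value x y| ≤ W) (hsmall : S * i.2.2 * |P.value x y| ≤ 1) :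
    |Real.exp (P.logMonomial i) ^ s -
        Real.exp (s * (Real.log P.a * latticeX x i + Real.log P.b * latticeY y i))| ≤
      Real.exp (S * W) * (2 * (S * i.2.2 * |P.value x y|)) := by
  set w := Real.log P.a * latticeX x i + Real.log P.b * latticeY y i
  have hw : |w| ≤ W := P.abs_linear_form_le hW
  have hs' : (s : ℝ) ≤ S := by exact_mod_cast hs
  have hsmall' : |s * (i.2.2 * P.value x y)| ≤ S * i.2.2 * |P.value x y| := by
    rw [abs_mul, abs_mul, Nat.abs_cast, Nat.abs_cast, ← mul_assoc]
    gcongr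
  have hexp : s * w ≤ S * W := by
    have := (abs_nonneg w).trans hw
    calc s * w ≤ s * W := by gcongr; exact (le_abs_self w).trans hw
      _ ≤ S * W := by gcongr
  rw [← Real.exp_nat_mul, P.logMonomial_eq_add_mul_value x y, mul_add, Real.exp_add,
    ← mul_sub_one, abs_mul, Real.abs_exp]
  gcongr
  exact (Real.abs_exp_sub_one_le (hsmall'.trans hsmall)).trans (by gcongr)

theorem abs_boxSum_monomial_sub_le (hp : ∀ i, |p i| ≤ D ^ 2) (hA : 1 ≤ A) (hU : |(U : ℝ)| ≤ A)
    (hB : 1 ≤ B) (hY : |(Y : ℝ)| ≤ B) (hW : P.height i + i.2.2 * |P.value x y| ≤ W)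
    (hD : T * T * S * (A ^ T * B ^ T * Real.exp (S * W)) ≤ D)
    (hsmall : S * i.2.2 * |P.value x y| ≤ 1) :
    |boxSum p (U : ℝ) Y (fun s => Real.exp (P.logMonomial i) ^ (s : ℕ)) -
        boxSum p (U : ℝ) Y fun s => Real.exp
          ((s : ℕ) * (Real.log P.a * latticeX x i + Real.log P.b * latticeY y i))| ≤
      D ^ 3 * (2 * (S * i.2.2 * |P.value x y|)) := by
  rw [← boxSum_sub, ← Real.norm_eq_abs]
  refine (norm_boxSum_le (H := D ^ 2) (fun i => by exact_mod_cast hp i) hA hU hB hY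
    fun s => P.abs_exp_logMonomial_pow_sub_le s.2.le hW hsmall).trans ?_
  calc _ = T * T * S * (A ^ T * B ^ T * Real.exp (S * W)) *
        (D ^ 2 * (2 * (S * i.2.2 * |P.value x y|))) := by ring
    _ ≤ D * (D ^ 2 * (2 * (S * i.2.2 * |P.value x y|))) := by gcongr
    _ = _ := by ring

theorem abs_latticeY_le {n : ℕ × ℕ × ℕ} (hi : i ≤ n) (hB : n.2.1 + n.2.2 * y ≤ B) :
    |(latticeY y i : ℝ)| ≤ B := by
  obtain ⟨i, j, k⟩ := i
  obtain ⟨-, hj, hk⟩ := hi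
  rw [latticeY_apply]
  push_cast
  rw [abs_of_nonneg (by positivity)]
  refine le_trans ?_ hB
  gcongr

theorem div_log_eq_add_mul (g X Y : ℝ) :
    (Real.log P.a * X + Real.log P.b * Y + (Real.log P.a * g - Real.log P.b) * Y) / Real.log P.a =
      X + g * Y := by
  have := P.log_a_pos.ne'
  field_simp
  ring

theorem abs_add_mul_le {X Y V g : ℝ} (hw : |Real.log P.a * X + Real.log P.b * Y| ≤ W)
    (hY : |Y| ≤ B) (hg : 0 ≤ Real.log P.a * g - Real.log P.b)
    (hV : (W + (Real.log P.a * g - Real.log P.b) * B) / Real.log P.a ≤ V) : |X + g * Y| ≤ V := by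
  have := P.log_a_pos
  rw [← P.div_log_eq_add_mul, abs_div, abs_of_pos P.log_a_pos]
  refine le_trans ?_ hV
  gcongr
  refine (abs_add_le _ _).trans (add_le_add hw ?_)
  rw [abs_mul, abs_of_nonneg hg]
  gcongr

theorem pow_sixteen_mul_lt_one {D t s : ℝ} (hD : 2 ≤ D) (ht : D ^ 19 * t ≤ 1 / 4)
    (hs : D ^ 19 * s ≤ 1 / 4) : D ^ 16 * (D ^ 3 * s + (1 / D ^ 20 + D ^ 3 * t)) < 1 := by
  have : 0 < D := by linarith
  have hD4 : 1 / D ^ 4 ≤ 1 / 4 :=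
    one_div_le_one_div_of_le (by norm_num) ((by norm_num : (4 : ℝ) ≤ 2 ^ 4).trans (by gcongr))
  calc D ^ 16 * (D ^ 3 * s + (1 / D ^ 20 + D ^ 3 * t)) = D ^ 19 * s + (1 / D ^ 4 + D ^ 19 * t) := by
        field_simp
    _ < 1 := by linarith

/-- The auxiliary polynomial: it is small at every monomial up to `n`, because there the linear form
is small, and by Liouville's inequality too small to be nonzero. -/
theorem exists_boxSum_monomial_eq_zero [FiniteDimensional ℚ K] (hK : Module.finrank ℚ K ≤ 6)
    {M g : ℕ} {n : ℕ × ℕ × ℕ} {V ρ : ℝ} (hT : 0 < T) (hS : 0 < S) (hB : 1 ≤ B)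
    (hg : 0 ≤ Real.log P.a * g - Real.log P.b)
    (hV : (W + (Real.log P.a * g - Real.log P.b) * B) / Real.log P.a ≤ V)
    (hV1 : 1 ≤ V) (hρ : 1 ≤ ρ) (hW0 : 0 < W) (hW : P.height n + n.2.2 * |P.value x y| ≤ W)
    (hBy : n.2.1 + n.2.2 * y ≤ B)
    (hD : T * T * S * (V ^ T * B ^ T * Real.exp (S * W)) ≤ D) (hD2 : 2 ≤ D)
    (hcard : 12 * (2 * (T + M)) ≤ T * S)
    (htail : (D : ℝ) ^ 19 * (Real.exp (ρ * (S * W)) / ρ ^ M) ≤ 1 / 4)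
    (hsmall : (D : ℝ) ^ 19 * (2 * (S * n.2.2 * |P.value x y|)) ≤ 1 / 4) :
    ∃ p : Fin T × Fin T × Fin S → ℤ, p ≠ 0 ∧ ∀ i ≤ n,
      boxSum p (latticeX x i + g * latticeY y i : ℝ) (latticeY y i)
        (fun s => Real.exp (P.logMonomial i) ^ (s : ℕ)) = 0 := by
  obtain ⟨p, hp0, hpD, hp⟩ := exists_boxSum_exp_le hT P.log_a_pos hW0 hB hg hV hV1 hρ hD hcard
  refine ⟨p, hp0, fun i hi => ?_⟩
  have hD2' : (2 : ℝ) ≤ D := by exact_mod_cast hD2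
  have hk : (i.2.2 : ℝ) ≤ n.2.2 := by exact_mod_cast hi.2.2
  have hWi : P.height i + i.2.2 * |P.value x y| ≤ W :=
    le_trans (by gcongr; exact P.height_mono hi) hW
  have hw := P.abs_linear_form_le hWi
  have hY := abs_latticeY_le hi hBy
  have hU := P.abs_add_mul_le hw hY hg hV
  set X := (latticeX x i : ℝ)
  set Y := (latticeY y i : ℝ)
  have hcast : X + g * Y = (latticeX x i + g * latticeY y i : ℤ) := by push_cast; rfl
  rw [hcast] at hU ⊢
  have hDi : T * T * S * (V ^ T * B ^ T * Real.exp (S * P.height i)) ≤ D := by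
    refine le_trans ?_ hD
    have : P.height i ≤ W := (le_add_of_nonneg_right (by positivity)).trans hWi
    gcongr
  have hsmall' : S * n.2.2 * |P.value x y| ≤ 1 := by
    have h := le_mul_of_one_le_left (by positivity : 0 ≤ 2 * (S * n.2.2 * |P.value x y|))
      (one_le_pow₀ (one_le_two.trans hD2') : (1 : ℝ) ≤ D ^ 19)
    linarith
  have hsum := hp _ Y hw hY
  rw [P.div_log_eq_add_mul, hcast] at hsum
  have hdiff := P.abs_boxSum_monomial_sub_le hpD hV1 hU hB hY hWi hD
    (le_trans (by gcongr) hsmall')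
  refine (P.boxSum_monomial_eq_zero_or_le hK hT hS hpD hV1 hU hB hY hDi).resolve_right
    (not_le.2 (lt_of_le_of_lt ?_ (pow_sixteen_mul_lt_one hD2' htail hsmall)))
  gcongr
  refine (sub_le_iff_le_add.1 (abs_sub_abs_le_abs_sub _ _)).trans (add_le_add (hdiff.trans ?_) hsum)
  gcongr

end LogForm

end LogForm

section LinearFormBound

theorem injOn_latticeX_add_mul_latticeY {L a c g x y : ℕ} (hg : L + c * x ≤ g) (hay : a ≤ y) :
    Set.InjOn (latticeX x + g • latticeY y)
      (Finset.range L ×ˢ Finset.range a ×ˢ Finset.range c : Finset (ℕ × ℕ × ℕ)) := by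
  rintro ⟨i, j, k⟩ hi ⟨i', j', k'⟩ hi' h
  simp only [Finset.mem_coe, Finset.mem_product, Finset.mem_range] at hi hi'
  simp only [AddMonoidHom.add_apply, AddMonoidHom.nsmul_apply, latticeX_apply, latticeY_apply,
    nsmul_eq_mul] at h
  have hlt {i k : ℕ} (hi : i < L) (hk : k < c) : i + k * x < g :=
    (add_lt_add_of_lt_of_le hi (Nat.mul_le_mul_right x hk.le)).trans_le hg
  have hsum : (i + k' * x) + (j + k * y) * g = (i' + k * x) + (j' + k' * y) * g := by
    zify
    linear_combination h
  obtain ⟨hX, hY⟩ :=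
    eq_and_eq_of_add_mul_eq_add_mul (hlt hi.1 hi'.2.2) (hlt hi'.1 hi.2.2) hsum
  obtain ⟨rfl, rfl⟩ :=
    eq_and_eq_of_add_mul_eq_add_mul (hi.2.1.trans_le hay) (hi'.2.1.trans_le hay) hY
  rw [Nat.add_right_cancel hX]

theorem exists_nat_exp_le_and_pow_le {Q : ℝ} (hQ : 1 ≤ Q) :
    ∃ D : ℕ, Real.exp (19201 * Q) ≤ D ∧ (D : ℝ) ^ 19 ≤ Real.exp (364838 * Q) := by
  refine ⟨⌈Real.exp (19201 * Q)⌉₊, Nat.le_ceil _, ?_⟩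
  have hle : (⌈Real.exp (19201 * Q)⌉₊ : ℝ) ≤ Real.exp (19202 * Q) :=
    calc (⌈Real.exp (19201 * Q)⌉₊ : ℝ) ≤ Real.exp (19201 * Q) + 1 :=
          (Nat.ceil_lt_add_one (Real.exp_pos _).le).le
      _ ≤ Real.exp (19201 * Q) + Real.exp (19201 * Q) * Q := by
          gcongr
          exact one_le_mul_of_one_le_of_one_le (Real.one_le_exp (by positivity)) hQ
      _ = Real.exp (19201 * Q) * (Q + 1) := by ring
      _ ≤ Real.exp (19201 * Q) * Real.exp Q := by gcongr; exact Real.add_one_le_exp Q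
      _ = Real.exp (19202 * Q) := by rw [← Real.exp_add]; ring_nf
  calc (⌈Real.exp (19201 * Q)⌉₊ : ℝ) ^ 19 ≤ Real.exp (19202 * Q) ^ 19 := by gcongr
    _ = Real.exp (364838 * Q) := by rw [← Real.exp_nat_mul]; push_cast; ring_nf

theorem mul_cube_le_exp {Q : ℝ} (hQ : 2 * 10 ^ 14 ≤ Q) : 10 ^ 11 * Q ^ 3 ≤ Real.exp Q :=
  calc 10 ^ 11 * Q ^ 3 ≤ Q / 24 * Q ^ 3 := by gcongr; linarith
    _ = Q ^ 4 / (Nat.factorial 4) := by norm_num [Nat.factorial]; ring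
    _ ≤ Real.exp Q := Real.pow_div_factorial_le_exp Q (by linarith) 4

theorem size_mul_size_mul_exp_le_exp {L ℓ : ℕ} (hQ : 2 * 10 ^ 14 ≤ (ℓ * L : ℝ))
    (hLQ : (L : ℝ) ≤ ℓ * L) :
    ((2000 * L : ℕ) * (2000 * L : ℕ) * (2400 * ℓ : ℕ) : ℝ) *
      ((Real.exp ℓ ^ 4) ^ (2000 * L) * (Real.exp ℓ ^ 2) ^ (2000 * L) *
        Real.exp (7200 * (ℓ * L))) ≤ Real.exp (19201 * (ℓ * L)) := by
  set Q : ℝ := ℓ * L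
  calc ((2000 * L : ℕ) * (2000 * L : ℕ) * (2400 * ℓ : ℕ) : ℝ) *
        ((Real.exp ℓ ^ 4) ^ (2000 * L) * (Real.exp ℓ ^ 2) ^ (2000 * L) * Real.exp (7200 * Q))
      = 9.6 * 10 ^ 9 * (L * Q) * 1 * Real.exp (19200 * Q) := by
        simp only [Q, ← Real.exp_nat_mul, ← Real.exp_add]
        push_cast
        ring_nf
    _ ≤ 10 ^ 11 * (Q * Q) * Q * Real.exp (19200 * Q) := by
        gcongr
        · norm_num
        · linarith
    _ = 10 ^ 11 * Q ^ 3 * Real.exp (19200 * Q) := by ring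
    _ ≤ Real.exp Q * Real.exp (19200 * Q) := by gcongr; exact mul_cube_le_exp hQ
    _ = Real.exp (19201 * Q) := by rw [← Real.exp_add]; ring_nf

theorem mul_le_one_of_le_exp_neg {t c z : ℝ} (hct : c ≤ t) (hc : 0 ≤ c)
    (hz : z ≤ Real.exp (-t)) : c * z ≤ 1 :=
  calc c * z ≤ c * Real.exp (-t) := by gcongr
    _ ≤ Real.exp t * Real.exp (-t) := by gcongr; linarith [Real.add_one_le_exp t]
    _ = 1 := by rw [← Real.exp_add, add_neg_cancel, Real.exp_zero]

theorem exp_mul_tail_le {Q : ℝ} (hQ : 1 ≤ Q) {M : ℕ} (hM : (M : ℝ) = 198000 * Q) :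
    Real.exp (364838 * Q) * (Real.exp (Real.exp 3 * (7200 * Q)) / Real.exp 3 ^ M) ≤ 1 / 4 := by
  have hexp3 : Real.exp 3 ≤ 20.1 :=
    calc Real.exp 3 = Real.exp 1 ^ 3 := by rw [← Real.exp_nat_mul]; norm_num
      _ ≤ 2.7182818286 ^ 3 := by gcongr; exact Real.exp_one_lt_d9.le
      _ ≤ _ := by norm_num
  calc Real.exp (364838 * Q) * (Real.exp (Real.exp 3 * (7200 * Q)) / Real.exp 3 ^ M)
      = Real.exp (364838 * Q + (Real.exp 3 * (7200 * Q) - M * 3)) := by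
        rw [Real.exp_add, Real.exp_sub, Real.exp_nat_mul]
    _ ≤ Real.exp (-(84442 * Q)) := by
        rw [hM, Real.exp_le_exp]
        have : Real.exp 3 * (7200 * Q) ≤ 20.1 * (7200 * Q) := by gcongr
        linarith
    _ ≤ 1 / 4 := by
        rw [Real.exp_neg, ← one_div]
        exact one_div_le_one_div_of_le (by norm_num) (by linarith [Real.add_one_le_exp (84442 * Q)])

theorem exp_mul_mul_exp_neg_le {Q : ℝ} (hQ : 1 ≤ Q) :
    Real.exp (364838 * Q) * (2 * (2400 * Q * Real.exp (-(365000 * Q)))) ≤ 1 / 4 := by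
  have : 0 < Q := by linarith
  have hpow := Real.pow_div_factorial_le_exp (162 * Q) (by linarith) 4
  have hfour : (Nat.factorial 4 : ℝ) = 24 := by norm_num [Nat.factorial]
  have hQ4 : Q ≤ Q ^ 4 := le_self_pow₀ hQ (by norm_num)
  calc Real.exp (364838 * Q) * (2 * (2400 * Q * Real.exp (-(365000 * Q))))
      = 4800 * Q / Real.exp (162 * Q) := by
        rw [show 162 * Q = 365000 * Q - 364838 * Q by ring, Real.exp_sub, Real.exp_neg]
        field_simp
        ring
    _ ≤ 1 / 4 := by
        rw [div_le_iff₀ (Real.exp_pos _)]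
        rw [hfour, mul_pow] at hpow
        linarith

namespace LogForm

variable {K : IntermediateField ℚ ℝ} (P : LogForm K) {S T L L₃ a c g q₀ x y ℓ : ℕ}

theorem eq_zero_of_boxSum_monomial_eq_zero {p : Fin T × Fin T × Fin S → ℤ} (hS : 0 < S)
    (hT : 0 < T) (haL : a ≤ L) (hac : 2 * S * T < a * c) (hLL : 2 * S * T < L * L)
    (hLq : 2 * S * T < L * (q₀ + 1)) (hLLc : 2 * (2 * S * T) * (2 * S * T) < L * (2 * L * c))
    (hLy : 2 * L ≤ y) (hg : L + c * x ≤ g)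
    (hxy : ∀ q : ℕ, 1 ≤ q → q ≤ q₀ → ∀ r : ℤ, (q * a : ℤ) ≤ |q * x - r * y|)
    (hp : ∀ i ≤ (2 * L + S, 3 * L, 2 * c), boxSum p (latticeX x i + g * latticeY y i : ℝ)
      (latticeY y i) (fun s => Real.exp (P.logMonomial i) ^ (s : ℕ)) = 0) : p = 0 := by
  have hc : 0 < c := Nat.pos_of_mul_pos_left ((Nat.zero_le _).trans_lt hac)
  have ha : 0 < a := Nat.pos_of_mul_pos_right ((Nat.zero_le _).trans_lt hac)
  refine eq_zero_of_boxSum_eq_zero (K := ℝ) (e := (1, 0, 0))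
    ((Int.castAddHom ℝ).comp (latticeX x + g • latticeY y)) ((Int.castAddHom ℝ).comp (latticeY y))
    P.monomial (by simp [latticeY_apply]) P.not_isOfFinOrder_monomial hS hT
    (I := Finset.range L ×ˢ Finset.range (2 * L) ×ˢ Finset.range c)
    (J := Finset.range L ×ˢ Finset.range L ×ˢ Finset.range c) ?_ (fun A B hAB => ?_)
    (Int.cast_injective.comp_injOn (injOn_latticeX_add_mul_latticeY hg hLy))
    (by simpa using hLLc) fun s hs j hj i hi => ?_
  · simp only [Finset.mem_product, Finset.mem_range, Prod.fst_zero, Prod.snd_zero]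
    omega
  · have hAB' : A ≠ 0 ∨ A * g + B ≠ 0 := by
      by_contra! h
      obtain ⟨hA, hB⟩ := h
      rw [hA, zero_mul, zero_add] at hB
      exact hAB.elim (· hA) (· hB)
    obtain ⟨J', hJ', hcard, hinj⟩ := exists_subset_injOn_linear_form haL hac hLL hLq
      (haL.trans (by omega)) hxy hAB'
    refine ⟨J', hJ', hcard, hinj.congr fun j _ => ?_⟩
    simp only [AddMonoidHom.coe_comp, Function.comp_apply, Int.coe_castAddHom,
      AddMonoidHom.add_apply, AddMonoidHom.nsmul_apply, Int.cast_add, nsmul_eq_mul, Int.cast_mul,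
      Int.cast_natCast]
    ring
  · simp only [Finset.mem_product, Finset.mem_range] at hi hj
    have hle : i + j + s • (1, 0, 0) ≤ (2 * L + S, 3 * L, 2 * c) := by
      refine ⟨?_, ?_, ?_⟩ <;> simp <;> omega
    have hzero := hp _ hle
    generalize i + j + s • (1, 0, 0) = k at hzero ⊢
    simpa [coe_monomial_ofAdd] using hzero

theorem height_add_mul_abs_value_le (ha : Real.log P.a ≤ 0.4813) (hb : Real.log P.b ≤ 0.2813)
    (hL : L = P.h * L₃) (hℓ : 1 ≤ ℓ) (hℓL : 2 * 10 ^ 14 * ℓ ≤ L)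
    (hΛ : L₃ * |P.value x y| ≤ 1) :
    P.height (2 * L + 2400 * ℓ, 3 * L, L₃) + L₃ * |P.value x y| ≤ 3 * L := by
  have hL' : (L : ℝ) = P.h * L₃ := by exact_mod_cast hL
  have hℓ' : (1 : ℝ) ≤ ℓ := by exact_mod_cast hℓ
  have hℓL' : 2 * 10 ^ 14 * (ℓ : ℝ) ≤ L := by exact_mod_cast hℓL
  have haL : (2 * L + 2400 * ℓ) * Real.log P.a ≤ (2 * L + 2400 * ℓ) * 0.4813 := by gcongr
  have hbL : 3 * L * Real.log P.b ≤ 3 * L * 0.2813 := by gcongr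
  unfold height
  push_cast
  linarith

theorem add_mul_log_mul_sq_div_le {E G : ℝ} (hE : 10 ^ 14 ≤ E) (hLE : 4 * L ≤ E)
    (ha : 0.48 ≤ Real.log P.a) (hG : G ≤ E ^ 2 / 2) :
    (3 * L + (Real.log P.a * G - Real.log P.b) * E ^ 2) / Real.log P.a ≤ E ^ 4 := by
  have hb := P.log_b_pos
  rw [div_le_iff₀ P.log_a_pos]
  have hE4 : E * 10 ^ 42 ≤ E ^ 4 :=
    calc E * 10 ^ 42 = E * (10 ^ 14) ^ 3 := by norm_num
      _ ≤ E * E ^ 3 := by gcongr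
      _ = E ^ 4 := by ring
  calc 3 * L + (Real.log P.a * G - Real.log P.b) * E ^ 2
      ≤ E + (Real.log P.a * (E ^ 2 / 2) - 0) * E ^ 2 := by gcongr; linarith
    _ = E + Real.log P.a * E ^ 4 / 2 := by ring
    _ ≤ E ^ 4 * Real.log P.a := by
        have : 0.48 * E ^ 4 ≤ Real.log P.a * E ^ 4 := by gcongr
        linarith

theorem exists_boxSum_monomial_eq_zero_of_abs_value_le [FiniteDimensional ℚ K]
    (hK : Module.finrank ℚ K ≤ 6) (ha : 0.48 ≤ Real.log P.a) (ha' : Real.log P.a ≤ 0.4813)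
    (hb : Real.log P.b ≤ 0.2813) (hL : L = P.h * L₃) (hℓ : 1 ≤ ℓ) (hℓL : 2 * 10 ^ 14 * ℓ ≤ L)
    (hLE : 4 * L ≤ Real.exp ℓ) (hx : x ≤ Real.exp ℓ) (hy : y ≤ Real.exp ℓ)
    (hΛ : |P.value x y| ≤ Real.exp (-(365000 * (ℓ * L)))) :
    ∃ p : Fin (2000 * L) × Fin (2000 * L) × Fin (2400 * ℓ) → ℤ, p ≠ 0 ∧
      ∀ i ≤ (2 * L + 2400 * ℓ, 3 * L, L₃),
        boxSum p (latticeX x i + (L + L₃ * x + 1 : ℕ) * latticeY y i : ℝ) (latticeY y i)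
          (fun s => Real.exp (P.logMonomial i) ^ (s : ℕ)) = 0 := by
  have hL0 : 0 < L := by omega
  have hL₃L : L₃ ≤ L :=
    hL ▸ Nat.le_mul_of_pos_left _ (Nat.pos_of_mul_pos_right (hL ▸ hL0))
  have hℓ' : (1 : ℝ) ≤ ℓ := by exact_mod_cast hℓ
  have hℓL' : 2 * 10 ^ 14 * (ℓ : ℝ) ≤ L := by exact_mod_cast hℓL
  have hL₃L' : (L₃ : ℝ) ≤ L := by exact_mod_cast hL₃L
  set E := Real.exp ℓ
  set Q : ℝ := ℓ * L
  have hLQ : L ≤ Q := le_mul_of_one_le_left (by positivity) hℓ'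
  have hQ : 2 * 10 ^ 14 ≤ Q := by linarith
  have hE : 10 ^ 14 ≤ E := by linarith
  have hE2 : 10 ^ 14 * E ≤ E ^ 2 := by rw [sq]; gcongr
  have hL₃x {z : ℕ} (hz : z ≤ E) : L₃ * z ≤ E ^ 2 / 4 :=
    calc L₃ * (z : ℝ) ≤ E / 4 * E := by gcongr; linarith
      _ = E ^ 2 / 4 := by ring
  obtain ⟨D, hD, hD19⟩ := exists_nat_exp_le_and_pow_le (by linarith : 1 ≤ Q)
  have hL₃Λ : L₃ * |P.value x y| ≤ 1 := mul_le_one_of_le_exp_neg (by linarith) L₃.cast_nonneg hΛ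
  have hSW : ((2400 * ℓ : ℕ) * (3 * L) : ℝ) = 7200 * Q := by simp only [Q]; push_cast; ring
  refine P.exists_boxSum_monomial_eq_zero hK (W := 3 * L) (B := E ^ 2) (V := E ^ 4)
    (ρ := Real.exp 3) (D := D) (M := 99 * ℓ * (2000 * L)) (by omega) (by omega)
    (one_le_pow₀ (by linarith)) ?_ (P.add_mul_log_mul_sq_div_le hE hLE ha ?_)
    (one_le_pow₀ (by linarith)) (Real.one_le_exp (by norm_num)) (by positivity)
    (P.height_add_mul_abs_value_le ha' hb hL hℓ hℓL hL₃Λ) ?_ ?_ ?_ ?_ ?_ ?_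
  · have : Real.log P.a * 1 ≤ Real.log P.a * (L + L₃ * x + 1 : ℕ) := by
      have := P.log_a_pos
      gcongr
      exact_mod_cast Nat.le_add_left _ _
    linarith
  · push_cast
    linarith [hL₃x hx]
  · push_cast
    linarith [hL₃x hy]
  · refine le_trans ?_ hD
    rw [hSW]
    exact size_mul_size_mul_exp_le_exp hQ hLQ
  · have : (2 : ℝ) ≤ D := by linarith [Real.add_one_le_exp (19201 * Q)]
    exact_mod_cast this
  · nlinarith [Nat.mul_pos hL0 hℓ]
  · rw [hSW]
    refine le_trans (by gcongr) (exp_mul_tail_le (by linarith : 1 ≤ Q) ?_)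
    simp only [Q]
    push_cast
    ring
  · have hSL₃ : ((2400 * ℓ : ℕ) * L₃ : ℝ) ≤ 2400 * Q :=
      calc ((2400 * ℓ : ℕ) * L₃ : ℝ) ≤ (2400 * ℓ : ℕ) * L := by gcongr
        _ = 2400 * Q := by simp only [Q]; push_cast; ring
    exact (mul_le_mul hD19 (by linarith [mul_le_mul hSL₃ hΛ (abs_nonneg _) (by positivity)])
      (by positivity) (Real.exp_pos _).le).trans (exp_mul_mul_exp_neg_le (by linarith : 1 ≤ Q))

theorem sub_le_log_mul_abs_sub {q : ℕ} (r : ℤ) :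
    y * |q * Real.log P.b - r * Real.log P.a| - q * (P.h + |P.value x y|) ≤
      Real.log P.a * |(q * x - r * y : ℝ)| := by
  have hform : Real.log P.a * (q * x - r * y) = y * (q * Real.log P.b - r * Real.log P.a) +
      q * (P.value x y - (Real.log P.u - Real.log P.v)) := by
    unfold value
    ring
  have hrest : |q * (P.value x y - (Real.log P.u - Real.log P.v))| ≤
      q * (P.h + |P.value x y|) := by
    rw [abs_mul, Nat.abs_cast, add_comm (P.h : ℝ)]
    gcongr
    exact (abs_sub _ _).trans (by gcongr; exact P.admissible.abs_log_sub_le)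
  have htri := abs_sub_abs_le_abs_add (y * (q * Real.log P.b - r * Real.log P.a))
    (q * (P.value x y - (Real.log P.u - Real.log P.v)))
  rw [← hform, abs_mul, abs_mul (Real.log P.a), Nat.abs_cast, abs_of_pos P.log_a_pos] at htri
  linarith

theorem exp_neg_le_abs_value [FiniteDimensional ℚ K] (hK : Module.finrank ℚ K ≤ 6)
    (hh : 1 ≤ P.h) (hℓ : 1 ≤ ℓ) (ha : 0.48 ≤ Real.log P.a) (ha' : Real.log P.a ≤ 0.4813)
    (hb : Real.log P.b ≤ 0.2813) (hx : x ≤ Real.exp ℓ) (hy : y ≤ Real.exp ℓ)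
    (hL : 8 * 10 ^ 14 * (P.h * ℓ ^ 2 : ℝ) ≤ Real.exp ℓ) (hyL : 4 * 10 ^ 14 * (P.h * ℓ ^ 2) ≤ y)
    (hq : ∀ q : ℕ, 1 ≤ q → q ≤ 9600000 * ℓ → ∀ r : ℤ,
      q * (10 ^ 7 * (P.h * ℓ : ℝ)) ≤ y * |q * Real.log P.b - r * Real.log P.a|) :
    Real.exp (-(7.3 * 10 ^ 19 * (P.h * ℓ ^ 3 : ℝ))) ≤ |P.value x y| := by
  by_contra! hΛ
  obtain ⟨L, hLdef⟩ : ∃ L, L = P.h * (2 * (10 ^ 14 * ℓ ^ 2)) := ⟨_, rfl⟩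
  have hL' : L = 2 * 10 ^ 14 * (P.h * ℓ ^ 2) := by rw [hLdef]; ring
  have hhℓ : ℓ ≤ P.h * ℓ ^ 2 :=
    (Nat.le_self_pow two_ne_zero ℓ).trans (Nat.le_mul_of_pos_left _ hh)
  have hhℓ' : P.h * ℓ ≤ P.h * ℓ ^ 2 := Nat.mul_le_mul_left _ (Nat.le_self_pow two_ne_zero ℓ)
  have : ℓ ≤ ℓ ^ 2 := Nat.le_self_pow two_ne_zero ℓ
  have hLℓ : 0 < L * ℓ := Nat.mul_pos (by omega) hℓ
  have hhr : (1 : ℝ) ≤ P.h := by exact_mod_cast hh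
  have hℓr : (1 : ℝ) ≤ ℓ := by exact_mod_cast hℓ
  have hΛ1 : |P.value x y| ≤ 1 := hΛ.le.trans (Real.exp_le_one_iff.2 (by
    rw [neg_nonpos]
    positivity))
  obtain ⟨p, hp0, hp⟩ := P.exists_boxSum_monomial_eq_zero_of_abs_value_le hK ha ha' hb hLdef hℓ
    (by omega) (le_of_eq_of_le (by rw [hLdef]; push_cast; ring) hL) hx hy
    (hΛ.le.trans_eq (by rw [hLdef]; push_cast; ring_nf))
  refine hp0 (P.eq_zero_of_boxSum_monomial_eq_zero (a := 20000000 * (P.h * ℓ))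
    (q₀ := 9600000 * ℓ) (by omega) (by omega) (by omega) ?_ ?_ ?_ ?_ (by omega) ?_ ?_ hp)
  · rw [hL']
    nlinarith [Nat.mul_pos hh (pow_pos hℓ 3)]
  · nlinarith
  · linarith
  · nlinarith
  · rw [mul_assoc 2]
    omega
  · intro q hq1 hq2 r
    have hsub := P.sub_le_log_mul_abs_sub (x := x) (y := y) (q := q) r
    have hlog : Real.log P.a * |(q * x - r * y : ℝ)| ≤ 0.4813 * |(q * x - r * y : ℝ)| := by gcongr
    have hhΛ : q * (P.h + |P.value x y|) ≤ q * (2 * (P.h * ℓ)) := by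
      have : (P.h : ℝ) ≤ P.h * ℓ := le_mul_of_one_le_right (by positivity) hℓr
      gcongr
      linarith
    have : 0 ≤ q * (P.h * ℓ : ℝ) := by positivity
    have hqr : q * (20000000 * (P.h * ℓ : ℝ)) ≤ |(q * x - r * y : ℝ)| := by
      linarith [hq q hq1 hq2 r]
    exact_mod_cast hqr

end LogForm

end LinearFormBound

section TrinomialRoots

open Polynomial

theorem le_of_pow_le_add_one {k : ℕ} (hk : 2 ≤ k) {r z : ℝ} (hz : 1 ≤ z) (hz' : z + 1 ≤ z ^ k)
    (hr : r ^ k ≤ r + 1) : r ≤ z := by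
  obtain ⟨j, rfl⟩ : ∃ j, k = j + 1 := ⟨k - 1, by omega⟩
  by_contra! h
  have hj : z ^ j < r ^ j := pow_lt_pow_left₀ h (by linarith) (by omega)
  have hj' : 1 ≤ z ^ j := one_le_pow₀ hz
  rw [pow_succ] at hr hz'
  nlinarith

theorem isIntegral_of_pow_eq_add_one {A R : Type*} [CommRing A] [CommRing R] [Algebra A R]
    {k : ℕ} (hk : 2 ≤ k) {r : R} (h : r ^ k = r + 1) : IsIntegral A r := by
  refine ⟨X ^ k - (X + 1), monic_X_pow_sub ?_, by simp [h]⟩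
  exact (show (X + 1 : A[X]).degree ≤ 1 by compute_degree).trans_lt (by exact_mod_cast hk)

theorem finrank_adjoin_le_of_pow_eq_add_one {r : ℝ} {k : ℕ} (hk : 2 ≤ k) (h : r ^ k = r + 1) :
    Module.finrank ℚ (IntermediateField.adjoin ℚ {r}) ≤ k := by
  rw [IntermediateField.adjoin.finrank (isIntegral_of_pow_eq_add_one hk h)]
  have hdeg : (X + 1 : ℚ[X]).degree < k :=
    (degree_X_add_C (1 : ℚ)).trans_lt (by exact_mod_cast hk)
  refine (natDegree_le_of_dvd (minpoly.dvd ℚ r (p := X ^ k - (X + 1)) (by simp [h]))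
    (monic_X_pow_sub hdeg).ne_zero).trans_eq (natDegree_eq_of_degree_eq_some ?_)
  rw [degree_sub_eq_left_of_degree_lt (by rwa [degree_X_pow]), degree_X_pow]

theorem HouseLE.of_pow_eq_add_one {K : IntermediateField ℚ ℝ} {k : ℕ} (hk : 2 ≤ k) {z : ℝ}
    (hzK : z ∈ K) (hz : 1 ≤ z) (h : z ^ k = z + 1) : HouseLE K z z := by
  have h' : (⟨z, hzK⟩ : K) ^ k = ⟨z, hzK⟩ + 1 := Subtype.ext h
  refine ⟨⟨z, hzK⟩, rfl, isIntegral_of_pow_eq_add_one hk h', fun σ =>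
    le_of_pow_le_add_one hk hz h.ge ?_⟩
  rw [← norm_pow, ← map_pow, h', map_add, map_one]
  exact (norm_add_le _ _).trans_eq (by rw [norm_one])

theorem HouseLE.pow_sub_one {K : IntermediateField ℚ ℝ} {z : ℝ} (hz : 1 ≤ z)
    (h : HouseLE K z z) (k : ℕ) : HouseLE K (Real.exp (k * Real.log z + 1)) (z ^ k - 1) := by
  have hpow : (1 : ℝ) ≤ z ^ k := one_le_pow₀ hz
  have hsum := (h.pow k).add (HouseLE.intCast K (-1))
  push_cast at hsum
  rw [← sub_eq_add_neg, abs_neg, abs_one] at hsum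
  refine hsum.mono ?_
  rw [Real.exp_add, Real.exp_nat_mul, Real.exp_log (by linarith)]
  nlinarith [Real.exp_one_gt_d9]

end TrinomialRoots

section UnitField

open scoped goldenRatio

/-- The compositum `ℚ(α, φ)`; for the plastic number `α` it contains every algebraic number that
occurs in the linear forms below. -/
noncomputable abbrev unitField (α : ℝ) : IntermediateField ℚ ℝ :=
  IntermediateField.adjoin ℚ {α} ⊔ IntermediateField.adjoin ℚ {φ}

variable {α : ℝ}

theorem finiteDimensional_unitField (hα : α ^ 3 = α + 1) : FiniteDimensional ℚ (unitField α) :=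
  haveI := IntermediateField.adjoin.finiteDimensional
    (isIntegral_of_pow_eq_add_one (A := ℚ) (by norm_num) hα)
  haveI := IntermediateField.adjoin.finiteDimensional
    (isIntegral_of_pow_eq_add_one (A := ℚ) le_rfl Real.goldenRatio_sq)
  inferInstance

theorem finrank_unitField_le (hα : α ^ 3 = α + 1) : Module.finrank ℚ (unitField α) ≤ 6 :=
  (IntermediateField.finrank_sup_le _ _).trans (Nat.mul_le_mul
    (finrank_adjoin_le_of_pow_eq_add_one (by norm_num) hα)
    (finrank_adjoin_le_of_pow_eq_add_one le_rfl Real.goldenRatio_sq))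

theorem lt_plastic (hα : α ^ 3 = α + 1) : 1.3247 < α := by
  by_contra! h
  nlinarith [sq_nonneg (α - 1.3247), sq_nonneg (α + 0.66), le_or_gt (-1.3247) α]

theorem plastic_lt (hα : α ^ 3 = α + 1) : α < 1.3248 :=
  (le_of_pow_le_add_one (k := 3) (by norm_num) (z := 1.32475) (by norm_num) (by norm_num)
    hα.le).trans_lt (by norm_num)

theorem houseLE_plastic (hα : α ^ 3 = α + 1) : HouseLE (unitField α) α α :=
  .of_pow_eq_add_one (by norm_num)
    ((le_sup_left : _ ≤ unitField α) (IntermediateField.mem_adjoin_simple_self ℚ α))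
    (by linarith [lt_plastic hα]) hα

theorem houseLE_goldenRatio : HouseLE (unitField α) φ φ :=
  .of_pow_eq_add_one le_rfl
    ((le_sup_right : _ ≤ unitField α) (IntermediateField.mem_adjoin_simple_self ℚ φ))
    Real.one_lt_goldenRatio.le Real.goldenRatio_sq

theorem houseLE_two_mul_plastic_add_three (hα : α ^ 3 = α + 1) :
    HouseLE (unitField α) (Real.exp 2) (2 * α + 3) := by
  have h := ((HouseLE.intCast (unitField α) 2).mul (houseLE_plastic hα)).add
    (HouseLE.intCast (unitField α) 3)
  norm_num at h
  refine h.mono ?_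
  rw [← one_add_one_eq_two (R := ℝ), Real.exp_add]
  nlinarith [Real.exp_one_gt_d9, plastic_lt hα]

end UnitField

section LogCertificates

open scoped goldenRatio

/-- The numerator of the Taylor polynomial `∑_{i ≤ j} (X / D)^i / i!` over the common denominator
`D ^ j * j!`; it is a natural number, so that inequalities between it and explicit decimals are
decided by kernel computation. -/
def expTaylorNumerator (X D : ℕ) : ℕ → ℕ
  | 0 => 1
  | j + 1 => expTaylorNumerator X D j * (D * (j + 1)) + X ^ (j + 1)

theorem sum_pow_div_factorial_eq (X : ℕ) {D : ℕ} (hD : 0 < D) (j : ℕ) :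
    ∑ i ∈ Finset.range (j + 1), ((X : ℝ) / D) ^ i / (i.factorial : ℝ) =
      expTaylorNumerator X D j / ((D : ℝ) ^ j * (j.factorial : ℝ)) := by
  have : (D : ℝ) ≠ 0 := by positivity
  induction j with
  | zero => simp [expTaylorNumerator]
  | succ j ih =>
    rw [Finset.sum_range_succ, ih, expTaylorNumerator, Nat.factorial_succ, div_pow]
    push_cast
    field_simp
    ring

theorem div_le_log_of_expTaylor (X D A E j : ℕ) {r : ℝ} (hr : (A : ℝ) / E ≤ r) (hE : 0 < E)
    (hD : 0 < D) (hX : X ≤ D) (hr0 : 0 < r)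
    (h : (expTaylorNumerator X D j * (D * (j + 1) * (j + 1)) + X ^ (j + 1) * (j + 2)) * E ≤
      A * (D ^ (j + 1) * ((j + 1).factorial * (j + 1)))) : (X : ℝ) / D ≤ Real.log r := by
  have hDr : (0 : ℝ) < D := by exact_mod_cast hD
  have hX' : (X : ℝ) / D ≤ 1 := by
    rw [div_le_one hDr]
    exact_mod_cast hX
  rw [Real.le_log_iff_exp_le hr0]
  refine (Real.exp_bound' (by positivity) hX' j.succ_pos).trans (le_trans ?_ hr)
  rw [Nat.succ_eq_add_one, sum_pow_div_factorial_eq X hD j]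
  have hcast : ((expTaylorNumerator X D j : ℝ) * (D * (j + 1) * (j + 1)) +
      (X : ℝ) ^ (j + 1) * (j + 2)) * E ≤
      A * ((D : ℝ) ^ (j + 1) * (((j + 1).factorial : ℝ) * (j + 1))) := by exact_mod_cast h
  refine le_trans (le_of_eq ?_) ((div_le_div_iff₀ (by positivity) (by positivity)).2 hcast)
  rw [Nat.factorial_succ, div_pow, pow_succ (D : ℝ) j]
  push_cast
  field_simp
  ring

theorem log_le_div_of_expTaylor (X D A E j : ℕ) {r : ℝ} (hr : r ≤ (A : ℝ) / E) (hE : 0 < E)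
    (hD : 0 < D) (hr0 : 0 < r) (h : A * (D ^ j * j.factorial) ≤ expTaylorNumerator X D j * E) :
    Real.log r ≤ (X : ℝ) / D := by
  rw [Real.log_le_iff_le_exp hr0]
  refine hr.trans (le_trans ?_ (Real.sum_le_exp_of_nonneg (by positivity) (j + 1)))
  rw [sum_pow_div_factorial_eq X hD j, div_le_div_iff₀ (by positivity) (by positivity)]
  exact_mod_cast h

/-- `⌊10 ^ 200 * φ⌋`. -/
def goldenRatioApprox : ℕ :=
  1618033988749894848204586834365638117720309179805762862135448 * 10 ^ 140 +
    6227052604628189024497072072041893911374847540880753868917521266338622 * 10 ^ 70 +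
    2353693179318006076672635443338908659593958290563832266131992829026788

/-- `⌊10 ^ 205 * α⌋` for the plastic number `α`. -/
def plasticApprox : ℕ :=
  132471795724474602596090885447809734073440405690173336453401505030 * 10 ^ 140 +
    2827851245547594054699347981787280329910920994742207425108902639045897 * 10 ^ 70 +
    7955943147570967234717541668390388674187517369315842535499082466223545

/-- `⌊10 ^ 200 * log φ⌋`, up to one unit. -/
def logGoldenRatioApprox : ℕ :=
  481211825059603447497758913424368423135184334385660519661018 * 10 ^ 140 +
    1688401638676082217744120094291227234749972318399582936564112725683237 * 10 ^ 70 +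
    2673762275305924186440975418241700721183715022382393746918727524327919

/-- `⌊10 ^ 200 * log α⌋` for the plastic number `α`, up to one unit. -/
def logPlasticApprox : ℕ :=
  281199574322961846512050764067878299792023225744066462675730 * 10 ^ 140 +
    3343180384530621208913229877074754940547925253187335220052289389467079 * 10 ^ 70 +
    7653822873740174932897332557530484634607076884026430840295974114340949

/-- `⌊10 ^ 200 * log ((2 * α + 3) / α ^ 5)⌋` for the plastic number `α`, up to one unit. -/
def logQuotientApprox : ℕ :=
  325557830415928422142439294193942267004131451512422252586540 * 10 ^ 140 +
    6678257812746281921307367039472690196032847400649934792954944847608772 * 10 ^ 70 +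
    8102815932388308341832085013098439349124933474242726158013658308825974

theorem goldenRatioApprox_div_le : (goldenRatioApprox : ℝ) / (10 ^ 200 : ℕ) ≤ φ :=
  le_of_pow_le_add_one le_rfl Real.one_lt_goldenRatio.le Real.goldenRatio_sq.ge
    (by norm_num [goldenRatioApprox])

theorem le_goldenRatioApprox_add_one_div :
    φ ≤ ((goldenRatioApprox + 1 : ℕ) : ℝ) / (10 ^ 200 : ℕ) :=
  le_of_pow_le_add_one le_rfl (by norm_num [goldenRatioApprox]) (by norm_num [goldenRatioApprox])
    Real.goldenRatio_sq.le

theorem abs_log_goldenRatio_sub_le :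
    |Real.log φ - logGoldenRatioApprox / 10 ^ 200| ≤ 1 / 10 ^ 200 := by
  have hlow := div_le_log_of_expTaylor (logGoldenRatioApprox - 1) (10 ^ 200) goldenRatioApprox
    (10 ^ 200) 130 goldenRatioApprox_div_le (by norm_num) (by norm_num)
    (by norm_num [logGoldenRatioApprox]) Real.goldenRatio_pos (by decide +kernel)
  have hupp := log_le_div_of_expTaylor (logGoldenRatioApprox + 1) (10 ^ 200)
    (goldenRatioApprox + 1) (10 ^ 200) 130 le_goldenRatioApprox_add_one_div (by norm_num)
    (by norm_num) Real.goldenRatio_pos (by decide +kernel)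
  rw [Nat.cast_sub (by norm_num [logGoldenRatioApprox])] at hlow
  push_cast at hlow hupp
  rw [abs_le]
  constructor <;> linarith

variable {α : ℝ}

theorem plasticApprox_div_le (hα : α ^ 3 = α + 1) :
    (plasticApprox : ℝ) / (10 ^ 205 : ℕ) ≤ α :=
  le_of_pow_le_add_one (k := 3) (by norm_num) (by linarith [lt_plastic hα]) hα.ge
    (by norm_num [plasticApprox])

theorem le_plasticApprox_add_one_div (hα : α ^ 3 = α + 1) :
    α ≤ ((plasticApprox + 1 : ℕ) : ℝ) / (10 ^ 205 : ℕ) :=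
  le_of_pow_le_add_one (k := 3) (by norm_num) (by norm_num [plasticApprox])
    (by norm_num [plasticApprox]) hα.le

theorem abs_log_plastic_sub_le (hα : α ^ 3 = α + 1) :
    |Real.log α - logPlasticApprox / 10 ^ 200| ≤ 1 / 10 ^ 200 := by
  have hα0 : 0 < α := by linarith [lt_plastic hα]
  have hlow := div_le_log_of_expTaylor (logPlasticApprox - 1) (10 ^ 200) plasticApprox
    (10 ^ 205) 130 (plasticApprox_div_le hα) (by norm_num) (by norm_num)
    (by norm_num [logPlasticApprox]) hα0 (by decide +kernel)
  have hupp := log_le_div_of_expTaylor (logPlasticApprox + 1) (10 ^ 200) (plasticApprox + 1)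
    (10 ^ 205) 130 (le_plasticApprox_add_one_div hα) (by norm_num) (by norm_num) hα0
    (by decide +kernel)
  rw [Nat.cast_sub (by norm_num [logPlasticApprox])] at hlow
  push_cast at hlow hupp
  rw [abs_le]
  constructor <;> linarith

theorem le_two_mul_add_three_div_pow (hα : α ^ 3 = α + 1) {A B T : ℕ} (hT : 0 < T)
    (hA : (A : ℝ) / T ≤ α) (hB : α ≤ (B : ℝ) / T) :
    (((2 * A + 3 * T) * T : ℕ) : ℝ) / (B ^ 2 + B * T + T ^ 2 : ℕ) ≤ (2 * α + 3) / α ^ 5 := by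
  have hα0 : 0 < α := by linarith [lt_plastic hα]
  rw [show α ^ 5 = α ^ 2 + α + 1 by linear_combination (α ^ 2 + 1) * hα]
  calc _ = (2 * ((A : ℝ) / T) + 3) / (((B : ℝ) / T) ^ 2 + (B : ℝ) / T + 1) := by
        push_cast
        field_simp
    _ ≤ _ := by gcongr

theorem two_mul_add_three_div_pow_le (hα : α ^ 3 = α + 1) {A B T : ℕ} (hT : 0 < T)
    (hA : (A : ℝ) / T ≤ α) (hB : α ≤ (B : ℝ) / T) :
    (2 * α + 3) / α ^ 5 ≤ (((2 * B + 3 * T) * T : ℕ) : ℝ) / (A ^ 2 + A * T + T ^ 2 : ℕ) := by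
  have : 0 < α := by linarith [lt_plastic hα]
  rw [show α ^ 5 = α ^ 2 + α + 1 by linear_combination (α ^ 2 + 1) * hα]
  calc _ ≤ (2 * ((B : ℝ) / T) + 3) / (((A : ℝ) / T) ^ 2 + (A : ℝ) / T + 1) := by gcongr
    _ = _ := by
        push_cast
        field_simp

theorem abs_log_quotient_sub_le (hα : α ^ 3 = α + 1) :
    |Real.log ((2 * α + 3) / α ^ 5) - logQuotientApprox / 10 ^ 200| ≤ 1 / 10 ^ 200 := by
  have hα0 : 0 < α := by linarith [lt_plastic hα]
  have hlow := div_le_log_of_expTaylor (logQuotientApprox - 1) (10 ^ 200) _ _ 130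
    (le_two_mul_add_three_div_pow hα (by norm_num) (plasticApprox_div_le hα)
      (le_plasticApprox_add_one_div hα)) (by positivity) (by norm_num)
    (by norm_num [logQuotientApprox]) (by positivity) (by decide +kernel)
  have hupp := log_le_div_of_expTaylor (logQuotientApprox + 1) (10 ^ 200) _ _ 130
    (two_mul_add_three_div_pow_le hα (by norm_num) (plasticApprox_div_le hα)
      (le_plasticApprox_add_one_div hα)) (by positivity) (by norm_num) (by positivity)
    (by decide +kernel)
  rw [Nat.cast_sub (by norm_num [logQuotientApprox])] at hlow
  push_cast at hlow hupp
  rw [abs_le]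
  constructor <;> linarith

theorem log_goldenRatio_mem_Icc : Real.log φ ∈ Set.Icc 0.4812 0.48122 := by
  have h := abs_le.1 abs_log_goldenRatio_sub_le
  norm_num [logGoldenRatioApprox] at h
  constructor <;> norm_num <;> linarith

theorem log_plastic_mem_Icc (hα : α ^ 3 = α + 1) : Real.log α ∈ Set.Icc 0.28119 0.2812 := by
  have h := abs_le.1 (abs_log_plastic_sub_le hα)
  norm_num [logPlasticApprox] at h
  constructor <;> norm_num <;> linarith

end LogCertificates

section Approximation

open scoped goldenRatio

theorem sub_div_le_abs_mul_sub_of_coprime {l₁ l₂ ε : ℝ} {a b q : ℕ} (hl₁ : 0 < l₁)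
    (hab : b.Coprime a) (hε : |b * l₂ - a * l₁| ≤ ε) (hq : 1 ≤ q) (hqb : q < b) (p : ℤ) :
    (l₁ - q * ε) / b ≤ |q * l₂ - p * l₁| := by
  have hb : (0 : ℝ) < b := by exact_mod_cast hq.trans hqb.le
  have hne : (q : ℤ) * a - p * b ≠ 0 := by
    intro h
    have hdvd : b ∣ q * a := Int.natCast_dvd_natCast.1 ⟨p, by push_cast; linarith⟩
    exact absurd (Nat.le_of_dvd hq (hab.dvd_of_dvd_mul_right hdvd)) (by omega)
  have hone : (1 : ℝ) ≤ |((q * a - p * b : ℤ) : ℝ)| := by exact_mod_cast Int.one_le_abs hne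
  have hmain : l₁ ≤ |l₁ * ((q * a - p * b : ℤ) : ℝ)| := by
    rw [abs_mul, abs_of_pos hl₁]
    exact le_mul_of_one_le_right hl₁.le hone
  have herr : |-((q : ℝ) * (b * l₂ - a * l₁))| ≤ q * ε := by
    rw [abs_neg, abs_mul, Nat.abs_cast]
    gcongr
  have htri := abs_sub_abs_le_abs_sub (l₁ * ((q * a - p * b : ℤ) : ℝ))
    (-((q : ℝ) * (b * l₂ - a * l₁)))
  have hsplit : l₁ * ((q * a - p * b : ℤ) : ℝ) - -((q : ℝ) * (b * l₂ - a * l₁)) =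
      (q * l₂ - p * l₁) * b := by
    push_cast
    ring
  rw [hsplit, abs_mul _ (b : ℝ), Nat.abs_cast] at htri
  rw [div_le_iff₀ hb]
  linarith

variable {α : ℝ}

-- `9541602758 / 16328374921` is a convergent of `log α / log φ`.
theorem sub_div_le_abs_mul_log_plastic_sub (hα : α ^ 3 = α + 1) {q : ℕ} (hq : 1 ≤ q)
    (hq' : q < 16328374921) (p : ℤ) :
    (0.4812 - q * (3.71 / 10 ^ 12)) / 16328374921 ≤ |q * Real.log α - p * Real.log φ| := by
  have hφ := abs_le.1 abs_log_goldenRatio_sub_le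
  have hα' := abs_le.1 (abs_log_plastic_sub_le hα)
  have hlow := log_goldenRatio_mem_Icc.1
  have hconv : |((16328374921 : ℕ) : ℝ) * Real.log α - (9541602758 : ℕ) * Real.log φ| ≤
      3.71 / 10 ^ 12 := by
    norm_num [logGoldenRatioApprox, logPlasticApprox] at hφ hα'
    rw [abs_le]
    constructor <;> norm_num <;> linarith
  refine le_trans ?_ (sub_div_le_abs_mul_sub_of_coprime (by linarith) (by norm_num) hconv hq hq' p)
  push_cast
  gcongr

theorem abs_mul_log_plastic_sub_ge_of_le_two_billion (hα : α ^ 3 = α + 1) {q : ℕ} (hq : 1 ≤ q)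
    (hq' : q ≤ 2200000000) (p : ℤ) :
    2.89 / 10 ^ 11 ≤ |q * Real.log α - p * Real.log φ| := by
  refine le_trans ?_ (sub_div_le_abs_mul_log_plastic_sub hα hq (by omega) p)
  have : (q : ℝ) ≤ 2200000000 := by exact_mod_cast hq'
  rw [div_le_div_iff₀ (by norm_num) (by norm_num)]
  linarith

theorem abs_mul_log_plastic_sub_ge_of_le_sixteen_billion (hα : α ^ 3 = α + 1) {q : ℕ}
    (hq : 1 ≤ q) (hq' : q ≤ 16320000000) (p : ℤ) :
    2.5 / 10 ^ 11 ≤ |q * Real.log α - p * Real.log φ| := by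
  refine le_trans ?_ (sub_div_le_abs_mul_log_plastic_sub hα hq (by omega) p)
  have : (q : ℝ) ≤ 16320000000 := by exact_mod_cast hq'
  rw [div_le_div_iff₀ (by norm_num) (by norm_num)]
  linarith

/-- The numerator of a convergent of `log α / log φ`, for the plastic number `α`. -/
def convergentNum : ℕ := 863325538411649316991076849417511604487833957

/-- The denominator of a convergent of `log α / log φ`, for the plastic number `α`. -/
def convergentDen : ℕ := 1477393623229645344014985989169632464398849669

theorem abs_mul_log_plastic_sub_ge_of_le_ten_pow (hα : α ^ 3 = α + 1) {q : ℕ} (hq : 1 ≤ q)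
    (hq' : q ≤ 10 ^ 44) (p : ℤ) : 1 / 10 ^ 46 ≤ |q * Real.log α - p * Real.log φ| := by
  have hφ := abs_le.1 abs_log_goldenRatio_sub_le
  have hα' := abs_le.1 (abs_log_plastic_sub_le hα)
  have hlow := log_goldenRatio_mem_Icc.1
  have hconv : |(convergentDen : ℝ) * Real.log α - convergentNum * Real.log φ| ≤ 2 / 10 ^ 46 := by
    norm_num [logGoldenRatioApprox, logPlasticApprox] at hφ hα'
    rw [abs_le]
    constructor <;> norm_num [convergentNum, convergentDen] <;> linarith
  refine le_trans ?_ (sub_div_le_abs_mul_sub_of_coprime (by linarith)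
    (by norm_num [convergentNum, convergentDen]) hconv hq
    (hq'.trans_lt (by norm_num [convergentDen])) p)
  have : (q : ℝ) ≤ 10 ^ 44 := by exact_mod_cast hq'
  rw [div_le_div_iff₀ (by norm_num) (by norm_num [convergentDen])]
  norm_num only [convergentDen] at this ⊢
  linarith

end Approximation

section Reduction

open scoped goldenRatio

-- The reduction of Baker–Davenport and Dujella–Pethő: `q * Λ` is `s` away from a multiple of `l₂`.
theorem sub_le_mul_abs_of_reduction {l₁ l₂ μ e s : ℝ} {q p r : ℤ} (hl₂ : 0 < l₂) (hq : 0 < q)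
    (he : q * l₁ = p * l₂ + e) (hs : q * μ = r * l₂ + s) (hs' : s ≤ l₂ / 2) (n m : ℤ) :
    s - |(n : ℝ)| * |e| ≤ q * |μ + n * l₁ - m * l₂| := by
  have hqr : (0 : ℝ) < q := by exact_mod_cast hq
  have hmul : (q : ℝ) * (μ + n * l₁ - m * l₂) =
      (((n * p - q * m + r : ℤ) : ℝ) * l₂ + s) - -(n * e) := by
    push_cast
    linear_combination n * he + hs
  have hdist : s ≤ |((n * p - q * m + r : ℤ) : ℝ) * l₂ + s| := by
    rcases le_or_gt 0 (n * p - q * m + r) with hN | hN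
    · have : (0 : ℝ) ≤ (n * p - q * m + r : ℤ) := by exact_mod_cast hN
      exact le_trans (by linarith [mul_nonneg this hl₂.le]) (le_abs_self _)
    · have : ((n * p - q * m + r : ℤ) : ℝ) ≤ -1 := by exact_mod_cast Int.le_sub_one_of_lt hN
      exact le_trans (by nlinarith) (neg_le_abs _)
  have htri := abs_sub_abs_le_abs_sub (((n * p - q * m + r : ℤ) : ℝ) * l₂ + s) (-(n * e))
  rw [← hmul, abs_mul, abs_of_pos hqr, abs_neg, abs_mul] at htri
  linarith

/-- The multiplier of the reduction, the denominator of a convergent of `log φ / log α`. -/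
def reductionDen : ℤ :=
  212952332387585910928193207848890932133582802528335305710742809438209616829815104809447003659593

/-- The nearest integer to `reductionDen * log φ / log α`. -/
def reductionNum : ℤ :=
  364421535009989968368336736212765571783674766203574763463504381062749966681045201477280615503381

/-- The integer part of `reductionDen * log ((2 * α + 3) / α ^ 5) / log α`. -/
def reductionShift : ℤ :=
  246544823124410367626055584864355438364794895116891889147414301657912211278343617744297199042751

variable {α : ℝ}

theorem log_two_mul_plastic_add_three (hα : α ^ 3 = α + 1) :
    Real.log (2 * α + 3) = Real.log ((2 * α + 3) / α ^ 5) + 5 * Real.log α := by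
  have : 0 < α := by linarith [lt_plastic hα]
  rw [Real.log_div (by positivity) (by positivity), Real.log_pow]
  push_cast
  ring

theorem abs_log_form_ge_of_le_ten_pow (hα : α ^ 3 = α + 1) {n : ℕ} (hn : n ≤ 10 ^ 95) (m : ℕ) :
    3 / 10 ^ 97 ≤ |Real.log (2 * α + 3) + n * Real.log φ - m * Real.log α| := by
  have hφ := abs_le.1 abs_log_goldenRatio_sub_le
  have hα' := abs_le.1 (abs_log_plastic_sub_le hα)
  have hμ := abs_le.1 (abs_log_quotient_sub_le hα)
  have hlow := (log_plastic_mem_Icc hα).1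
  rw [log_two_mul_plastic_add_three hα]
  generalize Real.log φ = l₁, Real.log α = l₂, Real.log ((2 * α + 3) / α ^ 5) = μ at *
  norm_num [logGoldenRatioApprox, logPlasticApprox, logQuotientApprox] at hφ hα' hμ
  have he : |reductionDen * l₁ - reductionNum * l₂| ≤ 3 / 10 ^ 98 := by
    rw [abs_le]
    constructor <;> norm_num [reductionDen, reductionNum] <;> linarith
  have hs : 0.08 ≤ reductionDen * μ - reductionShift * l₂ := by
    norm_num [reductionDen, reductionShift]
    linarith
  have hs' : reductionDen * μ - reductionShift * l₂ ≤ 0.12 := by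
    norm_num [reductionDen, reductionShift]
    linarith
  have hred := sub_le_mul_abs_of_reduction (l₁ := l₁) (l₂ := l₂) (μ := μ)
    (q := reductionDen) (p := reductionNum) (r := reductionShift)
    (e := reductionDen * l₁ - reductionNum * l₂) (s := reductionDen * μ - reductionShift * l₂)
    (by linarith) (by norm_num [reductionDen]) (by ring) (by ring) (hs'.trans (by linarith))
    n (m - 5)
  have hsmall : |((n : ℤ) : ℝ)| * |reductionDen * l₁ - reductionNum * l₂| ≤
      10 ^ 95 * (3 / 10 ^ 98) := by
    rw [Int.cast_natCast, Nat.abs_cast]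
    gcongr
    exact_mod_cast hn
  have hden : (reductionDen : ℝ) ≤ 2.2 * 10 ^ 95 := by norm_num [reductionDen]
  rw [show μ + 5 * l₂ + n * l₁ - m * l₂ =
    μ + ((n : ℤ) : ℝ) * l₁ - ((m - 5 : ℤ) : ℝ) * l₂ by push_cast; ring]
  nlinarith [abs_nonneg (μ + ((n : ℤ) : ℝ) * l₁ - ((m - 5 : ℤ) : ℝ) * l₂)]

end Reduction

section BadApproximation

open scoped goldenRatio

/-- `ε` is a lower bound for `|q * log α - p * log φ|` in the range of denominators `q` that the
lower bound for logarithmic forms inspects when the coefficients of the form are at most `exp ℓ`. -/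
def BadlyApproximable (α : ℝ) (ℓ : ℕ) (ε : ℝ) : Prop :=
  ∀ q : ℕ, 1 ≤ q → q ≤ 9600000 * ℓ → ∀ p : ℤ, ε ≤ |q * Real.log α - p * Real.log φ|

theorem AdmissiblePair.one_one (K : IntermediateField ℚ ℝ) (h : ℕ) : AdmissiblePair K h 1 1 where
  u_pos := one_pos
  v_pos := one_pos
  house_u := HouseLE.one.mono (Real.one_le_exp h.cast_nonneg)
  house_v := HouseLE.one.mono (Real.one_le_exp h.cast_nonneg)
  abs_log_sub_le := by simp

theorem pow_le_exp_of_le {k : ℕ} {x : ℝ} (hx : k ≤ x) : (2.7 : ℝ) ^ k ≤ Real.exp x := by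
  calc (2.7 : ℝ) ^ k ≤ Real.exp 1 ^ k := by
        gcongr
        linarith [Real.exp_one_gt_d9]
    _ = Real.exp k := by rw [← Real.exp_nat_mul, mul_one]
    _ ≤ Real.exp x := Real.exp_le_exp.2 hx

theorem exp_natCast_le (k : ℕ) : Real.exp k ≤ 2.7182818286 ^ k := by
  calc Real.exp k = Real.exp 1 ^ k := by rw [← Real.exp_nat_mul, mul_one]
    _ ≤ 2.7182818286 ^ k := by
        gcongr
        exact Real.exp_one_lt_d9.le

theorem exp_neg_le_inv_of_pow_le {k : ℕ} {x c : ℝ} (hx : k ≤ x) (hc : 0 < c)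
    (hck : c ≤ 2.7 ^ k) : Real.exp (-x) ≤ 1 / c := by
  rw [Real.exp_neg, inv_eq_one_div]
  exact one_div_le_one_div_of_le hc (hck.trans (pow_le_exp_of_le hx))

theorem cube_le_of_exp_le {k x : ℝ} (hk : 0 ≤ k) (hx : 10 ^ 37 ≤ x)
    (h : Real.exp k ≤ 28800000 * x) : 1.46 * 10 ^ 21 * k ^ 3 ≤ x := by
  have hx0 : 0 ≤ x := le_trans (by norm_num) hx
  have h12 : k ^ 12 ≤ 1.38 * 10 ^ 16 * x := by
    have := Real.pow_div_factorial_le_exp k hk 12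
    norm_num [div_le_iff₀, Nat.factorial] at this ⊢
    linarith
  refine le_of_pow_le_pow_left₀ (n := 4) (by norm_num) hx0 ?_
  calc (1.46 * 10 ^ 21 * k ^ 3) ^ 4 = (1.46 * 10 ^ 21) ^ 4 * k ^ 12 := by ring
    _ ≤ (1.46 * 10 ^ 21) ^ 4 * (1.38 * 10 ^ 16 * x) := by gcongr
    _ = (1.46 * 10 ^ 21) ^ 4 * (1.38 * 10 ^ 16) * x := by ring
    _ ≤ (10 ^ 37) ^ 3 * x := by gcongr; norm_num
    _ ≤ x ^ 3 * x := by gcongr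
    _ = x ^ 4 := by ring

theorem sq_le_exp_div_twenty {x : ℝ} (hx : 0 ≤ x) : x ^ 2 ≤ 800 * Real.exp (x / 20) := by
  have h := Real.pow_div_factorial_le_exp (x / 20) (by positivity) 2
  norm_num [Nat.factorial] at h
  linarith

theorem sq_mul_exp_le_exp {x : ℝ} (hx : 101 ≤ x) :
    2.88 * 10 ^ 14 * x ^ 2 * Real.exp (26 + x / 20) ≤ Real.exp x := by
  have h64 : 2.88 * 10 ^ 14 * 800 ≤ Real.exp (x - 26 - x / 20 - x / 20) :=
    le_trans (by norm_num) (pow_le_exp_of_le (k := 64) (by push_cast; linarith))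
  calc 2.88 * 10 ^ 14 * x ^ 2 * Real.exp (26 + x / 20)
      ≤ 2.88 * 10 ^ 14 * (800 * Real.exp (x / 20)) * Real.exp (26 + x / 20) := by
        gcongr
        exact sq_le_exp_div_twenty (by linarith)
    _ = 2.88 * 10 ^ 14 * 800 * (Real.exp (x / 20) * Real.exp (26 + x / 20)) := by ring
    _ ≤ Real.exp (x - 26 - x / 20 - x / 20) * (Real.exp (x / 20) * Real.exp (26 + x / 20)) := by
        gcongr
    _ = Real.exp x := by
        rw [← Real.exp_add, ← Real.exp_add]
        ring_nf

theorem le_exp_ceil_log {z : ℝ} (hz : 0 < z) : z ≤ Real.exp (⌈Real.log z⌉₊ : ℝ) :=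
  (Real.exp_log hz).symm.le.trans (Real.exp_le_exp.2 (Nat.le_ceil _))

theorem exp_ceil_log_le {z : ℝ} (hz : 1 ≤ z) : Real.exp (⌈Real.log z⌉₊ : ℝ) ≤ 3 * z := by
  have hz0 : 0 < z := by linarith
  calc Real.exp (⌈Real.log z⌉₊ : ℝ) ≤ Real.exp (Real.log z + 1) :=
        Real.exp_le_exp.2 (Nat.ceil_lt_add_one (Real.log_nonneg hz)).le
    _ = z * Real.exp 1 := by rw [Real.exp_add, Real.exp_log hz0]
    _ ≤ 3 * z := by nlinarith [Real.exp_one_lt_d9]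

variable {α : ℝ}

theorem badlyApproximable_of_lower_bound (hα : α ^ 3 = α + 1) {ℓ : ℕ}
    (hlarge : ∀ q : ℕ, 10 ^ 44 < q → q ≤ 9600000 * ℓ → ∀ p : ℤ, ∃ k : ℕ, Real.exp k ≤ 3 * q ∧
      Real.exp (-(7.3 * 10 ^ 19 * (k ^ 3 : ℝ))) ≤ |q * Real.log α - p * Real.log φ|) :
    BadlyApproximable α ℓ (Real.exp (-(26 + (ℓ : ℝ) / 20))) := by
  intro q hq hqℓ p
  have hqℓ' : (q : ℝ) ≤ 9600000 * ℓ := by exact_mod_cast hqℓ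
  rcases le_or_gt q 16320000000 with hq₁ | hq₁
  · refine le_trans ?_ (abs_mul_log_plastic_sub_ge_of_le_sixteen_billion hα hq hq₁ p)
    refine (exp_neg_le_inv_of_pow_le (k := 26) (c := 10 ^ 11 / 2.5) ?_ ?_ ?_).trans ?_
    · push_cast
      linarith [ℓ.cast_nonneg (α := ℝ)]
    all_goals norm_num
  rcases le_or_gt q (10 ^ 44) with hq₂ | hq₂
  · refine le_trans (exp_neg_le_inv_of_pow_le (k := 111) ?_ (by norm_num) (by norm_num))
      (abs_mul_log_plastic_sub_ge_of_le_ten_pow hα hq hq₂ p)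
    have : (16320000000 : ℝ) < q := by exact_mod_cast hq₁
    push_cast
    linarith
  · obtain ⟨k, hkq, hk⟩ := hlarge q hq₂ hqℓ p
    have hq₃ : (10 : ℝ) ^ 44 ≤ q := by exact_mod_cast hq₂.le
    have hcube := cube_le_of_exp_le (x := ℓ) k.cast_nonneg (by norm_num at hq₃ ⊢; linarith)
      (by linarith)
    refine le_trans (Real.exp_le_exp.2 (neg_le_neg ?_)) hk
    norm_num at hcube ⊢
    linarith

theorem BadlyApproximable.le (hα : α ^ 3 = α + 1) {ℓ : ℕ} (hℓ : 1 ≤ ℓ) {ε : ℝ}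
    (hε : BadlyApproximable α ℓ ε) : ε ≤ 0.12 := by
  have hlogα := log_plastic_mem_Icc hα
  have hlogφ := log_goldenRatio_mem_Icc
  refine (hε 2 one_le_two (by omega) 1).trans (abs_le.2 ⟨?_, ?_⟩) <;>
    push_cast <;> linarith [hlogα.1, hlogα.2, hlogφ.1, hlogφ.2]

theorem BadlyApproximable.exp_neg_le_abs_log_form (hα : α ^ 3 = α + 1) {u v ε : ℝ} {h ℓ x y : ℕ}
    (hε : BadlyApproximable α ℓ ε) (huv : AdmissiblePair (unitField α) h u v)
    (hh : 1 ≤ h) (hℓ : 1 ≤ ℓ) (hx : x ≤ Real.exp ℓ) (hy : y ≤ Real.exp ℓ)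
    (hyε : 9.6 * 10 ^ 13 * (h * ℓ ^ 2 : ℝ) ≤ y * ε) :
    Real.exp (-(7.3 * 10 ^ 19 * (h * ℓ ^ 3 : ℝ))) ≤
      |Real.log u - Real.log v + x * Real.log φ - y * Real.log α| := by
  have hlogα := log_plastic_mem_Icc hα
  have hlogφ := log_goldenRatio_mem_Icc
  have := finiteDimensional_unitField hα
  have hlarge : 8 * 10 ^ 14 * (h * ℓ ^ 2 : ℝ) ≤ y := by
    have := mul_le_mul_of_nonneg_left (hε.le hα hℓ) y.cast_nonneg
    linarith
  let P : LogForm (unitField α) :=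
    { a := φ, b := α, u := u, v := v, h := h
      one_lt_a := Real.one_lt_goldenRatio
      one_lt_b := by linarith [lt_plastic hα]
      house_a := houseLE_goldenRatio
      house_b := houseLE_plastic hα
      admissible := huv }
  refine P.exp_neg_le_abs_value (finrank_unitField_le hα) hh hℓ (by linarith [hlogφ.1])
    (by linarith [hlogφ.2]) (by linarith [hlogα.2]) hx hy (hlarge.trans hy) ?_ ?_
  · have : (4 * 10 ^ 14 * (h * ℓ ^ 2) : ℝ) ≤ y := by
      linarith [show (0 : ℝ) ≤ h * ℓ ^ 2 by positivity]
    exact_mod_cast this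
  · intro q hq hqℓ r
    have hqℓ' : (q : ℝ) ≤ 9600000 * ℓ := by exact_mod_cast hqℓ
    calc q * (10 ^ 7 * (h * ℓ : ℝ)) ≤ 9600000 * ℓ * (10 ^ 7 * (h * ℓ : ℝ)) := by gcongr
      _ = 9.6 * 10 ^ 13 * (h * ℓ ^ 2 : ℝ) := by ring
      _ ≤ y * ε := hyε
      _ ≤ y * |q * Real.log α - r * Real.log φ| := by
        gcongr
        exact hε q hq hqℓ r

theorem exp_neg_le_abs_mul_log_sub_of_badlyApproximable (hα : α ^ 3 = α + 1) {q ℓ : ℕ}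
    (hℓ : 101 ≤ ℓ) (hqℓ : q ≤ Real.exp ℓ) (hqℓ' : Real.exp ℓ ≤ 3 * q)
    (hbad : BadlyApproximable α ℓ (Real.exp (-(26 + (ℓ : ℝ) / 20)))) (p : ℤ) :
    Real.exp (-(7.3 * 10 ^ 19 * (ℓ ^ 3 : ℝ))) ≤ |q * Real.log α - p * Real.log φ| := by
  rcases le_or_gt 1 |q * Real.log α - p * Real.log φ| with hge | hlt
  · refine le_trans (Real.exp_le_one_iff.2 (neg_nonpos.2 ?_)) hge
    positivity
  have hlogα := log_plastic_mem_Icc hα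
  have hlogφ := log_goldenRatio_mem_Icc
  have hℓ' : (101 : ℝ) ≤ ℓ := by exact_mod_cast hℓ
  have hq : (10 : ℝ) ≤ q := by
    have := pow_le_exp_of_le (k := 4) (x := ℓ) (by push_cast; linarith)
    linarith
  rw [abs_lt] at hlt
  have hp : 0 ≤ p := by
    by_contra! hneg
    have : (p : ℝ) ≤ 0 := by exact_mod_cast hneg.le
    nlinarith [hlogα.1, hlogφ.1]
  lift p to ℕ using hp
  rw [Int.cast_natCast] at hlt ⊢
  have hpq : (p : ℝ) ≤ q := by
    nlinarith [hlogα.2, hlogφ.1, Nat.cast_nonneg (α := ℝ) p]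
  have hform := hbad.exp_neg_le_abs_log_form hα (AdmissiblePair.one_one _ 1) le_rfl (by omega)
    (hpq.trans hqℓ) hqℓ (by
      rw [Nat.cast_one, one_mul, Real.exp_neg, ← div_eq_mul_inv, le_div_iff₀ (Real.exp_pos _)]
      linarith [sq_mul_exp_le_exp hℓ'])
  rwa [sub_self, zero_add, abs_sub_comm, Nat.cast_one, one_mul] at hform

theorem exists_exp_neg_le_abs_mul_log_sub (hα : α ^ 3 = α + 1) {q : ℕ} (hq : 10 ^ 44 < q) (p : ℤ) :
    ∃ k : ℕ, Real.exp k ≤ 3 * q ∧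
      Real.exp (-(7.3 * 10 ^ 19 * (k ^ 3 : ℝ))) ≤ |q * Real.log α - p * Real.log φ| := by
  induction q using Nat.strong_induction_on generalizing p with
  | _ q ih =>
  have hq' : (10 : ℝ) ^ 44 < q := by exact_mod_cast hq
  have hq1 : (1 : ℝ) ≤ q := by linarith
  have hle := le_exp_ceil_log (zero_lt_one.trans_le hq1)
  have hge := exp_ceil_log_le hq1
  set ℓ := ⌈Real.log q⌉₊
  have hℓ : 101 ≤ ℓ := by
    by_contra! hlt
    have : Real.exp ℓ ≤ 10 ^ 44 := by
      calc Real.exp ℓ ≤ 2.7182818286 ^ ℓ := exp_natCast_le ℓ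
        _ ≤ 2.7182818286 ^ 100 := pow_le_pow_right₀ (by norm_num) (by omega)
        _ ≤ 10 ^ 44 := by norm_num
    linarith
  have hℓq : 9600000 * ℓ < q := by
    have hℓ' : (101 : ℝ) ≤ ℓ := by exact_mod_cast hℓ
    have h1 : 1 ≤ Real.exp (26 + (ℓ : ℝ) / 20) := Real.one_le_exp (by positivity)
    have : (9600000 * ℓ : ℝ) < q := by
      nlinarith [sq_mul_exp_le_exp hℓ', mul_le_mul_of_nonneg_left h1 (sq_nonneg (ℓ : ℝ))]
    exact_mod_cast this
  have hbad := badlyApproximable_of_lower_bound hα (ℓ := ℓ)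
    fun q' hq' hq'ℓ p' => ih q' (hq'ℓ.trans_lt hℓq) hq' p'
  exact ⟨ℓ, hge, exp_neg_le_abs_mul_log_sub_of_badlyApproximable hα hℓ hle hge hbad p⟩

theorem badlyApproximable (hα : α ^ 3 = α + 1) (ℓ : ℕ) :
    BadlyApproximable α ℓ (Real.exp (-(26 + (ℓ : ℝ) / 20))) :=
  badlyApproximable_of_lower_bound hα fun _ hq _ p => exists_exp_neg_le_abs_mul_log_sub hα hq p

end BadApproximation

section BinetFormulas

open scoped goldenRatio

theorem lucasSeq_eq (n : ℕ) : (lucasSeq n : ℝ) = φ ^ n + (1 - φ) ^ n := by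
  induction n using Nat.twoStepInduction with
  | zero => norm_num [lucasSeq]
  | one => simp [lucasSeq]
  | more n ih ih' =>
    rw [lucasSeq, Nat.cast_add, ih, ih']
    linear_combination (-(φ ^ n) - (1 - φ) ^ n) * Real.goldenRatio_sq

theorem abs_lucasSeq_sub_le (n : ℕ) : |lucasSeq n - φ ^ n| ≤ 1 := by
  rw [lucasSeq_eq, add_sub_cancel_left, abs_pow]
  refine pow_le_one₀ (abs_nonneg _) (abs_le.2 ⟨?_, ?_⟩) <;>
    linarith [Real.one_lt_goldenRatio, Real.goldenRatio_lt_two]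

/-- The dominant term of the Binet formula for the Padovan sequence. -/
noncomputable def padovanMain (α : ℝ) (m : ℕ) : ℝ :=
  α ^ (m + 5) / (2 * α + 3)

/-- The contribution of the two complex roots to the Binet formula for the Padovan sequence. -/
noncomputable def padovanError (α : ℝ) (m : ℕ) : ℝ :=
  padovan m - padovanMain α m

variable {α : ℝ}

theorem padovanMain_add (α : ℝ) (m l : ℕ) :
    padovanMain α (m + l) = padovanMain α m * α ^ l := by
  rw [padovanMain, padovanMain, add_right_comm, pow_add, mul_div_right_comm]

theorem padovanError_add_three (hα : α ^ 3 = α + 1) (m : ℕ) :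
    padovanError α (m + 3) = padovanError α (m + 1) + padovanError α m := by
  rw [padovanError, padovanError, padovanError, padovan, padovanMain_add, padovanMain_add, hα]
  push_cast
  ring

theorem plastic_pow_five (hα : α ^ 3 = α + 1) : α ^ 5 = α ^ 2 + α + 1 := by
  linear_combination (α ^ 2 + 1) * hα

theorem padovanError_add_two (hα : α ^ 3 = α + 1) (m : ℕ) :
    padovanError α (m + 2) = -(α * padovanError α (m + 1)) - (α ^ 2 - 1) * padovanError α m := by
  have hα1 := lt_plastic hα
  induction m with
  | zero =>
    have : 2 * α + 3 ≠ 0 := by positivity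
    have h4 : α ^ 4 = α ^ 2 + α := by linear_combination α * hα
    simp only [padovanError, padovanMain_add, padovan, Nat.cast_one]
    simp only [padovanMain, zero_add, plastic_pow_five hα]
    field_simp
    ring_nf
    rw [h4, hα]
    ring
  | succ m ih =>
    rw [show m + 1 + 2 = m + 3 by ring, padovanError_add_three hα, show m + 1 + 1 = m + 2 by ring]
    linear_combination α * ih - padovanError α m * hα

theorem padovanError_form_le (hα : α ^ 3 = α + 1) (m : ℕ) :
    padovanError α (m + 1) ^ 2 + α * padovanError α (m + 1) * padovanError α m +
      (α ^ 2 - 1) * padovanError α m ^ 2 ≤ 0.1 := by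
  have hα1 := lt_plastic hα
  have hα2 := plastic_lt hα
  induction m with
  | zero =>
    have h0 : padovanError α 0 = 1 - (α ^ 2 + α + 1) / (2 * α + 3) := by
      simp [padovanError, padovanMain, padovan, plastic_pow_five hα]
    have h1 : padovanError α 1 = 1 - (α ^ 2 + α + 1) * α / (2 * α + 3) := by
      simp [padovanError, padovanMain, padovan, pow_succ _ 5, plastic_pow_five hα]
    obtain ⟨hl0, hu0⟩ : 0.27 ≤ padovanError α 0 ∧ padovanError α 0 ≤ 0.28 := by
      rw [h0, one_sub_div (by positivity), le_div_iff₀ (by positivity), div_le_iff₀ (by positivity)]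
      constructor <;> nlinarith
    obtain ⟨hl1, hu1⟩ : 0.04 ≤ padovanError α 1 ∧ padovanError α 1 ≤ 0.05 := by
      rw [h1, one_sub_div (by positivity), le_div_iff₀ (by positivity), div_le_iff₀ (by positivity)]
      constructor <;> nlinarith
    calc padovanError α (0 + 1) ^ 2 + α * padovanError α (0 + 1) * padovanError α 0 +
          (α ^ 2 - 1) * padovanError α 0 ^ 2
        ≤ 0.05 ^ 2 + 1.3248 * 0.05 * 0.28 + (1.3248 ^ 2 - 1) * 0.28 ^ 2 := by
          rw [zero_add]
          gcongr
      _ ≤ 0.1 := by norm_num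
  | succ m ih =>
    calc padovanError α (m + 1 + 1) ^ 2 + α * padovanError α (m + 1 + 1) * padovanError α (m + 1) +
          (α ^ 2 - 1) * padovanError α (m + 1) ^ 2
        = (α ^ 2 - 1) * (padovanError α (m + 1) ^ 2 +
          α * padovanError α (m + 1) * padovanError α m +
            (α ^ 2 - 1) * padovanError α m ^ 2) := by
          rw [padovanError_add_two hα]
          ring
      _ ≤ (α ^ 2 - 1) * 0.1 := by
          gcongr
          nlinarith
      _ ≤ 0.1 := by nlinarith

theorem abs_padovanError_le (hα : α ^ 3 = α + 1) (m : ℕ) : |padovanError α m| ≤ 1 := by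
  have hα1 := lt_plastic hα
  have hα2 := plastic_lt hα
  have hdisc : 0.3 ≤ α ^ 2 - 1 - α ^ 2 / 4 := by nlinarith
  rw [abs_le_one_iff_mul_self_le_one]
  nlinarith [padovanError_form_le hα m, sq_nonneg (padovanError α m),
    sq_nonneg (padovanError α (m + 1) + α / 2 * padovanError α m)]

theorem le_padovanMain (hα : α ^ 3 = α + 1) (m : ℕ) : 0.7 ≤ padovanMain α m := by
  have hα1 := lt_plastic hα
  have hpow : α ^ 5 ≤ α ^ (m + 5) := pow_le_pow_right₀ (by linarith) (by omega)
  rw [padovanMain, le_div_iff₀ (by positivity)]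
  nlinarith [plastic_pow_five hα]

theorem abs_main_terms_sub_le (hα : α ^ 3 = α + 1) {n n₁ m m₁ : ℕ}
    (heq : (lucasSeq n : ℤ) - lucasSeq n₁ = (padovan m : ℤ) - padovan m₁) :
    |(φ ^ n - φ ^ n₁) - (padovanMain α m - padovanMain α m₁)| ≤ 4 := by
  have heq' : (lucasSeq n : ℝ) - lucasSeq n₁ = padovan m - padovan m₁ := by exact_mod_cast heq
  calc |(φ ^ n - φ ^ n₁) - (padovanMain α m - padovanMain α m₁)|
      = |(lucasSeq n₁ - φ ^ n₁) - (lucasSeq n - φ ^ n) +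
          (padovanError α m - padovanError α m₁)| := by
        rw [padovanError, padovanError]
        congr 1
        linear_combination heq'
    _ ≤ (1 + 1) + (1 + 1) := by
        refine (abs_add_le _ _).trans (add_le_add ((abs_sub _ _).trans ?_) ((abs_sub _ _).trans ?_))
        · exact add_le_add (abs_lucasSeq_sub_le _) (abs_lucasSeq_sub_le _)
        · exact add_le_add (abs_padovanError_le hα _) (abs_padovanError_le hα _)
    _ = 4 := by norm_num

end BinetFormulas

section NearSolution

open scoped goldenRatio

theorem abs_log_sub_log_le {X Y b c : ℝ} (hc : 0 < c) (hX : c ≤ X) (hY : c ≤ Y)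
    (h : |X - Y| ≤ b * c) : |Real.log X - Real.log Y| ≤ b := by
  have hb : 0 ≤ b := nonneg_of_mul_nonneg_left ((abs_nonneg _).trans h) hc
  have hone : ∀ {x y : ℝ}, c ≤ x → c ≤ y → x - y ≤ b * c → Real.log x - Real.log y ≤ b := by
    intro x y hx hy hxy
    have hx0 := hc.trans_le hx
    have hy0 := hc.trans_le hy
    calc Real.log x - Real.log y = Real.log (x / y) := (Real.log_div hx0.ne' hy0.ne').symm
      _ ≤ x / y - 1 := Real.log_le_sub_one_of_pos (div_pos hx0 hy0)
      _ = (x - y) / y := by rw [sub_div, div_self hy0.ne']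
      _ ≤ b := by
        rw [div_le_iff₀ hy0]
        exact hxy.trans (mul_le_mul_of_nonneg_left hy hb)
  rw [abs_le] at h ⊢
  have := hone hX hY h.2
  have := hone hY hX (by linarith)
  constructor <;> linarith

theorem le_goldenRatio : 1.618 ≤ φ := by
  have : (2.236 : ℝ) ≤ √5 := Real.le_sqrt_of_sq_le (by norm_num)
  rw [Real.goldenRatio]
  linarith

theorem pow_mul_exp_neg_mul_log {c : ℝ} (hc : 0 < c) (k : ℕ) :
    c ^ k * Real.exp (-(k * Real.log c)) = 1 := by
  rw [← Real.log_pow, Real.exp_neg, Real.exp_log (pow_pos hc k), mul_inv_cancel₀ (by positivity)]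

theorem goldenRatio_pow_eq_mul_exp (n₁ k : ℕ) :
    φ ^ n₁ = φ ^ (n₁ + k) * Real.exp (-(k * Real.log φ)) := by
  rw [pow_add, mul_assoc, pow_mul_exp_neg_mul_log Real.goldenRatio_pos, mul_one]

theorem goldenRatio_pow_add_eq (n₁ k : ℕ) :
    φ ^ (n₁ + k) = φ ^ n₁ * (φ ^ k - 1) + φ ^ n₁ := by
  ring

theorem padovanMain_add_eq (α : ℝ) (m₁ l : ℕ) :
    padovanMain α (m₁ + l) = padovanMain α m₁ * (α ^ l - 1) + padovanMain α m₁ := by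
  rw [padovanMain_add]
  ring

/-- A solution with indices `n₁ + k > n₁` and `m₁ + l > m₁`, remembered only through the dominant
terms of the Binet formulas. -/
structure NearSolution (α : ℝ) (n₁ k m₁ l : ℕ) : Prop where
  plastic : α ^ 3 = α + 1
  one_le_k : 1 ≤ k
  one_le_l : 1 ≤ l
  large : 1000 ≤ φ ^ (n₁ + k)
  abs_sub_le : |φ ^ n₁ * (φ ^ k - 1) - padovanMain α m₁ * (α ^ l - 1)| ≤ 4

namespace NearSolution

variable {α : ℝ} {n₁ k m₁ l : ℕ}

theorem le_lucas_side (P : NearSolution α n₁ k m₁ l) :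
    0.38 * φ ^ (n₁ + k) ≤ φ ^ n₁ * (φ ^ k - 1) := by
  have hφ := le_goldenRatio
  have hk : 1.618 ≤ φ ^ k := hφ.trans (le_self_pow₀ (by linarith) (by have := P.one_le_k; omega))
  rw [pow_add, mul_left_comm]
  gcongr
  linarith

theorem le_padovan_side (P : NearSolution α n₁ k m₁ l) :
    φ ^ (n₁ + k) / 3 ≤ padovanMain α m₁ * (α ^ l - 1) := by
  linarith [P.le_lucas_side, (abs_le.1 P.abs_sub_le).2, P.large]

theorem padovan_side_le (P : NearSolution α n₁ k m₁ l) :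
    0.24 * padovanMain α (m₁ + l) ≤ padovanMain α m₁ * (α ^ l - 1) := by
  have hα := lt_plastic P.plastic
  have hl : 1.3247 ≤ α ^ l :=
    hα.le.trans (le_self_pow₀ (by linarith) (by have := P.one_le_l; omega))
  have := le_padovanMain P.plastic m₁
  rw [padovanMain_add]
  nlinarith

theorem padovanMain_add_le (P : NearSolution α n₁ k m₁ l) :
    padovanMain α (m₁ + l) ≤ 5 * φ ^ (n₁ + k) := by
  have hn₁ : 0 ≤ φ ^ n₁ := by positivity
  linarith [P.padovan_side_le, (abs_le.1 P.abs_sub_le).1, P.large, goldenRatio_pow_add_eq n₁ k]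

theorem le_padovanMain_add (P : NearSolution α n₁ k m₁ l) :
    φ ^ (n₁ + k) / 3 ≤ padovanMain α (m₁ + l) := by
  have := le_padovanMain P.plastic m₁
  linarith [P.le_padovan_side, padovanMain_add_eq α m₁ l]

theorem padovanMain_le_mul_exp (P : NearSolution α n₁ k m₁ l) :
    padovanMain α m₁ ≤ 5 * (φ ^ (n₁ + k) * Real.exp (-(l * Real.log α))) := by
  have hα : 0 < α := by linarith [lt_plastic P.plastic]
  calc padovanMain α m₁ = padovanMain α (m₁ + l) * Real.exp (-(l * Real.log α)) := by
        rw [padovanMain_add, mul_assoc, pow_mul_exp_neg_mul_log hα, mul_one]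
    _ ≤ 5 * φ ^ (n₁ + k) * Real.exp (-(l * Real.log α)) := by
        gcongr
        exact P.padovanMain_add_le
    _ = 5 * (φ ^ (n₁ + k) * Real.exp (-(l * Real.log α))) := mul_assoc _ _ _

theorem abs_log_sub_log_le_exp (P : NearSolution α n₁ k m₁ l) {X Y t : ℝ}
    (hX : φ ^ (n₁ + k) / 3 ≤ X) (hY : φ ^ (n₁ + k) / 3 ≤ Y)
    (h : |X - Y| ≤ 60 * (φ ^ (n₁ + k) * Real.exp (-t))) :
    |Real.log X - Real.log Y| ≤ Real.exp (6 - t) := by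
  have := P.large
  refine abs_log_sub_log_le (by positivity) hX hY (h.trans ?_)
  have h6 : 180 ≤ Real.exp 6 :=
    le_trans (by norm_num) (pow_le_exp_of_le (k := 6) (by norm_num))
  have : 0 ≤ φ ^ (n₁ + k) * Real.exp (-t) := by positivity
  rw [sub_eq_add_neg, Real.exp_add]
  nlinarith

theorem abs_sub_le_of_le_min (P : NearSolution α n₁ k m₁ l) {t : ℝ} (htk : t ≤ k * Real.log φ)
    (htl : t ≤ l * Real.log α) :
    |φ ^ (n₁ + k) - padovanMain α (m₁ + l)| ≤ 60 * (φ ^ (n₁ + k) * Real.exp (-t)) := by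
  have hA := P.padovanMain_le_mul_exp
  have hD := (goldenRatio_pow_eq_mul_exp n₁ k).le
  have hA0 := le_padovanMain P.plastic m₁
  have hD1 : 1 ≤ φ ^ n₁ := one_le_pow₀ Real.one_lt_goldenRatio.le
  have hexp {s : ℝ} (hs : t ≤ s) :
      φ ^ (n₁ + k) * Real.exp (-s) ≤ φ ^ (n₁ + k) * Real.exp (-t) := by gcongr
  have hX := goldenRatio_pow_add_eq n₁ k
  have hY := padovanMain_add_eq α m₁ l
  have hP := abs_le.1 P.abs_sub_le
  refine abs_le.2 ⟨?_, ?_⟩ <;> linarith [hexp htk, hexp htl, hP.1, hP.2]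

theorem abs_lucas_side_sub_le (P : NearSolution α n₁ k m₁ l) :
    |φ ^ n₁ * (φ ^ k - 1) - padovanMain α (m₁ + l)| ≤
      60 * (φ ^ (n₁ + k) * Real.exp (-(l * Real.log α))) := by
  have hA := P.padovanMain_le_mul_exp
  have hA0 := le_padovanMain P.plastic m₁
  have hP := abs_le.1 P.abs_sub_le
  refine abs_le.2 ⟨?_, ?_⟩ <;>
    linarith [hP.1, hP.2, padovanMain_add_eq α m₁ l]

theorem abs_sub_padovan_side_le (P : NearSolution α n₁ k m₁ l) :
    |φ ^ (n₁ + k) - padovanMain α m₁ * (α ^ l - 1)| ≤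
      60 * (φ ^ (n₁ + k) * Real.exp (-(k * Real.log φ))) := by
  have hD1 : 1 ≤ φ ^ n₁ := one_le_pow₀ Real.one_lt_goldenRatio.le
  have hP := abs_le.1 P.abs_sub_le
  rw [← goldenRatio_pow_eq_mul_exp]
  refine abs_le.2 ⟨?_, ?_⟩ <;> linarith [hP.1, hP.2, goldenRatio_pow_add_eq n₁ k]

theorem abs_sides_sub_le (P : NearSolution α n₁ k m₁ l) :
    |φ ^ n₁ * (φ ^ k - 1) - padovanMain α m₁ * (α ^ l - 1)| ≤
      60 * (φ ^ (n₁ + k) * Real.exp (-((n₁ + k : ℕ) * Real.log φ))) := by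
  rw [pow_mul_exp_neg_mul_log Real.goldenRatio_pos]
  linarith [P.abs_sub_le]

end NearSolution

end NearSolution

section Bootstrap

open scoped goldenRatio

/-- Positive algebraic integers of `K` of house at most `exp B` and not close to zero, from which
admissible pairs can be formed. -/
structure AdmissibleFactor (K : IntermediateField ℚ ℝ) (B s : ℝ) : Prop where
  pos : 0 < s
  neg_two_le_log : -2 ≤ Real.log s
  house : HouseLE K (Real.exp B) s

theorem log_two_mul_plastic_add_three_mem_Icc {α : ℝ} (hα : α ^ 3 = α + 1) :
    Real.log (2 * α + 3) ∈ Set.Icc 0 2 := by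
  have hα1 := lt_plastic hα
  have hw := (houseLE_two_mul_plastic_add_three hα).abs_le
  exact ⟨Real.log_nonneg (by linarith),
    (Real.log_le_iff_le_exp (by positivity)).2 ((le_abs_self _).trans hw)⟩

namespace AdmissibleFactor

variable {K : IntermediateField ℚ ℝ} {α B s r : ℝ}

theorem one (hB : 0 ≤ B) : AdmissibleFactor K B 1 where
  pos := one_pos
  neg_two_le_log := by simp
  house := HouseLE.one.mono (Real.one_le_exp hB)

theorem pow_sub_one {z : ℝ} (hz : 1.3 ≤ z) (hzK : HouseLE K z z) {k : ℕ} (hk : 1 ≤ k)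
    (hB : k * Real.log z + 1 ≤ B) : AdmissibleFactor K B (z ^ k - 1) := by
  have hzk : 0.3 ≤ z ^ k - 1 := by
    linarith [le_self_pow₀ (a := z) (n := k) (by linarith) (by omega)]
  refine ⟨by linarith, ?_, (hzK.pow_sub_one (by linarith) k).mono (Real.exp_le_exp.2 hB)⟩
  rw [Real.le_log_iff_exp_le (by linarith)]
  refine le_trans (exp_neg_le_inv_of_pow_le (k := 2) (c := 1 / 0.3) ?_ ?_ ?_) ?_ <;>
    norm_num at hzk ⊢
  exact hzk

theorem log_le (hs : AdmissibleFactor K B s) : Real.log s ≤ B :=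
  (Real.log_le_iff_le_exp hs.pos).2 ((le_abs_self s).trans hs.house.abs_le)

theorem admissiblePair (hα : α ^ 3 = α + 1) {h : ℕ} (hs : AdmissibleFactor (unitField α) B s)
    (hr : AdmissibleFactor (unitField α) B r) (hB : B + 4 ≤ h) :
    AdmissiblePair (unitField α) h (s * (2 * α + 3)) r := by
  have hα1 := lt_plastic hα
  have hw := houseLE_two_mul_plastic_add_three hα
  obtain ⟨hw0, hw2⟩ := log_two_mul_plastic_add_three_mem_Icc hα
  refine ⟨mul_pos hs.pos (by positivity), hr.pos, (hs.house.mul hw).mono ?_, hr.house.mono ?_, ?_⟩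
  · rw [← Real.exp_add, Real.exp_le_exp]
    linarith
  · rw [Real.exp_le_exp]
    linarith
  · rw [Real.log_mul hs.pos.ne' (by positivity)]
    refine abs_le.2 ⟨?_, ?_⟩ <;>
      linarith [hs.log_le, hr.log_le, hs.neg_two_le_log, hr.neg_two_le_log]

end AdmissibleFactor

/-- `exp (-T)` is a lower bound for the logarithmic forms of height `h` whose coefficients have the
size they have in a solution with largest Lucas index `n`. -/
def LogFormLowerBound (α : ℝ) (n h : ℕ) (T : ℝ) : Prop :=
  ∀ u v : ℝ, AdmissiblePair (unitField α) h u v → ∀ x y : ℕ, x ≤ 2 * n → y ≤ 2 * n →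
    (1.4 * n : ℝ) ≤ y →
      Real.exp (-T) ≤ |Real.log u - Real.log v + x * Real.log φ - y * Real.log α|

variable {α : ℝ}

theorem log_form_eq (hα : α ^ 3 = α + 1) {s r : ℝ} (hs : 0 < s) (hr : 0 < r) (a b : ℕ) :
    Real.log (s * (2 * α + 3)) - Real.log r + a * Real.log φ - (b + 5 : ℕ) * Real.log α =
      Real.log (φ ^ a * s) - Real.log (padovanMain α b * r) := by
  have hα0 : 0 < α := by linarith [lt_plastic hα]
  have hφ := Real.goldenRatio_pos
  rw [padovanMain, Real.log_mul hs.ne' (by positivity), Real.log_mul (pow_pos hφ a).ne' hs.ne',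
    Real.log_mul (by positivity) hr.ne', Real.log_div (pow_pos hα0 _).ne' (by positivity),
    Real.log_pow, Real.log_pow]
  ring

namespace NearSolution

variable {n₁ k m₁ l : ℕ}

theorem le_add_six_of_lowerBound (P : NearSolution α n₁ k m₁ l) {h a b : ℕ} {T B s r t : ℝ}
    (hT : LogFormLowerBound α (n₁ + k) h T) (hs : AdmissibleFactor (unitField α) B s)
    (hr : AdmissibleFactor (unitField α) B r) (hB : B + 4 ≤ h) (ha : a ≤ 2 * (n₁ + k))
    (hb : b + 5 ≤ 2 * (n₁ + k)) (hb' : 1.4 * (n₁ + k : ℕ) ≤ (b + 5 : ℝ))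
    (hX : φ ^ (n₁ + k) / 3 ≤ φ ^ a * s) (hY : φ ^ (n₁ + k) / 3 ≤ padovanMain α b * r)
    (hXY : |φ ^ a * s - padovanMain α b * r| ≤ 60 * (φ ^ (n₁ + k) * Real.exp (-t))) :
    t ≤ T + 6 := by
  have hlow := hT _ _ (hs.admissiblePair P.plastic hr hB) a (b + 5) ha hb (by exact_mod_cast hb')
  rw [log_form_eq P.plastic hs.pos hr.pos] at hlow
  have := Real.exp_le_exp.1 (hlow.trans (P.abs_log_sub_log_le_exp hX hY hXY))
  linarith

theorem abs_log_form_le_exp (P : NearSolution α n₁ k m₁ l) :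
    |Real.log (2 * α + 3) + (n₁ + k : ℕ) * Real.log φ - (m₁ + l + 5 : ℕ) * Real.log α| ≤
      Real.exp (6 - min (k * Real.log φ) (l * Real.log α)) := by
  have hform := log_form_eq P.plastic one_pos one_pos (n₁ + k) (m₁ + l)
  rw [one_mul, Real.log_one, sub_zero, mul_one, mul_one] at hform
  rw [hform]
  have := P.large
  exact P.abs_log_sub_log_le_exp (by linarith) P.le_padovanMain_add
    (P.abs_sub_le_of_le_min (min_le_left _ _) (min_le_right _ _))

theorem abs_mul_log_sub_le (P : NearSolution α n₁ k m₁ l) :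
    |(n₁ + k : ℕ) * Real.log φ - (m₁ + l + 5 : ℕ) * Real.log α| ≤ 502 := by
  have hlogα := (log_plastic_mem_Icc P.plastic).1
  have hlogφ := log_goldenRatio_mem_Icc.1
  have hmin : 0 ≤ min (k * Real.log φ) (l * Real.log α) :=
    le_min (mul_nonneg k.cast_nonneg (by linarith)) (mul_nonneg l.cast_nonneg (by linarith))
  have h500 : Real.exp 6 ≤ 500 := (exp_natCast_le 6).trans (by norm_num)
  have hle := P.abs_log_form_le_exp.trans ((Real.exp_le_exp.2 (by linarith)).trans h500)
  obtain ⟨hw0, hw2⟩ := log_two_mul_plastic_add_three_mem_Icc P.plastic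
  rw [abs_le] at hle ⊢
  constructor <;> linarith [hle.1, hle.2]

theorem max_le_mul_add (P : NearSolution α n₁ k m₁ l) :
    max (k * Real.log φ) (l * Real.log α) ≤ 0.48122 * (n₁ + k : ℕ) + 502 := by
  have hlogα := (log_plastic_mem_Icc P.plastic).1
  obtain ⟨hlogφ₁, hlogφ₂⟩ := log_goldenRatio_mem_Icc
  have hsize := (abs_le.1 P.abs_mul_log_sub_le).1
  have hn : (n₁ + k : ℕ) * Real.log φ ≤ (n₁ + k : ℕ) * 0.48122 := by gcongr
  have hk : k * Real.log φ ≤ (n₁ + k : ℕ) * Real.log φ := by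
    gcongr
    omega
  have hl : l * Real.log α ≤ (m₁ + l + 5 : ℕ) * Real.log α := by
    gcongr
    omega
  exact max_le (by linarith) (by linarith)

theorem padovan_index_mem_Icc (P : NearSolution α n₁ k m₁ l) (hn : 10 ^ 10 ≤ n₁ + k) :
    (m₁ + l + 5 : ℝ) ∈ Set.Icc (1.7 * (n₁ + k : ℕ) : ℝ) (2 * (n₁ + k : ℕ)) := by
  obtain ⟨hlogα₁, hlogα₂⟩ := log_plastic_mem_Icc P.plastic
  obtain ⟨hlogφ₁, hlogφ₂⟩ := log_goldenRatio_mem_Icc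
  obtain ⟨h₁, h₂⟩ := abs_le.1 P.abs_mul_log_sub_le
  have hn' : (10 : ℝ) ^ 10 ≤ (n₁ + k : ℕ) := by exact_mod_cast hn
  have : (0 : ℝ) ≤ (m₁ + l + 5 : ℕ) := Nat.cast_nonneg _
  have hm_eq : (m₁ + l + 5 : ℝ) = (m₁ + l + 5 : ℕ) := by push_cast; ring
  rw [hm_eq]
  constructor <;> nlinarith

theorem le_padovan_index (P : NearSolution α n₁ k m₁ l) {B : ℝ} (hn : 10 ^ 10 ≤ n₁ + k)
    (hl : l * Real.log α ≤ B) (hB : B ≤ (n₁ + k : ℕ) / 100) :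
    1.4 * (n₁ + k : ℕ) ≤ (m₁ + 5 : ℝ) := by
  have hlogα := (log_plastic_mem_Icc P.plastic).1
  have := (P.padovan_index_mem_Icc hn).1
  have : l * 0.28119 ≤ l * Real.log α := by gcongr
  linarith

theorem add_five_le (P : NearSolution α n₁ k m₁ l) (hn : 10 ^ 10 ≤ n₁ + k) :
    m₁ + l + 5 ≤ 2 * (n₁ + k) := by
  exact_mod_cast (P.padovan_index_mem_Icc hn).2

theorem min_le_of_lowerBound (P : NearSolution α n₁ k m₁ l) {h : ℕ} {T : ℝ} (hh : 4 ≤ h)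
    (hn : 10 ^ 10 ≤ n₁ + k) (hT : LogFormLowerBound α (n₁ + k) h T) :
    min (k * Real.log φ) (l * Real.log α) ≤ T + 6 := by
  have hm := P.padovan_index_mem_Icc hn
  have := P.large
  refine P.le_add_six_of_lowerBound hT (.one le_rfl) (.one le_rfl) (by simpa using hh)
    (a := n₁ + k) (b := m₁ + l) (by omega) (P.add_five_le hn) ?_ (by linarith) ?_ ?_
  · push_cast at hm ⊢
    linarith [hm.1, k.cast_nonneg (α := ℝ), n₁.cast_nonneg (α := ℝ)]
  · rw [mul_one]
    exact P.le_padovanMain_add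
  · rw [mul_one, mul_one]
    exact P.abs_sub_le_of_le_min (min_le_left _ _) (min_le_right _ _)

theorem mul_log_plastic_le_of_lowerBound (P : NearSolution α n₁ k m₁ l) {h : ℕ} {B T : ℝ}
    (hk : k * Real.log φ ≤ B) (hh : B + 5 ≤ h) (hn : 10 ^ 10 ≤ n₁ + k)
    (hT : LogFormLowerBound α (n₁ + k) h T) : l * Real.log α ≤ T + 6 := by
  have hm := P.padovan_index_mem_Icc hn
  have hB : 0 ≤ k * Real.log φ := mul_nonneg k.cast_nonneg (by linarith [log_goldenRatio_mem_Icc.1])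
  have := P.large
  refine P.le_add_six_of_lowerBound hT (B := B + 1) (r := 1)
    (.pow_sub_one (by linarith [le_goldenRatio]) houseLE_goldenRatio P.one_le_k (by linarith))
    (.one (by linarith)) (by linarith)
    (a := n₁) (b := m₁ + l) (by omega) (P.add_five_le hn) ?_ ?_ ?_ ?_
  · push_cast at hm ⊢
    linarith [hm.1, k.cast_nonneg (α := ℝ), n₁.cast_nonneg (α := ℝ)]
  · linarith [P.le_lucas_side]
  · rw [mul_one]
    exact P.le_padovanMain_add
  · rw [mul_one]
    exact P.abs_lucas_side_sub_le

theorem mul_log_goldenRatio_le_of_lowerBound (P : NearSolution α n₁ k m₁ l) {h : ℕ} {B T : ℝ}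
    (hl : l * Real.log α ≤ B) (hBn : B ≤ (n₁ + k : ℕ) / 100) (hh : B + 5 ≤ h)
    (hn : 10 ^ 10 ≤ n₁ + k) (hT : LogFormLowerBound α (n₁ + k) h T) :
    k * Real.log φ ≤ T + 6 := by
  have hα := lt_plastic P.plastic
  have hB : 0 ≤ l * Real.log α :=
    mul_nonneg l.cast_nonneg (by linarith [(log_plastic_mem_Icc P.plastic).1])
  have := P.large
  have := P.add_five_le hn
  refine P.le_add_six_of_lowerBound hT (B := B + 1) (s := 1) (.one (by linarith))
    (.pow_sub_one (by linarith) (houseLE_plastic P.plastic) P.one_le_l (by linarith)) (by linarith)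
    (a := n₁ + k) (b := m₁) (by omega) (by omega) (P.le_padovan_index hn hl hBn) ?_
    P.le_padovan_side ?_
  · linarith
  · rw [mul_one]
    exact P.abs_sub_padovan_side_le

theorem max_le_of_lowerBound (P : NearSolution α n₁ k m₁ l) {h : ℕ} {B T : ℝ}
    (hmin : min (k * Real.log φ) (l * Real.log α) ≤ B) (hBn : B ≤ (n₁ + k : ℕ) / 100)
    (hh : B + 5 ≤ h) (hn : 10 ^ 10 ≤ n₁ + k) (hT : LogFormLowerBound α (n₁ + k) h T) :
    max (k * Real.log φ) (l * Real.log α) ≤ max B (T + 6) := by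
  rcases min_le_iff.1 hmin with hk | hl
  · exact max_le_max hk (P.mul_log_plastic_le_of_lowerBound hk hh hn hT)
  · rw [max_comm]
    exact max_le_max hl (P.mul_log_goldenRatio_le_of_lowerBound hl hBn hh hn hT)

theorem add_mul_log_le_of_lowerBound (P : NearSolution α n₁ k m₁ l) {h : ℕ} {B T : ℝ}
    (hmax : max (k * Real.log φ) (l * Real.log α) ≤ B) (hBn : B ≤ (n₁ + k : ℕ) / 100)
    (hh : B + 5 ≤ h) (hn : 10 ^ 10 ≤ n₁ + k) (hT : LogFormLowerBound α (n₁ + k) h T) :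
    (n₁ + k : ℕ) * Real.log φ ≤ T + 6 := by
  obtain ⟨hk, hl⟩ := max_le_iff.1 hmax
  have hα := lt_plastic P.plastic
  have := P.add_five_le hn
  refine P.le_add_six_of_lowerBound hT (B := B + 1)
    (.pow_sub_one (by linarith [le_goldenRatio]) houseLE_goldenRatio P.one_le_k (by linarith))
    (.pow_sub_one (by linarith) (houseLE_plastic P.plastic) P.one_le_l (by linarith)) (by linarith)
    (a := n₁) (b := m₁) (by omega) (by omega) (P.le_padovan_index hn hl hBn) ?_
    P.le_padovan_side P.abs_sides_sub_le
  linarith [P.le_lucas_side, P.large]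

end NearSolution

end Bootstrap

section IndexBound

open scoped goldenRatio

variable {α : ℝ}

theorem BadlyApproximable.logFormLowerBound (hα : α ^ 3 = α + 1) {n h ℓ : ℕ} {ε : ℝ}
    (hε : BadlyApproximable α ℓ ε) (hε0 : 0 ≤ ε) (hh : 1 ≤ h) (hℓ : 1 ≤ ℓ) (hn : 2 * n ≤ Real.exp ℓ)
    (hnε : 9.6 * 10 ^ 13 * (h * ℓ ^ 2 : ℝ) ≤ 1.4 * n * ε) :
    LogFormLowerBound α n h (7.3 * 10 ^ 19 * (h * ℓ ^ 3 : ℝ)) := by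
  intro u v huv x y hx hy hny
  have hx' : (x : ℝ) ≤ 2 * n := by exact_mod_cast hx
  have hy' : (y : ℝ) ≤ 2 * n := by exact_mod_cast hy
  exact hε.exp_neg_le_abs_log_form hα huv hh hℓ (hx'.trans hn) (hy'.trans hn)
    (hnε.trans (mul_le_mul_of_nonneg_right hny hε0))

theorem pow_eight_mul_exp_le_exp {x : ℝ} (hx : 219 ≤ x) :
    2.2 * 10 ^ 55 * x ^ 8 * Real.exp (26 + x / 20) ≤ Real.exp x := by
  have hx8 : x ^ 8 ≤ 219 ^ 8 * Real.exp (8 * (x / 219 - 1)) := by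
    calc x ^ 8 ≤ (219 * Real.exp (x / 219 - 1)) ^ 8 := by
          gcongr
          linarith [Real.add_one_le_exp (x / 219 - 1)]
      _ = 219 ^ 8 * Real.exp (8 * (x / 219 - 1)) := by
          rw [mul_pow, ← Real.exp_nat_mul, Nat.cast_ofNat]
  have h182 : 2.2 * 10 ^ 55 * 219 ^ 8 ≤ Real.exp (x - (26 + x / 20) - 8 * (x / 219 - 1)) :=
    le_trans (by norm_num) (pow_le_exp_of_le (k := 182) (by push_cast; linarith))
  calc 2.2 * 10 ^ 55 * x ^ 8 * Real.exp (26 + x / 20)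
      ≤ 2.2 * 10 ^ 55 * (219 ^ 8 * Real.exp (8 * (x / 219 - 1))) * Real.exp (26 + x / 20) := by
        gcongr
    _ = 2.2 * 10 ^ 55 * 219 ^ 8 * (Real.exp (8 * (x / 219 - 1)) * Real.exp (26 + x / 20)) := by ring
    _ ≤ Real.exp (x - (26 + x / 20) - 8 * (x / 219 - 1)) *
          (Real.exp (8 * (x / 219 - 1)) * Real.exp (26 + x / 20)) := by gcongr
    _ = Real.exp x := by
        rw [← Real.exp_add, ← Real.exp_add]
        ring_nf

theorem pow_nine_le_exp {x : ℝ} (hx : 219 ≤ x) : 10 ^ 65 * x ^ 9 ≤ Real.exp x := by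
  have h26 : 2.7 ^ 26 * (x / 20) ≤ Real.exp (26 + x / 20) := by
    rw [Real.exp_add]
    exact mul_le_mul (pow_le_exp_of_le (by norm_num)) (by linarith [Real.add_one_le_exp (x / 20)])
      (by linarith) (Real.exp_pos _).le
  calc 10 ^ 65 * x ^ 9 ≤ 2.2 * 10 ^ 55 * 2.7 ^ 26 / 20 * x ^ 9 := by gcongr; norm_num
    _ = 2.2 * 10 ^ 55 * x ^ 8 * (2.7 ^ 26 * (x / 20)) := by ring
    _ ≤ 2.2 * 10 ^ 55 * x ^ 8 * Real.exp (26 + x / 20) := by gcongr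
    _ ≤ Real.exp x := pow_eight_mul_exp_le_exp hx

theorem logFormLowerBound_of_height_le (hα : α ^ 3 = α + 1) {n h ℓ : ℕ} (hℓ : 219 ≤ ℓ)
    (hn : 2 * n ≤ Real.exp ℓ) (hn' : Real.exp ℓ ≤ 6 * n) (hh : 1 ≤ h)
    (hhℓ : h ≤ 22 * 10 ^ 39 * ℓ ^ 6) :
    LogFormLowerBound α n h (7.3 * 10 ^ 19 * (h * ℓ ^ 3 : ℝ)) := by
  refine (badlyApproximable hα ℓ).logFormLowerBound hα (Real.exp_pos _).le hh (by omega) hn ?_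
  have hℓ' : (219 : ℝ) ≤ ℓ := by exact_mod_cast hℓ
  have hhℓ' : (h : ℝ) ≤ 22 * 10 ^ 39 * ℓ ^ 6 := by exact_mod_cast hhℓ
  have hexp := Real.exp_pos (26 + (ℓ : ℝ) / 20)
  rw [Real.exp_neg, ← div_eq_mul_inv, le_div_iff₀ hexp]
  calc 9.6 * 10 ^ 13 * (h * ℓ ^ 2 : ℝ) * Real.exp (26 + ℓ / 20)
      ≤ 9.6 * 10 ^ 13 * (22 * 10 ^ 39 * ℓ ^ 6 * ℓ ^ 2 : ℝ) * Real.exp (26 + ℓ / 20) := by gcongr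
    _ = 9.6 / 10 ^ 2 * (2.2 * 10 ^ 55 * ℓ ^ 8 * Real.exp (26 + ℓ / 20)) := by ring
    _ ≤ 9.6 / 10 ^ 2 * Real.exp ℓ := by
        gcongr
        exact pow_eight_mul_exp_le_exp hℓ'
    _ ≤ 1.4 * n := by linarith

theorem natCast_le_log_of_pow_le {r : ℕ} {z : ℝ} (hrz : 2.7182818286 ^ r ≤ z) : r ≤ Real.log z :=
  (Real.le_log_iff_exp_le (lt_of_lt_of_le (by positivity) hrz)).2 ((exp_natCast_le r).trans hrz)

namespace NearSolution

variable {n₁ k m₁ l : ℕ}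

theorem six_mul_lt_exp (P : NearSolution α n₁ k m₁ l) {ℓ : ℕ} (hℓ : 219 ≤ ℓ)
    (hn : 2 * (n₁ + k : ℕ) ≤ Real.exp ℓ) : 6 * (n₁ + k : ℕ) < Real.exp ℓ := by
  by_contra! hn'
  have hα := P.plastic
  have hℓ' : (219 : ℝ) ≤ ℓ := by exact_mod_cast hℓ
  have hℓ_pow (i j : ℕ) (hij : i ≤ j) : (ℓ : ℝ) ^ i ≤ (ℓ : ℝ) ^ j :=
    pow_le_pow_right₀ (by linarith) hij
  have h03 := hℓ_pow 0 3 (by norm_num)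
  have h36 := hℓ_pow 3 6 (by norm_num)
  have h69 := hℓ_pow 6 9 (by norm_num)
  rw [pow_zero] at h03
  have hexp := pow_nine_le_exp hℓ'
  have hn10 : 10 ^ 10 ≤ n₁ + k := by
    have : (10 : ℝ) ^ 10 ≤ (n₁ + k : ℕ) := by linarith
    exact_mod_cast this
  have hT {h : ℕ} := logFormLowerBound_of_height_le hα (h := h) hℓ hn hn'
  have hℓ3 : 1 ≤ ℓ ^ 3 := Nat.one_le_pow _ _ (by omega)
  have hℓ36 : ℓ ^ 3 ≤ ℓ ^ 6 := Nat.pow_le_pow_right (by omega) (by norm_num)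
  have hmin : min (k * Real.log φ) (l * Real.log α) ≤ 2.93 * 10 ^ 20 * ℓ ^ 3 := by
    refine (P.min_le_of_lowerBound le_rfl hn10 (hT (by norm_num) (by omega))).trans ?_
    push_cast
    linarith
  have hmax : max (k * Real.log φ) (l * Real.log α) ≤ 2.195 * 10 ^ 40 * ℓ ^ 6 := by
    refine (P.max_le_of_lowerBound hmin (by linarith) (h := 3 * 10 ^ 20 * ℓ ^ 3) ?_ hn10
      (hT (by omega) (by omega))).trans (max_le (by linarith) ?_) <;> push_cast
    · linarith
    · linarith
  have hindex := P.add_mul_log_le_of_lowerBound hmax (by linarith) (h := 22 * 10 ^ 39 * ℓ ^ 6)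
    (by push_cast; linarith) hn10 (hT (by omega) le_rfl)
  push_cast at hindex hn'
  nlinarith [log_goldenRatio_mem_Icc.1]

theorem index_le (P : NearSolution α n₁ k m₁ l) : n₁ + k ≤ 10 ^ 95 := by
  by_contra! hgt
  have hn : (10 : ℝ) ^ 95 ≤ (n₁ + k : ℕ) := by exact_mod_cast hgt.le
  have hle := le_exp_ceil_log (z := 2 * (n₁ + k : ℕ)) (by linarith)
  have hge := exp_ceil_log_le (z := 2 * (n₁ + k : ℕ)) (by linarith)
  set ℓ := ⌈Real.log (2 * (n₁ + k : ℕ))⌉₊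
  have hℓ : 219 ≤ ℓ := by
    by_contra! hlt
    have : Real.exp ℓ ≤ 10 ^ 95 := by
      calc Real.exp ℓ ≤ 2.7182818286 ^ ℓ := exp_natCast_le ℓ
        _ ≤ 2.7182818286 ^ 218 := pow_le_pow_right₀ (by norm_num) (by omega)
        _ ≤ 10 ^ 95 := by norm_num
    linarith
  linarith [P.six_mul_lt_exp hℓ hle]

theorem min_le (P : NearSolution α n₁ k m₁ l) :
    min (k * Real.log φ) (l * Real.log α) ≤ 230 := by
  by_contra! hlt
  have hexp : Real.exp (6 - min (k * Real.log φ) (l * Real.log α)) < 3 / 10 ^ 97 := by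
    calc Real.exp (6 - min (k * Real.log φ) (l * Real.log α)) < Real.exp (-224) :=
          Real.exp_lt_exp.2 (by linarith)
      _ ≤ 1 / (10 ^ 97 / 3) := exp_neg_le_inv_of_pow_le (k := 224) (by norm_num) (by norm_num)
          (by norm_num)
      _ = 3 / 10 ^ 97 := by norm_num
  exact ((abs_log_form_ge_of_le_ten_pow P.plastic P.index_le _).trans
    P.abs_log_form_le_exp).not_gt hexp

theorem max_le (P : NearSolution α n₁ k m₁ l) (hn : 2.8 * 10 ^ 31 ≤ ((n₁ + k : ℕ) : ℝ)) :
    max (k * Real.log φ) (l * Real.log α) ≤ 2 * 10 ^ 29 := by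
  have hα := P.plastic
  have hbad : BadlyApproximable α 221 (2.89 / 10 ^ 11) := fun q hq hqℓ p =>
    abs_mul_log_plastic_sub_ge_of_le_two_billion hα hq (hqℓ.trans (by norm_num)) p
  have hexp : 2 * ((n₁ + k : ℕ) : ℝ) ≤ Real.exp (221 : ℕ) := by
    have : ((n₁ + k : ℕ) : ℝ) ≤ 10 ^ 95 := by exact_mod_cast P.index_le
    refine le_trans ?_ (pow_le_exp_of_le le_rfl)
    linarith
  have hT := hbad.logFormLowerBound hα (h := 240) (by norm_num) (by norm_num) (by norm_num) hexp
    (by push_cast at hn ⊢; linarith)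
  refine (P.max_le_of_lowerBound P.min_le (by linarith) (by norm_num) ?_ hT).trans ?_
  · have : (10 : ℝ) ^ 10 ≤ (n₁ + k : ℕ) := by linarith
    exact_mod_cast this
  · norm_num

theorem max_lt (P : NearSolution α n₁ k m₁ l) :
    max (k * Real.log φ) (l * Real.log α) <
      2.57 * 10 ^ 27 * (1 + Real.log (2 * (n₁ + k : ℕ))) ^ 2 := by
  have hlin := P.max_le_mul_add
  have hmono {r : ℕ} (hr : r ≤ Real.log (2 * (n₁ + k : ℕ))) :
      2.57 * 10 ^ 27 * (1 + r : ℝ) ^ 2 ≤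
        2.57 * 10 ^ 27 * (1 + Real.log (2 * (n₁ + k : ℕ))) ^ 2 := by gcongr
  have hlog (r : ℕ) (hr : 2.7182818286 ^ r ≤ 2 * ((n₁ + k : ℕ) : ℝ)) :=
    hmono (natCast_le_log_of_pow_le hr)
  rcases lt_or_ge ((n₁ + k : ℕ) : ℝ) (10 ^ 27) with h₁ | h₁
  · have hn : (1 : ℝ) ≤ (n₁ + k : ℕ) := by exact_mod_cast P.one_le_k.trans (Nat.le_add_left _ _)
    linarith [hlog 0 (by linarith)]
  rcases lt_or_ge ((n₁ + k : ℕ) : ℝ) (10 ^ 31) with h₂ | h₂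
  · linarith [hlog 61 (by linarith)]
  have h72 := hlog 72 (by linarith)
  rcases lt_or_ge ((n₁ + k : ℕ) : ℝ) (2.8 * 10 ^ 31) with h₃ | h₃
  · linarith
  · linarith [P.max_le h₃]

end NearSolution

theorem max_le_eight_of_pow_lt (hα : α ^ 3 = α + 1) {n₁ k m₁ l : ℕ} (hsmall : φ ^ (n₁ + k) < 1000)
    (hsub : |φ ^ n₁ * (φ ^ k - 1) - padovanMain α m₁ * (α ^ l - 1)| ≤ 4) :
    max (k * Real.log φ) (l * Real.log α) ≤ 8 := by
  have hα1 := lt_plastic hα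
  have hφk : φ ^ k ≤ φ ^ (n₁ + k) :=
    pow_le_pow_right₀ Real.one_lt_goldenRatio.le (Nat.le_add_left _ _)
  have hαl : α ^ l ≤ 2000 := by
    have hmain := le_padovanMain hα m₁
    have hl : 1 ≤ α ^ l := one_le_pow₀ (by linarith)
    have hn₁ : 0 ≤ φ ^ n₁ := by positivity
    nlinarith [(abs_le.1 hsub).1, goldenRatio_pow_add_eq n₁ k]
  have hexp : 2000 ≤ Real.exp 8 := le_trans (by norm_num) (pow_le_exp_of_le (k := 8) (by norm_num))
  rw [← Real.log_pow, ← Real.log_pow]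
  refine max_le ((Real.log_le_iff_le_exp (by positivity)).2 (by linarith))
    ((Real.log_le_iff_le_exp (pow_pos (by linarith) l)).2 (by linarith))

end IndexBound

theorem min_max_bounds_general (α : ℝ) (hα : α ^ 3 = α + 1) (n n₁ m m₁ : ℕ) (hnn₁ : n₁ < n)
    (hmm₁ : m₁ < m)
    (heq : (lucasSeq n : ℤ) - (lucasSeq n₁ : ℤ) = (padovan m : ℤ) - (padovan m₁ : ℤ)) :
    min (((n : ℝ) - n₁) * Real.log ((1 + Real.sqrt 5) / 2)) (((m : ℝ) - m₁) * Real.log α) <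
      7.33 * 10 ^ 13 * (1 + Real.log (2 * n)) ∧
    max (((n : ℝ) - n₁) * Real.log ((1 + Real.sqrt 5) / 2)) (((m : ℝ) - m₁) * Real.log α) <
      2.57 * 10 ^ 27 * (1 + Real.log (2 * n)) ^ 2 := by
  have hsub := abs_main_terms_sub_le hα heq
  obtain ⟨k, rfl⟩ := Nat.exists_eq_add_of_le hnn₁.le
  obtain ⟨l, rfl⟩ := Nat.exists_eq_add_of_le hmm₁.le
  rw [goldenRatio_pow_add_eq, padovanMain_add_eq, add_sub_cancel_right, add_sub_cancel_right]
    at hsub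
  rw [← Real.goldenRatio, Nat.cast_add m₁, add_sub_cancel_left,
    show ((n₁ + k : ℕ) : ℝ) - n₁ = k by push_cast; ring]
  have hlog : 0 ≤ Real.log (2 * (n₁ + k : ℕ)) :=
    Real.log_nonneg (by exact_mod_cast (by omega : 1 ≤ 2 * (n₁ + k)))
  rcases lt_or_ge (Real.goldenRatio ^ (n₁ + k)) 1000 with hsmall | hlarge
  · have hmax := max_le_eight_of_pow_lt hα hsmall hsub
    have := min_le_max.trans hmax
    constructor <;> nlinarith
  · have P : NearSolution α n₁ k m₁ l := ⟨hα, by omega, by omega, hlarge, hsub⟩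
    exact ⟨by linarith [P.min_le], P.max_lt⟩

theorem min_max_bounds (α : ℝ) (hα : α ^ 3 = α + 1)
    (n n₁ m m₁ : ℕ) (hn₁ : 1 ≤ n₁) (hnn₁ : n₁ < n) (hm₁ : 1 ≤ m₁) (hmm₁ : m₁ < m)
    (hn : 300 ≤ n)
    (heq : (lucasSeq n : ℤ) - (lucasSeq n₁ : ℤ) = (padovan m : ℤ) - (padovan m₁ : ℤ)) :
    min (((n : ℝ) - n₁) * Real.log ((1 + Real.sqrt 5) / 2)) (((m : ℝ) - m₁) * Real.log α) <
      7.33 * 10 ^ 13 * (1 + Real.log (2 * n)) ∧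
    max (((n : ℝ) - n₁) * Real.log ((1 + Real.sqrt 5) / 2)) (((m : ℝ) - m₁) * Real.log α) <
      2.57 * 10 ^ 27 * (1 + Real.log (2 * n)) ^ 2 :=
  min_max_bounds_general α hα n n₁ m m₁ hnn₁ hmm₁ heq
end

section
/- (Dujella–Pethő reduction lemma) Let M be a positive integer, let τ be an irrational real number, and let p/q be a convergent of the continued fraction expansion of τ with q > 6M. Let A, B, μ be real numbers with A > 0 and B > 1, and set ε := ‖μq‖ − M·‖τq‖, where ‖x‖ denotes the distance from x to the nearest integer. If ε > 0, then there is no solution in integers u, v, w of the inequality 0 < |uτ − v + μ| < A·B^{−w} with 1 ≤ u ≤ M and w ≥ log(Aq/ε)/log B. -/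
/-- The distance from a real number to the nearest integer. -/
noncomputable def distNearestInt (x : ℝ) : ℝ := |x - round x|

/-!
For integers `u` and `v`, the number `μ q` is congruent modulo `1` to
`q (u τ - v + μ) - u (τ q)`. Subadditivity of the distance to the nearest integer therefore gives
`‖μ q‖ ≤ q |u τ - v + μ| + |u| ‖τ q‖`, so `ε ≤ q |u τ - v + μ|` as soon as `|u| ≤ M`. The lower
bound on `w` says exactly that `q A B ^ (-w) ≤ ε`, which contradicts `|u τ - v + μ| < A B ^ (-w)`.
-/

theorem distNearestInt_le_abs_sub (x : ℝ) (n : ℤ) : distNearestInt x ≤ |x - n| :=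
  round_le x n

theorem distNearestInt_le_abs (x : ℝ) : distNearestInt x ≤ |x| := by
  simpa only [Int.cast_zero, sub_zero] using distNearestInt_le_abs_sub x 0

theorem distNearestInt_nonneg (x : ℝ) : 0 ≤ distNearestInt x :=
  abs_nonneg _

theorem distNearestInt_add_intCast (x : ℝ) (n : ℤ) :
    distNearestInt (x + n) = distNearestInt x := by
  rw [distNearestInt, distNearestInt, round_add_intCast, Int.cast_add, add_sub_add_right_eq_sub]

theorem distNearestInt_add_le (x y : ℝ) :
    distNearestInt (x + y) ≤ distNearestInt x + distNearestInt y :=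
  calc
    distNearestInt (x + y) ≤ |x + y - (round x + round y : ℤ)| := distNearestInt_le_abs_sub _ _
    _ = |(x - round x) + (y - round y)| := by rw [Int.cast_add, add_sub_add_comm]
    _ ≤ distNearestInt x + distNearestInt y := abs_add_le _ _

theorem distNearestInt_intCast_mul_le (n : ℤ) (x : ℝ) :
    distNearestInt (n * x) ≤ |(n : ℝ)| * distNearestInt x :=
  calc
    distNearestInt (n * x) ≤ |n * x - (n * round x : ℤ)| := distNearestInt_le_abs_sub _ _
    _ = |(n : ℝ)| * distNearestInt x := by rw [Int.cast_mul, ← mul_sub, abs_mul, distNearestInt]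

theorem distNearestInt_mul_le (τ μ : ℝ) (q : ℕ) (u v : ℤ) :
    distNearestInt (μ * q) ≤ q * |u * τ - v + μ| + |(u : ℝ)| * distNearestInt (τ * q) :=
  calc
    distNearestInt (μ * q)
      = distNearestInt (q * (u * τ - v + μ) + (-u : ℤ) * (τ * q) + (q * v : ℤ)) := by
        congr 1; push_cast; ring
    _ = distNearestInt (q * (u * τ - v + μ) + (-u : ℤ) * (τ * q)) :=
        distNearestInt_add_intCast _ _
    _ ≤ distNearestInt (q * (u * τ - v + μ)) + distNearestInt ((-u : ℤ) * (τ * q)) :=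
        distNearestInt_add_le _ _
    _ ≤ |q * (u * τ - v + μ)| + |((-u : ℤ) : ℝ)| * distNearestInt (τ * q) :=
        add_le_add (distNearestInt_le_abs _) (distNearestInt_intCast_mul_le _ _)
    _ = q * |u * τ - v + μ| + |(u : ℝ)| * distNearestInt (τ * q) := by
        rw [abs_mul, Nat.abs_cast, Int.cast_neg, abs_neg]

theorem mul_rpow_neg_le_of_logb_div_le {B C ε w : ℝ} (hB : 1 < B) (hC : 0 < C) (hε : 0 < ε)
    (hw : Real.logb B (C / ε) ≤ w) : C * B ^ (-w) ≤ ε := by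
  have hB₀ : 0 < B := one_pos.trans hB
  have hCε : C / ε ≤ B ^ w := (Real.logb_le_iff_le_rpow hB (div_pos hC hε)).1 hw
  rw [Real.rpow_neg hB₀.le, ← div_eq_mul_inv]
  exact (div_le_comm₀ hε (Real.rpow_pos_of_pos hB₀ w)).1 hCε

theorem dujella_petho_general (M τ : ℝ) (q : ℕ) (A B μ : ℝ) (hA : 0 < A) (hB : 1 < B)
    (ε : ℝ) (hε : ε = distNearestInt (μ * q) - M * distNearestInt (τ * q)) (hεpos : 0 < ε) :
    ¬ ∃ (u v : ℤ) (w : ℝ), |(u : ℝ)| ≤ M ∧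
      Real.log (A * q / ε) / Real.log B ≤ w ∧ |u * τ - v + μ| < A * B ^ (-w) := by
  rintro ⟨u, v, w, hu, hw, hlt⟩
  have lower : ε ≤ q * |u * τ - v + μ| := by
    have hM := mul_le_mul_of_nonneg_right hu (distNearestInt_nonneg (τ * q))
    linarith [distNearestInt_mul_le τ μ q u v]
  have hq : (0 : ℝ) < q := pos_of_mul_pos_left (hεpos.trans_le lower) (abs_nonneg _)
  have upper : A * q * B ^ (-w) ≤ ε :=
    mul_rpow_neg_le_of_logb_div_le hB (mul_pos hA hq) hεpos hw
  linarith [mul_lt_mul_of_pos_left hlt hq]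

theorem dujella_petho (M : ℕ) (hM : 0 < M) (τ : ℝ) (hτ : Irrational τ)
    (p : ℤ) (q : ℕ) (hq : 6 * M < q)
    (hconv : ∃ i : ℕ, (GenContFract.of τ).convs i = (p : ℝ) / q)
    (A B μ : ℝ) (hA : 0 < A) (hB : 1 < B)
    (ε : ℝ) (hε : ε = distNearestInt (μ * q) - M * distNearestInt (τ * q))
    (hεpos : 0 < ε) :
    ¬ ∃ u v w : ℤ, 1 ≤ u ∧ u ≤ (M : ℤ) ∧
      Real.log (A * q / ε) / Real.log B ≤ (w : ℝ) ∧
      0 < |(u : ℝ) * τ - v + μ| ∧ |(u : ℝ) * τ - v + μ| < A * B ^ (-w) := by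
  rintro ⟨u, v, w, hu, huM, hw, -, hlt⟩
  have hu_abs : |(u : ℝ)| ≤ M := by exact_mod_cast (abs_of_pos hu).trans_le huM
  exact dujella_petho_general M τ q A B μ hA hB ε hε hεpos
    ⟨u, v, w, hu_abs, hw, by rwa [← Int.cast_neg, Real.rpow_intCast]⟩
end
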